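/- (Decision-tree complexity of the shallow (detection) variant of Hopcroft's problem.) For every integer d ≥ 4 there exist constants C and D such that: for every n ≥ 1 there is an algebraic decision tree of degree at most D over ℝ^N, with N = d·n + (d+1)·n, whose input encodes n points p_1, …, p_n ∈ ℝ^d and n hyperplanes given by coefficient pairs (a_1,b_1), …, (a_n,b_n) ∈ ℝ^d × ℝ, of depth at most C·n^{2⌊d/2⌋/(⌊d/2⌋+1)}, that decides, on every input with a_j ≠ 0 for all j, whether there exists a pair (i,j) with a_j·p_i > b_j. -/

import Mathlib

/-!
Appending a coordinate to points and hyperplanes turns the question into the following: given two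
families of vectors in `ℝ^(d+1)`, is there a pair, one vector from each family, with positive inner
product? Put `k = d / 2`.

**General position.** The input is perturbed by a polynomial in an infinitesimal `ε` so that any
`d + 1` vectors become independent and the answer is preserved (`Hopcroft.eventually_gp`,
`Hopcroft.eventually_hasPos`). The sign of a test polynomial at small `ε` is the sign of its first
nonzero coefficient, so one test costs a constant number of nodes (`Hopcroft.toADT`).

**Negative instances have short certificates.** A vector `u` has nonpositive inner product with all
vectors of a family iff it lies in the polar cone of the family. By the upper bound theorem
(`Hopcroft.GP.card_rays_le`) the polar cone of `m` vectors has `O(m^k)` extreme rays, and by the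
Clarkson–Shor method a random sample yields a shallow cutting (`Hopcroft.exists_isCut`). That the
claimed rays are extreme, and that each family member conflicts only with the claimed rays, is
certified economically because the rays in conflict with a vector are connected under adjacency
(`Hopcroft.GP.closure`, `Hopcroft.GP.cert_valid`). This gives certificates of `O(ν^(2 * k))` tests for
instances with `ν^(k+1)` vectors on each side (`Hopcroft.exists_cert_no`).

**Divide and conquer.** A net of size polynomial in `q` is computed with few tests, and a shallow
cutting of the net splits an instance into `O(q^k)` smaller ones (`Hopcroft.solves_step`). One such
step followed by one with the two sides interchanged turns an instance into `O(q^(2 * k))` instances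
with both sides smaller by the factor `q^(k+1)`. Since `k ≥ 2`, a constant number of these rounds
stays within the budget as long as the sides are much larger than the overhead of the nets
(`Hopcroft.solves_rounds`).

**Amortized verification.** The instances that remain have sides of size a small power of the total
size. They are decided one after the other, querying for each instance the certificate belonging to
the majority answers of the surviving answer vectors (`Hopcroft.Solves.amortize`). The cost is the
sum of the certificate sizes plus the logarithm of the number of realizable answer vectors, times a
factor polynomial in the size of a single small instance. By Warren's argument
(`Hopcroft.card_signs_le`) this logarithm is nearly linear in the total size, hence negligible
against `n^(2 * k/(k+1))`. Together this is `Hopcroft.exists_solves_hasPos`, applied with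
`q` of order `n^(1/((k+1)h))`.
-/

/-- An algebraic decision tree over `ℝ^N` with output values in `β`:
each internal node is labeled by a polynomial in `N` variables and has three
children corresponding to the sign (negative / zero / positive) of the
polynomial at the input; each leaf is labeled by an output value. -/
inductive ADT (N : ℕ) (β : Type) : Type
  | leaf : β → ADT N β
  | node : MvPolynomial (Fin N) ℝ → ADT N β → ADT N β → ADT N β → ADT N β

namespace ADT

/-- Evaluating an algebraic decision tree on an input `x ∈ ℝ^N`. -/
noncomputable def eval {N : ℕ} {β : Type} : ADT N β → (Fin N → ℝ) → β
  | leaf b, _ => b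
  | node p tneg tzero tpos, x =>
      if MvPolynomial.eval x p < 0 then tneg.eval x
      else if MvPolynomial.eval x p = 0 then tzero.eval x
      else tpos.eval x

/-- The depth of an algebraic decision tree: the maximum number of internal
nodes on a root-to-leaf path. -/
def depth {N : ℕ} {β : Type} : ADT N β → ℕ
  | leaf _ => 0
  | node _ tneg tzero tpos => 1 + max (max tneg.depth tzero.depth) tpos.depth

/-- All node polynomials of the tree have total degree at most `D`. -/
def DegLE {N : ℕ} {β : Type} (D : ℕ) : ADT N β → Prop
  | leaf _ => True
  | node p tneg tzero tpos => p.totalDegree ≤ D ∧ tneg.DegLE D ∧ tzero.DegLE D ∧ tpos.DegLE D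

end ADT

/-- Index of the `j`-th coordinate of the `i`-th point in the input vector. -/
def ptIdx (d n : ℕ) (i : Fin n) (j : Fin d) : Fin (d * n + (d + 1) * n) :=
  ⟨(i : ℕ) * d + (j : ℕ), by
    have hi : (i : ℕ) + 1 ≤ n := i.isLt
    have hj : (j : ℕ) < d := j.isLt
    calc (i : ℕ) * d + (j : ℕ) < (i : ℕ) * d + d := by omega
      _ = ((i : ℕ) + 1) * d := by ring
      _ ≤ n * d := Nat.mul_le_mul_right d hi
      _ = d * n := Nat.mul_comm n d
      _ ≤ d * n + (d + 1) * n := Nat.le_add_right _ _⟩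

/-- Index of the `j`-th coefficient of the `i`-th hyperplane in the input vector. -/
def coefIdx (d n : ℕ) (i : Fin n) (j : Fin d) : Fin (d * n + (d + 1) * n) :=
  ⟨d * n + ((i : ℕ) * (d + 1) + (j : ℕ)), by
    have hi : (i : ℕ) + 1 ≤ n := i.isLt
    have hj : (j : ℕ) < d := j.isLt
    have : (i : ℕ) * (d + 1) + (j : ℕ) < (d + 1) * n := by
      calc (i : ℕ) * (d + 1) + (j : ℕ) < (i : ℕ) * (d + 1) + (d + 1) := by omega
        _ = ((i : ℕ) + 1) * (d + 1) := by ring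
        _ ≤ n * (d + 1) := Nat.mul_le_mul_right (d + 1) hi
        _ = (d + 1) * n := Nat.mul_comm n (d + 1)
    omega⟩

/-- Index of the offset (right-hand side) of the `i`-th hyperplane in the input vector. -/
def offIdx (d n : ℕ) (i : Fin n) : Fin (d * n + (d + 1) * n) :=
  ⟨d * n + ((i : ℕ) * (d + 1) + d), by
    have hi : (i : ℕ) + 1 ≤ n := i.isLt
    have : (i : ℕ) * (d + 1) + d < (d + 1) * n := by
      calc (i : ℕ) * (d + 1) + d < (i : ℕ) * (d + 1) + (d + 1) := by omega
        _ = ((i : ℕ) + 1) * (d + 1) := by ring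
        _ ≤ n * (d + 1) := Nat.mul_le_mul_right (d + 1) hi
        _ = (d + 1) * n := Nat.mul_comm n (d + 1)
    omega⟩

/-! ### Abstract decision trees and amortization -/

namespace Hopcroft

/-- Binary decision trees over an abstract set `T` of yes/no tests. -/
inductive DT (T β : Type*) : Type _
  | leaf : β → DT T β
  | node : T → DT T β → DT T β → DT T β

namespace DT

/-- Evaluation on the answers `o`; the first subtree is taken on the answer `true`. -/
def eval {T β : Type*} (o : T → Bool) : DT T β → β
  | leaf b => b
  | node t l r => if o t then l.eval o else r.eval o

/-- Maximal number of tests on a path. -/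
def depth {T β : Type*} : DT T β → ℕ
  | leaf _ => 0
  | node _ l r => 1 + max l.depth r.depth

/-- Substitution of a tree for every leaf. -/
def bind {T β γ : Type*} : DT T β → (β → DT T γ) → DT T γ
  | leaf b, k => k b
  | node t l r, k => node t (l.bind k) (r.bind k)

lemma eval_bind {T β γ : Type*} (o : T → Bool) (t : DT T β) (k : β → DT T γ) :
    (t.bind k).eval o = (k (t.eval o)).eval o := by
  induction t with
  | leaf b => rfl
  | node t l r hl hr => by_cases h : o t <;> simp [bind, eval, h, hl, hr]

lemma depth_bind {T β γ : Type*} (t : DT T β) (k : β → DT T γ) (c : ℕ)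
    (hk : ∀ b, (k b).depth ≤ c) : (t.bind k).depth ≤ t.depth + c := by
  induction t with
  | leaf b => simpa [bind, depth] using hk b
  | node t l r hl hr => simp only [bind, depth]; omega

end DT

variable {Ω T β γ : Type*}

/-- `Solves tst S c Post`: some decision tree of depth at most `c` produces, on every
`y ∈ S`, an output `b` with `Post y b`. -/
def Solves (tst : Ω → T → Bool) (S : Set Ω) (c : ℝ) (Post : Ω → β → Prop) : Prop :=
  ∃ t : DT T β, (t.depth : ℝ) ≤ c ∧ ∀ y ∈ S, Post y (t.eval (tst y))

lemma Solves.mono {tst : Ω → T → Bool} {S S' : Set Ω} {c c' : ℝ} {P P' : Ω → β → Prop}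
    (h : Solves tst S c P) (hS : S' ⊆ S) (hc : c ≤ c') (hP : ∀ y ∈ S', ∀ b, P y b → P' y b) :
    Solves tst S' c' P' := by
  obtain ⟨t, h1, h2⟩ := h
  exact ⟨t, h1.trans hc, fun y hy => hP y hy _ (h2 y (hS hy))⟩

lemma Solves.ret {tst : Ω → T → Bool} {S : Set Ω} {c : ℝ} {P : Ω → β → Prop} (b : β)
    (hc : 0 ≤ c) (h : ∀ y ∈ S, P y b) : Solves tst S c P :=
  ⟨.leaf b, by simpa [DT.depth] using hc, fun y hy => h y hy⟩

lemma Solves.query {tst : Ω → T → Bool} {S : Set Ω} {c : ℝ} {P : Ω → β → Prop} (t : T)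
    (h : ∀ a, Solves tst {y ∈ S | tst y t = a} c P) : Solves tst S (1 + c) P := by
  obtain ⟨l, hl, hl'⟩ := h true
  obtain ⟨r, hr, hr'⟩ := h false
  refine ⟨.node t l r, ?_, fun y hy => ?_⟩
  · simp only [DT.depth]; push_cast
    have := max_le hl hr
    linarith
  · by_cases hb : tst y t
    · simpa [DT.eval, hb] using hl' y ⟨hy, hb⟩
    · simpa [DT.eval, hb] using hr' y ⟨hy, by simpa using hb⟩

lemma Solves.bind {tst : Ω → T → Bool} {S : Set Ω} {c c' : ℝ} {P : Ω → β → Prop}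
    {P' : Ω → γ → Prop} (hc' : 0 ≤ c') (h : Solves tst S c P)
    (h' : ∀ b, Solves tst {y ∈ S | P y b} c' P') : Solves tst S (c + c') P' := by
  obtain ⟨t, h1, h2⟩ := h
  choose k hk hk' using h'
  refine ⟨t.bind k, ?_, fun y hy => ?_⟩
  · have : (t.bind k).depth ≤ t.depth + ⌊c'⌋₊ :=
      DT.depth_bind t k _ fun b => Nat.le_floor (hk b)
    have h3 : ((t.bind k).depth : ℝ) ≤ t.depth + ⌊c'⌋₊ := by exact_mod_cast this
    have := Nat.floor_le hc'
    linarith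
  · rw [DT.eval_bind]
    exact hk' _ y ⟨hy, h2 y hy⟩

/-- After all tests in `Q` have been asked, one may continue knowing a representative `y`
with the same answers on `Q`. -/
lemma Solves.learn {tst : Ω → T → Bool} {S : Set Ω} {c : ℝ} {P : Ω → β → Prop} [Nonempty β]
    (hc : 0 ≤ c) (Q : Finset T)
    (h : ∀ y ∈ S, Solves tst {y' ∈ S | ∀ t ∈ Q, tst y' t = tst y t} c P) :
    Solves tst S (Q.card + c) P := by
  classical
  induction Q using Finset.induction_on generalizing S with
  | empty =>
    by_cases hS : S.Nonempty
    · obtain ⟨y, hy⟩ := hS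
      exact (h y hy).mono (by intro y' hy'; simpa using hy') (by simp) (by simp)
    · obtain ⟨b⟩ := (inferInstance : Nonempty β)
      exact Solves.ret b (by simpa using hc) fun y hy => (hS ⟨y, hy⟩).elim
  | insert t Q ht ih =>
    have : Solves tst S (1 + (Q.card + c)) P := by
      refine Solves.query t fun a => ih fun y hy => ?_
      refine (h y hy.1).mono ?_ le_rfl (by simp)
      rintro y' ⟨⟨h1, h2⟩, h3⟩
      refine ⟨h1, fun s hs => ?_⟩
      rcases Finset.mem_insert.1 hs with rfl | hs
      · rw [h2, hy.2]
      · exact h3 s hs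
    refine this.mono subset_rfl ?_ (by simp)
    rw [Finset.card_insert_of_notMem ht]; push_cast; linarith

/-- Solving a list of independent problems one after the other. -/
lemma Solves.forall_list {tst : Ω → T → Bool} {S : Set Ω} {c : ℝ} {α : Type*}
    {P : α → Ω → β → Prop} (hc : 0 ≤ c) (L : List α)
    (h : ∀ a ∈ L, Solves tst S c (P a)) :
    Solves tst S (L.length * c)
      (fun y (out : List β) => List.Forall₂ (fun a b => P a y b) L out) := by
  induction L with
  | nil => exact Solves.ret [] (by simp) (by simp)
  | cons a L ih =>
    have h1 := h a (by simp)
    have h2 := ih fun a' ha' => h a' (by simp [ha'])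
    have := Solves.bind (P' := fun y (out : List β) =>
      List.Forall₂ (fun a b => P a y b) (a :: L) out) (c' := L.length * c) (by positivity) h1
      (fun b => by
        have h3 := Solves.bind (c' := 0) (P' := fun y (out : List β) =>
          List.Forall₂ (fun a b => P a y b) (a :: L) out) le_rfl
          (h2.mono (S' := {y ∈ S | P a y b}) (fun y hy => hy.1) le_rfl (fun _ _ _ h => h))
          (fun out => Solves.ret (b :: out) le_rfl (by
            rintro y ⟨⟨_, hb⟩, ho⟩
            exact List.Forall₂.cons hb ho))
        simpa using h3)
    refine this.mono subset_rfl ?_ (by simp)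
    simp only [List.length_cons]; push_cast; linarith

section Amortize

variable [Fintype T]

open Classical in
/-- The answer vectors realized by `S`. -/
noncomputable def patterns (tst : Ω → T → Bool) (S : Set Ω) : Finset (T → Bool) :=
  Finset.univ.filter fun o => ∃ y ∈ S, tst y = o

lemma mem_patterns {tst : Ω → T → Bool} {S : Set Ω} {o : T → Bool} :
    o ∈ patterns tst S ↔ ∃ y ∈ S, tst y = o := by simp [patterns]

lemma patterns_mono {tst : Ω → T → Bool} {S S' : Set Ω} (h : S' ⊆ S) :
    patterns tst S' ⊆ patterns tst S := by
  intro o ho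
  obtain ⟨y, hy, rfl⟩ := mem_patterns.1 ho
  exact mem_patterns.2 ⟨y, h hy, rfl⟩

/-- A list of decision tasks, each with short certificates inside a small pool of tests, is
decided with amortized cost: the certificate size per task plus a multiple of the entropy.
As long as no test of the current pool splits the surviving answer vectors in a balanced way,
the majority answers are realized by a survivor, whose certificate is queried: either the
task is settled or the number of survivors drops by a factor `2 * M`. -/
theorem Solves.amortize {τ : Type*} {tst : Ω → T → Bool} {S : Set Ω} (V M : ℕ) (hM : 1 ≤ M)
    (F : τ → Finset T) (g : τ → Ω → Prop) (L : List τ)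
    (hF : ∀ a ∈ L, (F a).card ≤ M)
    (hg : ∀ a ∈ L, ∀ y ∈ S, ∃ Q ⊆ F a, Q.card ≤ V ∧
      ∀ y' ∈ S, (∀ t ∈ Q, tst y' t = tst y t) → (g a y' ↔ g a y)) :
    Solves tst S (L.length * V + 2 * M * Real.log (patterns tst S).card)
      (fun y (b : Bool) => b = true ↔ ∃ a ∈ L, g a y) := by
  classical
  obtain ⟨m, hm⟩ : ∃ m, (patterns tst S).card + L.length = m := ⟨_, rfl⟩
  induction m using Nat.strong_induction_on generalizing S L with
  | _ m ih =>
  have hlog0 : ∀ S : Set Ω, 0 ≤ Real.log (patterns tst S).card := fun S => Real.log_natCast_nonneg _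
  have hB0 : ∀ (S : Set Ω) (L : List τ),
      0 ≤ (L.length * V + 2 * M * Real.log (patterns tst S).card : ℝ) := fun S L => by
    have := hlog0 S; positivity
  by_cases hS : S.Nonempty
  swap
  · exact Solves.ret true (hB0 S L) fun y hy => (hS ⟨y, hy⟩).elim
  have hNpos : ∀ S : Set Ω, S.Nonempty → 0 < (patterns tst S).card := fun S ⟨y, hy⟩ =>
    Finset.card_pos.2 ⟨_, mem_patterns.2 ⟨y, hy, rfl⟩⟩
  have hMpos : (1 : ℝ) ≤ M := by exact_mod_cast hM
  rcases L with _ | ⟨a, L⟩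
  · exact Solves.ret false (hB0 S _) (by simp)
  set N := (patterns tst S).card with hN
  have hNp := hNpos S hS
  -- splitting the patterns by one test
  have hsplit : ∀ f b, (patterns tst {y ∈ S | tst y f = b}).card +
      (patterns tst {y ∈ S | tst y f = !b}).card ≤ N := by
    intro f b
    rw [← Finset.card_union_of_disjoint]
    · exact Finset.card_le_card (Finset.union_subset (patterns_mono fun y hy => hy.1)
        (patterns_mono fun y hy => hy.1))
    · rw [Finset.disjoint_left]
      intro o h1 h2
      obtain ⟨y, hy, rfl⟩ := mem_patterns.1 h1
      obtain ⟨y', hy', h⟩ := mem_patterns.1 h2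
      have := hy'.2
      rw [h, hy.2] at this
      cases b <;> simp at this
  by_cases hA : ∃ f ∈ F a, ∀ b, (N : ℝ) / (2 * M) ≤ (patterns tst {y ∈ S | tst y f = b}).card
  · obtain ⟨f, -, hf⟩ := hA
    have key : Solves tst S (1 + (((a :: L).length * V + 2 * M * Real.log N : ℝ) - 1))
        (fun y (b : Bool) => b = true ↔ ∃ a' ∈ a :: L, g a' y) := by
      refine Solves.query f fun b => ?_
      have h1 := hf b
      have h2 := hf (!b)
      have h3 : ((patterns tst {y ∈ S | tst y f = b}).card : ℝ) +
        (patterns tst {y ∈ S | tst y f = !b}).card ≤ N := by exact_mod_cast hsplit f b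
      have hNr : (0 : ℝ) < N := by exact_mod_cast hNp
      have hd : 0 < (N : ℝ) / (2 * M) := by positivity
      have hlt : (patterns tst {y ∈ S | tst y f = b}).card < N := by
        have : ((patterns tst {y ∈ S | tst y f = b}).card : ℝ) < N := by linarith
        exact_mod_cast this
      refine (ih ((patterns tst {y ∈ S | tst y f = b}).card + (a :: L).length) (by omega)
        (a :: L) hF ?_ rfl).mono subset_rfl ?_ (by simp)
      · intro a' ha' y hy
        obtain ⟨Q, h1, h2, h3⟩ := hg a' ha' y hy.1
        exact ⟨Q, h1, h2, fun y' hy' => h3 y' hy'.1⟩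
      · have h4 : ((patterns tst {y ∈ S | tst y f = b}).card : ℝ) ≤ N * (1 - 1 / (2 * M)) := by
          rw [mul_sub, mul_one, mul_one_div]; linarith
        have hp : (0 : ℝ) < (patterns tst {y ∈ S | tst y f = b}).card := lt_of_lt_of_le hd h1
        have h6 : (0 : ℝ) < 1 - 1 / (2 * M) := by
          rw [sub_pos, div_lt_one (by positivity)]; linarith
        have h5 : Real.log (patterns tst {y ∈ S | tst y f = b}).card ≤
            Real.log N - 1 / (2 * M) := by
          calc _ ≤ Real.log (N * (1 - 1 / (2 * M))) := Real.log_le_log hp h4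
            _ = Real.log N + Real.log (1 - 1 / (2 * M)) := Real.log_mul hNr.ne' h6.ne'
            _ ≤ _ := by have := Real.log_le_sub_one_of_pos h6; linarith
        have h7 := mul_le_mul_of_nonneg_left h5 (by positivity : (0 : ℝ) ≤ 2 * M)
        have h8 : (2 * M : ℝ) * (1 / (2 * M)) = 1 := by field_simp
        rw [mul_sub, h8] at h7
        linarith
    exact key.mono subset_rfl (by linarith) (by simp)
  · push Not at hA
    have hb : ∀ f, ∃ b, f ∈ F a →
        ((patterns tst {y ∈ S | tst y f = !b}).card : ℝ) < (N : ℝ) / (2 * M) := by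
      intro f
      by_cases hf : f ∈ F a
      · obtain ⟨b, hb⟩ := hA f hf
        exact ⟨!b, fun _ => by simpa using hb⟩
      · exact ⟨true, fun h => (hf h).elim⟩
    choose maj hmaj using hb
    have hNr : (0 : ℝ) < N := by exact_mod_cast hNp
    obtain ⟨y, hy, hymaj⟩ : ∃ y ∈ S, ∀ f ∈ F a, tst y f = maj f := by
      by_contra hcon
      push Not at hcon
      have hsub : patterns tst S ⊆
          (F a).biUnion fun f => patterns tst {y ∈ S | tst y f = !(maj f)} := by
        intro o ho
        obtain ⟨y, hy, rfl⟩ := mem_patterns.1 ho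
        obtain ⟨f, hf, hne⟩ := hcon y hy
        refine Finset.mem_biUnion.2 ⟨f, hf, mem_patterns.2 ⟨y, ⟨hy, ?_⟩, rfl⟩⟩
        simpa using Bool.eq_not_of_ne hne
      have h1 : N ≤ ∑ f ∈ F a, (patterns tst {y ∈ S | tst y f = !(maj f)}).card :=
        (Finset.card_le_card hsub).trans Finset.card_biUnion_le
      have h2 : (N : ℝ) ≤ ∑ f ∈ F a, (N : ℝ) / (2 * M) := by
        calc (N : ℝ) ≤ ∑ f ∈ F a, ((patterns tst {y ∈ S | tst y f = !(maj f)}).card : ℝ) := by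
              exact_mod_cast h1
          _ ≤ _ := Finset.sum_le_sum fun f hf => (hmaj f hf).le
      rw [Finset.sum_const, nsmul_eq_mul] at h2
      have h3 : ((F a).card : ℝ) ≤ M := by exact_mod_cast hF a (by simp)
      have h4 : ((F a).card : ℝ) * (N / (2 * M)) ≤ M * (N / (2 * M)) := by gcongr
      have h5 : (M : ℝ) * (N / (2 * M)) = N / 2 := by field_simp
      linarith
    obtain ⟨Q, hQF, hQV, hQ⟩ := hg a (by simp) y hy
    have hQM : (Q.card : ℝ) ≤ M := by
      exact_mod_cast (Finset.card_le_card hQF).trans (hF a (by simp))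
    have hQVr : (Q.card : ℝ) ≤ V := by exact_mod_cast hQV
    have hlog2 : (1 : ℝ) / 2 ≤ Real.log (2 * M) :=
      (by have := Real.log_two_gt_d9; linarith : (1 : ℝ) / 2 ≤ Real.log 2).trans
        (Real.log_le_log (by norm_num) (by linarith))
    have hc0 : (0 : ℝ) ≤ ((a :: L).length * V + 2 * M * Real.log N : ℝ) - Q.card := by
      simp only [List.length_cons]; push_cast
      have := hB0 S L
      nlinarith [hlog0 S]
    have key := Solves.learn (tst := tst) (S := S)
      (P := fun y (b : Bool) => b = true ↔ ∃ a' ∈ a :: L, g a' y) hc0 Q ?_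
    · exact key.mono subset_rfl (by linarith) (by simp)
    intro z hz
    set S' := {y' ∈ S | ∀ t ∈ Q, tst y' t = tst z t} with hS'
    have hS'n : S'.Nonempty := ⟨z, hz, fun _ _ => rfl⟩
    have hS'S : S' ⊆ S := fun y hy => hy.1
    have hp := hNpos S' hS'n
    have hpr : (0 : ℝ) < (patterns tst S').card := by exact_mod_cast hp
    have hg' : ∀ a' ∈ a :: L, ∀ y ∈ S', ∃ Q ⊆ F a', Q.card ≤ V ∧
        ∀ y' ∈ S', (∀ t ∈ Q, tst y' t = tst y t) → (g a' y' ↔ g a' y) := by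
      intro a' ha' y hy
      obtain ⟨Q, h1, h2, h3⟩ := hg a' ha' y hy.1
      exact ⟨Q, h1, h2, fun y' hy' => h3 y' hy'.1⟩
    have hle : (patterns tst S').card ≤ N := Finset.card_le_card (patterns_mono hS'S)
    have hler : ((patterns tst S').card : ℝ) ≤ N := by exact_mod_cast hle
    by_cases hag : ∀ t ∈ Q, tst z t = tst y t
    · have hdec : ∀ y' ∈ S', (g a y' ↔ g a y) := fun y' hy' =>
        hQ y' hy'.1 fun t ht => (hy'.2 t ht).trans (hag t ht)
      by_cases hga : g a y
      · exact Solves.ret true hc0 fun y' hy' => by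
          simp only [true_iff]; exact ⟨a, by simp, (hdec y' hy').2 hga⟩
      · refine (ih ((patterns tst S').card + L.length) (by simp at hm; omega) L
          (fun a' ha' => hF a' (by simp [ha'])) (fun a' ha' => hg' a' (by simp [ha'])) rfl).mono
          subset_rfl ?_ ?_
        · have := mul_le_mul_of_nonneg_left (Real.log_le_log hpr hler)
            (by positivity : (0 : ℝ) ≤ 2 * M)
          simp only [List.length_cons]; push_cast; linarith
        · intro y' hy' b hb
          rw [hb]
          simp only [List.mem_cons, exists_eq_or_imp]
          have : ¬ g a y' := fun h => hga ((hdec y' hy').1 h)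
          tauto
    · push Not at hag
      obtain ⟨t, ht, hne⟩ := hag
      have hsub : S' ⊆ {y ∈ S | tst y t = !(maj t)} := by
        intro y' hy'
        refine ⟨hy'.1, ?_⟩
        have h1 := hy'.2 t ht
        rw [hymaj t (hQF ht)] at hne
        rw [h1]
        simpa using Bool.eq_not_of_ne hne
      have hlt : ((patterns tst S').card : ℝ) < N / (2 * M) :=
        lt_of_le_of_lt (by exact_mod_cast Finset.card_le_card (patterns_mono hsub))
          (hmaj t (hQF ht))
      have hltN : (patterns tst S').card < N := by
        have : (N : ℝ) / (2 * M) ≤ N := div_le_self hNr.le (by linarith)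
        exact_mod_cast hlt.trans_le this
      refine (ih ((patterns tst S').card + (a :: L).length) (by omega) (a :: L) hF hg' rfl).mono
        subset_rfl ?_ (by simp)
      have h1 : Real.log (patterns tst S').card ≤ Real.log N - Real.log (2 * M) := by
        rw [← Real.log_div hNr.ne' (by positivity)]
        exact Real.log_le_log hpr hlt.le
      have h2 := mul_le_mul_of_nonneg_left h1 (by positivity : (0 : ℝ) ≤ 2 * M)
      nlinarith

end Amortize

end Hopcroft

/-! ### Counting sign patterns -/

namespace Hopcroft

open MvPolynomial

lemma totalDegree_pderiv_le {σ : Type*} (p : MvPolynomial σ ℝ) (i : σ) :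
    (pderiv i p).totalDegree ≤ p.totalDegree := by
  classical
  conv_lhs => rw [← support_sum_monomial_coeff p, map_sum]
  refine totalDegree_finsetSum_le fun s hs => ?_
  rw [pderiv_monomial]
  refine (totalDegree_monomial_le _ _).trans ?_
  refine le_trans ?_ (le_totalDegree hs)
  exact Finsupp.degree_mono (by simp : s - Finsupp.single i 1 ≤ s)

lemma hasDerivAt_eval_update {σ : Type*} [DecidableEq σ] (p : MvPolynomial σ ℝ) (y : σ → ℝ)
    (i : σ) (s : ℝ) :
    HasDerivAt (fun s => eval (Function.update y i s) p)
      (eval (Function.update y i s) (pderiv i p)) s := by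
  induction p using MvPolynomial.induction_on with
  | C a => simpa using hasDerivAt_const s a
  | add p q hp hq =>
    simp only [map_add]
    exact hp.add hq
  | mul_X p j hp =>
    have hX : HasDerivAt (fun s => Function.update y i s j) (if j = i then 1 else 0) s := by
      by_cases h : j = i
      · subst h; simpa using hasDerivAt_id' s
      · simpa [h] using hasDerivAt_const s (y j)
    have := hp.mul hX
    simp only [map_mul, eval_X, Derivation.leibniz, smul_eq_mul, map_add]
    convert! this using 1
    rw [pderiv_X]
    by_cases h : j = i
    · subst h; simp; ring
    · simp [h]; ring

lemma abs_eval_le {σ : Type*} [Fintype σ] (p : MvPolynomial σ ℝ) (y : σ → ℝ) (ρ : ℝ)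
    (hρ : 1 ≤ ρ) (hy : ‖y‖ ≤ ρ) (D : ℕ) (hD : p.totalDegree ≤ D) :
    |eval y p| ≤ (∑ s ∈ p.support, |p.coeff s|) * ρ ^ D := by
  rw [eval_eq, Finset.sum_mul]
  refine (Finset.abs_sum_le_sum_abs _ _).trans (Finset.sum_le_sum fun s hs => ?_)
  rw [abs_mul]
  refine mul_le_mul_of_nonneg_left ?_ (abs_nonneg _)
  rw [Finset.abs_prod]
  have h1 : s.degree ≤ D := (le_totalDegree hs).trans hD
  calc ∏ i ∈ s.support, |y i ^ s i| ≤ ∏ i ∈ s.support, ρ ^ s i := by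
        refine Finset.prod_le_prod (fun _ _ => abs_nonneg _) fun i _ => ?_
        rw [abs_pow]
        exact pow_le_pow_left₀ (abs_nonneg _) ((norm_le_pi_norm y i).trans hy) _
    _ = ρ ^ s.degree := by rw [Finset.prod_pow_eq_pow_sum]; rfl
    _ ≤ ρ ^ D := pow_le_pow_right₀ hρ h1

/-- Distinct points are separated by polynomials. -/
lemma exists_eval_single {σ : Type*} (Z : Finset (σ → ℝ)) (z : σ → ℝ) :
    ∃ p : MvPolynomial σ ℝ, eval z p = 1 ∧ ∀ z' ∈ Z, z' ≠ z → eval z' p = 0 := by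
  classical
  have h : ∀ z' : σ → ℝ, ∃ p : MvPolynomial σ ℝ, z' ≠ z → eval z p = 1 ∧ eval z' p = 0 := by
    intro z'
    by_cases h : z' = z
    · exact ⟨0, fun h' => (h' h).elim⟩
    · obtain ⟨i, hi⟩ := Function.ne_iff.1 h
      refine ⟨C (z i - z' i)⁻¹ * (X i - C (z' i)), fun _ => ⟨?_, by simp⟩⟩
      have : z i - z' i ≠ 0 := sub_ne_zero.2 (Ne.symm hi)
      simp [this]
  choose p hp using h
  refine ⟨∏ z' ∈ Z.erase z, p z', ?_, fun z' hz' hne => ?_⟩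
  · rw [map_prod]
    exact Finset.prod_eq_one fun z' hz' => (hp z' (Finset.ne_of_mem_erase hz')).1
  · rw [map_prod]
    exact Finset.prod_eq_zero (Finset.mem_erase.2 ⟨hne, hz'⟩) (hp z' hne).2

/-- A system `x_i ^ m = r_i(x)` with `deg r_i < m` has at most `m ^ N` solutions: modulo these
equations every polynomial reduces to monomials with exponents below `m`, and polynomials
interpolate arbitrary values on a finite set. -/
lemma card_zeros_le {σ : Type*} [Fintype σ] [DecidableEq σ] (m : ℕ) (r : σ → MvPolynomial σ ℝ)
    (hr : ∀ i, (r i).totalDegree < m) (Z : Finset (σ → ℝ))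
    (hZ : ∀ z ∈ Z, ∀ i, z i ^ m = eval z (r i)) : Z.card ≤ m ^ Fintype.card σ := by
  classical
  let ev : MvPolynomial σ ℝ →ₗ[ℝ] (Z → ℝ) :=
    LinearMap.pi fun z => (MvPolynomial.aeval (R := ℝ) (z : σ → ℝ)).toLinearMap
  have hev : ∀ p z, ev p z = eval (z : σ → ℝ) p := fun p z => by
    simp [ev, MvPolynomial.aeval_eq_eval]
  let v : (σ → Fin m) → (Z → ℝ) := fun e z => ∏ i, (z : σ → ℝ) i ^ (e i : ℕ)
  have hred : ∀ D : ℕ, ∀ p : MvPolynomial σ ℝ, p.totalDegree ≤ D →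
      ev p ∈ Submodule.span ℝ (Set.range v) := by
    intro D
    induction D using Nat.strong_induction_on with
    | _ D ih =>
    intro p hp
    rw [← support_sum_monomial_coeff p, map_sum]
    refine Submodule.sum_mem _ fun s hs => ?_
    have hsD : s.degree ≤ D := (le_totalDegree hs).trans hp
    by_cases hsm : ∀ i, s i < m
    · have : ev (monomial s (p.coeff s)) = p.coeff s • v (fun i => ⟨s i, hsm i⟩) := by
        ext z
        rw [hev, eval_monomial]
        simp only [v, Pi.smul_apply, smul_eq_mul]
        rw [Finsupp.prod_fintype _ _ (by simp)]
      rw [this]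
      exact Submodule.smul_mem _ _ (Submodule.subset_span ⟨_, rfl⟩)
    · push Not at hsm
      obtain ⟨i, hi⟩ := hsm
      have hle : Finsupp.single i m ≤ s := by simpa using hi
      obtain ⟨s', rfl⟩ := exists_add_of_le hle
      have hdeg : (Finsupp.single i m + s').degree = m + s'.degree := by
        rw [map_add, Finsupp.degree_single]
      have heq : ev (monomial (Finsupp.single i m + s') (p.coeff (Finsupp.single i m + s'))) =
          ev (monomial s' (p.coeff (Finsupp.single i m + s')) * r i) := by
        ext z
        have h1 : monomial (Finsupp.single i m + s') (p.coeff (Finsupp.single i m + s')) =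
          monomial s' (p.coeff (Finsupp.single i m + s')) * X i ^ m := by
          rw [X_pow_eq_monomial, monomial_mul, mul_one, add_comm]
        rw [hev, hev, h1, map_mul, map_mul, map_pow, eval_X, hZ z z.2 i]
      rw [heq]
      have hm := hr i
      have hlt : (monomial s' (p.coeff (Finsupp.single i m + s')) * r i).totalDegree < D := by
        refine (totalDegree_mul _ _).trans_lt ?_
        have := totalDegree_monomial_le s' (p.coeff (Finsupp.single i m + s'))
        have h2 : (s'.sum fun _ => id) = s'.degree := rfl
        omega
      exact ih _ hlt _ le_rfl
  have htop : Submodule.span ℝ (Set.range v) = ⊤ := by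
    rw [eq_top_iff]
    intro φ _
    have : φ = ∑ z : Z, φ z • (Pi.single z (1 : ℝ) : Z → ℝ) := by
      ext z; simp [Finset.sum_apply, Pi.single_apply]
    rw [this]
    refine Submodule.sum_mem _ fun z _ => Submodule.smul_mem _ _ ?_
    obtain ⟨p, hp1, hp0⟩ := exists_eval_single Z z
    have : (Pi.single z (1 : ℝ) : Z → ℝ) = ev p := by
      ext z'
      rw [hev]
      by_cases h : z' = z
      · subst h; simp [hp1]
      · rw [hp0 z' z'.2 (fun h' => h (Subtype.ext h'))]; simp [h]
    rw [this]
    exact hred _ p le_rfl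
  have := finrank_le_of_span_eq_top htop
  simpa using this

/-- Points with pairwise distinct strict sign vectors: each sign region contains a local
maximum of `P² - δ ∑ xᵢ^{2 * D}`, with `P` the product of the polynomials. -/
lemma card_strict_le {σ T : Type*} [Fintype σ] [Fintype T] (f : T → MvPolynomial σ ℝ)
    (Δ : ℕ) (hΔ : ∀ t, (f t).totalDegree ≤ Δ) (X : Finset (σ → ℝ))
    (h0 : ∀ x ∈ X, ∀ t, eval x (f t) ≠ 0)
    (hinj : ∀ x ∈ X, ∀ x' ∈ X, (∀ t, 0 < eval x (f t) * eval x' (f t)) → x = x') :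
    X.card ≤ (2 * (Fintype.card T * Δ) + 1) ^ Fintype.card σ := by
  classical
  set P : MvPolynomial σ ℝ := (∏ t, f t) ^ 2 with hP
  set D := Fintype.card T * Δ + 1 with hD
  have hPdeg : P.totalDegree ≤ 2 * (D - 1) := by
    refine (totalDegree_pow _ _).trans (Nat.mul_le_mul_left _ ?_)
    refine (totalDegree_finsetProd _ _).trans ?_
    refine (Finset.sum_le_card_nsmul _ _ Δ fun t _ => hΔ t).trans ?_
    simp [hD]
  have hPpos : ∀ x, (∀ t, eval x (f t) ≠ 0) → 0 < eval x P := by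
    intro x hx
    rw [hP, map_pow, map_prod]
    have : ∏ t, eval x (f t) ≠ 0 := Finset.prod_ne_zero_iff.2 fun t _ => hx t
    positivity
  obtain ⟨δ, hδ0, hδ⟩ : ∃ δ : ℝ, 0 < δ ∧ ∀ x ∈ X, 0 < eval x P - δ * ∑ i, x i ^ (2 * D) := by
    have h : ∀ᶠ δ : ℝ in nhdsWithin 0 (Set.Ioi 0),
        ∀ x ∈ X, 0 < eval x P - δ * ∑ i, x i ^ (2 * D) := by
      rw [Finset.eventually_all]
      intro x hx
      have hc : Filter.Tendsto (fun δ : ℝ => eval x P - δ * ∑ i, x i ^ (2 * D))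
          (nhdsWithin 0 (Set.Ioi 0)) (nhds (eval x P - 0 * ∑ i, x i ^ (2 * D))) :=
        (Continuous.tendsto (by fun_prop) 0).mono_left nhdsWithin_le_nhds
      refine hc.eventually (lt_mem_nhds ?_)
      simpa using hPpos x (h0 x hx)
    obtain ⟨δ, h1, h2⟩ := (h.and self_mem_nhdsWithin).exists
    exact ⟨δ, h2, h1⟩
  set H : MvPolynomial σ ℝ := P - C δ * ∑ i, MvPolynomial.X i ^ (2 * D) with hH
  have hHe : ∀ y, eval y H = eval y P - δ * ∑ i, y i ^ (2 * D) := fun y => by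
    simp [hH, map_sum]
  have hcont : ∀ p : MvPolynomial σ ℝ, Continuous fun y => eval y p := fun p =>
    MvPolynomial.continuous_eval p
  set K := ∑ s ∈ P.support, |P.coeff s| with hK
  have hK0 : 0 ≤ K := Finset.sum_nonneg fun _ _ => abs_nonneg _
  -- `H` is negative far away
  set ρ : ℝ := 1 + K / δ with hρ
  have hρ1 : 1 ≤ ρ := by have : 0 ≤ K / δ := by positivity
                         linarith
  have hfar : ∀ y : σ → ℝ, ρ ≤ ‖y‖ → eval y H < 0 := by
    intro y hy
    have hy1 : 1 ≤ ‖y‖ := hρ1.trans hy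
    have h1 : eval y P ≤ K * ‖y‖ ^ (2 * (D - 1)) :=
      (le_abs_self _).trans (abs_eval_le P y ‖y‖ hy1 le_rfl _ hPdeg)
    have hne : Nonempty σ := by
      by_contra hem
      rw [not_nonempty_iff] at hem
      have : ‖y‖ = 0 := by rw [Subsingleton.elim y 0, norm_zero]
      linarith
    obtain ⟨i, hi⟩ : ∃ i, ‖y i‖ = ‖y‖ := by
      obtain ⟨i, -, hi⟩ := Finset.exists_max_image Finset.univ (fun i => ‖y i‖)
        Finset.univ_nonempty
      exact ⟨i, le_antisymm (norm_le_pi_norm y i)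
        ((pi_norm_le_iff_of_nonneg (norm_nonneg _)).2 fun j => hi j (Finset.mem_univ j))⟩
    have h2 : ‖y‖ ^ (2 * D) ≤ ∑ i, y i ^ (2 * D) := by
      rw [← hi]
      have h3 : ‖y i‖ ^ (2 * D) = y i ^ (2 * D) := by
        rw [pow_mul, pow_mul, Real.norm_eq_abs, sq_abs]
      rw [h3]
      exact Finset.single_le_sum (f := fun i => y i ^ (2 * D))
        (fun j _ => by rw [pow_mul]; positivity) (Finset.mem_univ i)
    rw [hHe]
    have h4 : 2 * D = 2 * (D - 1) + 2 := by omega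
    have h5 : K < δ * ‖y‖ ^ 2 := by
      have : δ * ρ = δ + K := by rw [hρ]; field_simp
      have : δ * ρ ≤ δ * ‖y‖ ^ 2 := by
        gcongr
        nlinarith
      linarith
    have h6 : K * ‖y‖ ^ (2 * (D - 1)) < δ * ‖y‖ ^ (2 * D) := by
      rw [h4, pow_add]
      have : 0 < ‖y‖ ^ (2 * (D - 1)) := by positivity
      nlinarith
    have h7 : δ * ‖y‖ ^ (2 * D) ≤ δ * ∑ i, y i ^ (2 * D) := by gcongr
    linarith
  have hcrit : ∀ x ∈ X, ∃ y, (∀ t, 0 < eval x (f t) * eval y (f t)) ∧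
      ∀ i, eval y (pderiv i H) = 0 := by
    intro x hx
    set Kx : Set (σ → ℝ) := {y | ∀ t, 0 ≤ eval x (f t) * eval y (f t)} ∩ Metric.closedBall 0 ρ
    have hKc : IsCompact Kx := by
      refine IsCompact.inter_left (isCompact_closedBall _ _) ?_
      simp only [Set.ofPred_forall]
      exact isClosed_iInter fun t => isClosed_le continuous_const ((hcont _).const_mul _ )
    have hxH : 0 < eval x H := by rw [hHe]; exact hδ x hx
    have hxK : x ∈ Kx := by
      refine ⟨fun t => mul_self_nonneg _, ?_⟩
      rw [mem_closedBall_zero_iff]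
      by_contra hcon
      push Not at hcon
      exact absurd (hfar x hcon.le) (not_lt.2 hxH.le)
    obtain ⟨y, hyK, hymax⟩ := hKc.exists_isMaxOn ⟨x, hxK⟩ (hcont H).continuousOn
    have hyH : 0 < eval y H := hxH.trans_le (hymax hxK)
    have hyn : ‖y‖ < ρ := by
      by_contra hcon
      exact absurd (hfar y (not_lt.1 hcon)) (not_lt.2 hyH.le)
    have hyP : 0 < eval y P := by
      rw [hHe] at hyH
      have : 0 ≤ δ * ∑ i, y i ^ (2 * D) :=
        mul_nonneg hδ0.le (Finset.sum_nonneg fun i _ => by rw [pow_mul]; positivity)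
      linarith
    have hyf : ∀ t, eval y (f t) ≠ 0 := by
      intro t ht
      rw [hP, map_pow, map_prod, Finset.prod_eq_zero (Finset.mem_univ t) ht] at hyP
      simp at hyP
    have hyU : ∀ t, 0 < eval x (f t) * eval y (f t) := fun t =>
      lt_of_le_of_ne (hyK.1 t) (mul_ne_zero (h0 x hx t) (hyf t)).symm
    refine ⟨y, hyU, fun i => ?_⟩
    have hnhds : Kx ∈ nhds y := by
      refine Filter.mem_of_superset (x := {y | ∀ t, 0 < eval x (f t) * eval y (f t)} ∩
        Metric.ball 0 ρ) ?_ ?_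
      · refine IsOpen.mem_nhds (IsOpen.inter ?_ Metric.isOpen_ball)
          ⟨hyU, by simpa using hyn⟩
        simp only [Set.ofPred_forall]
        exact isOpen_iInter_of_finite fun t => isOpen_lt continuous_const ((hcont _).const_mul _)
      · rintro z ⟨h1, h2⟩
        exact ⟨fun t => (h1 t).le, Metric.ball_subset_closedBall h2⟩
    have hloc : IsLocalMax (fun y => eval y H) y := hymax.isLocalMax hnhds
    have hloc1 : IsLocalMax (fun s => eval (Function.update y i s) H) (y i) := by
      have hct : ContinuousAt (fun s : ℝ => Function.update y i s) (y i) :=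
        (continuous_const.update i continuous_id).continuousAt
      have hh : Function.update y i (y i) = y := Function.update_eq_self i y
      have : IsLocalMax (fun y => eval y H) (Function.update y i (y i)) := by rwa [hh]
      exact this.comp_continuous (g := fun s : ℝ => Function.update y i s) hct
    have := hloc1.hasDerivAt_eq_zero (hasDerivAt_eval_update H y i (y i))
    rwa [Function.update_eq_self] at this
  choose! y hyU hyc using hcrit
  have hinj' : Set.InjOn y X := by
    intro x hx x' hx' heq
    refine hinj x hx x' hx' fun t => ?_
    have h1 := hyU x hx t
    have h2 := hyU x' hx' t
    rw [heq] at h1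
    have h3 := mul_pos h1 h2
    have h4 : eval x (f t) * eval (y x') (f t) * (eval x' (f t) * eval (y x') (f t)) =
      (eval x (f t) * eval x' (f t)) * (eval (y x') (f t)) ^ 2 := by ring
    rw [h4] at h3
    exact pos_of_mul_pos_left h3 (sq_nonneg _)
  rw [← Finset.card_image_of_injOn hinj']
  have hm : 2 * (Fintype.card T * Δ) + 1 = 2 * D - 1 := by omega
  rw [hm]
  refine card_zeros_le (2 * D - 1) (fun i => C (δ * (2 * D))⁻¹ * pderiv i P) (fun i => ?_) _ ?_
  · refine (totalDegree_mul _ _).trans_lt ?_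
    rw [totalDegree_C]
    have := (totalDegree_pderiv_le P i).trans hPdeg
    omega
  · intro z hz i
    obtain ⟨x, hx, rfl⟩ := Finset.mem_image.1 hz
    have h1 := hyc x hx i
    have h2 : pderiv i H = pderiv i P - C δ * (((2 * D : ℕ) : MvPolynomial σ ℝ) *
        MvPolynomial.X i ^ (2 * D - 1)) := by
      rw [hH, map_sub, Derivation.leibniz, map_sum]
      rw [Finset.sum_eq_single i]
      · simp [Derivation.leibniz_pow]
      · intro j _ hj
        simp [Derivation.leibniz_pow, pderiv_X, hj]
      · simp
    rw [h2] at h1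
    simp only [map_sub, map_mul, eval_C, map_natCast, map_pow, eval_X] at h1 ⊢
    have hDpos : (0 : ℝ) < D := by exact_mod_cast (by omega : 0 < D)
    field_simp
    push_cast at h1
    linarith

/-- The number of answer vectors of the tests `0 < f t` is polynomially bounded, with exponent
the number of variables. -/
theorem card_signs_le {σ T : Type*} [Fintype σ] [Fintype T] (f : T → MvPolynomial σ ℝ)
    (Δ : ℕ) (hΔ : ∀ t, (f t).totalDegree ≤ Δ) (O : Finset (T → Bool))
    (hO : ∀ o ∈ O, ∃ x, ∀ t, o t = true ↔ 0 < eval x (f t)) :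
    O.card ≤ (2 * (Fintype.card T * Δ) + 1) ^ Fintype.card σ := by
  classical
  choose! x hx using hO
  obtain ⟨δ, hδ0, hδ⟩ : ∃ δ : ℝ, 0 < δ ∧ ∀ o ∈ O, ∀ t, o t = true → δ < eval (x o) (f t) := by
    have h : ∀ᶠ δ : ℝ in nhdsWithin 0 (Set.Ioi 0),
        ∀ o ∈ O, ∀ t, o t = true → δ < eval (x o) (f t) := by
      rw [Finset.eventually_all]
      intro o ho
      rw [Filter.eventually_all]
      intro t
      by_cases hot : o t = true
      · have := (hx o ho t).1 hot
        filter_upwards [nhdsWithin_le_nhds (gt_mem_nhds this)] with δ h _ using h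
      · exact Filter.Eventually.of_forall fun δ h => (hot h).elim
    obtain ⟨δ, h1, h2⟩ := (h.and self_mem_nhdsWithin).exists
    exact ⟨δ, h2, h1⟩
  have hfalse : ∀ o ∈ O, ∀ t, o t = false → eval (x o) (f t) ≤ 0 := fun o ho t h => by
    have := (hx o ho t).not.1 (by simp [h])
    exact not_lt.1 this
  have hsame : ∀ o ∈ O, ∀ o' ∈ O,
      (∀ t, 0 < eval (x o) (f t - C δ) * eval (x o') (f t - C δ)) → o = o' := by
    intro o ho o' ho' h
    funext t
    have := h t
    simp only [map_sub, eval_C] at this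
    cases h1 : o t <;> cases h2 : o' t
    · rfl
    · have := hfalse o ho t h1
      have := hδ o' ho' t h2
      nlinarith
    · have := hfalse o' ho' t h2
      have := hδ o ho t h1
      nlinarith
    · rfl
  have h0 : ∀ o ∈ O, ∀ t, eval (x o) (f t - C δ) ≠ 0 := by
    intro o ho t
    simp only [map_sub, eval_C]
    cases h1 : o t
    · have := hfalse o ho t h1
      exact (by linarith : eval (x o) (f t) - δ < 0).ne
    · exact (sub_pos.2 (hδ o ho t h1)).ne'
  have hinj : Set.InjOn x O := fun o ho o' ho' heq => hsame o ho o' ho' fun t => by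
    rw [heq]
    exact mul_self_pos.2 (h0 o' ho' t)
  rw [← Finset.card_image_of_injOn hinj]
  refine card_strict_le (fun t => f t - C δ) Δ (fun t => ?_) _ ?_ ?_
  · refine (totalDegree_sub _ _).trans ?_
    simpa using hΔ t
  · intro z hz
    obtain ⟨o, ho, rfl⟩ := Finset.mem_image.1 hz
    exact h0 o ho
  · intro z hz z' hz' h
    obtain ⟨o, ho, rfl⟩ := Finset.mem_image.1 hz
    obtain ⟨o', ho', rfl⟩ := Finset.mem_image.1 hz'
    rw [hsame o ho o' ho' h]

end Hopcroft

/-! ### Extreme rays of polar cones -/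

namespace Hopcroft

open Matrix

/-- The generalized cross product of `d` vectors in `ℝ^(d+1)`. -/
noncomputable def cross {d : ℕ} (y : Fin d → Fin (d + 1) → ℝ) : Fin (d + 1) → ℝ := fun c =>
  (-1) ^ (c : ℕ) * Matrix.det (Matrix.of fun i j : Fin d => y i (c.succAbove j))

lemma dot_cross {d : ℕ} (x : Fin (d + 1) → ℝ) (y : Fin d → Fin (d + 1) → ℝ) :
    x ⬝ᵥ cross y = Matrix.det (Matrix.of (Fin.cons x y : Fin (d + 1) → Fin (d + 1) → ℝ)) := by
  rw [Matrix.det_succ_row_zero]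
  refine Finset.sum_congr rfl fun c _ => ?_
  simp only [cross, Matrix.of_apply, Fin.cons_zero]
  have : (Matrix.of (Fin.cons x y : Fin (d + 1) → Fin (d + 1) → ℝ)).submatrix Fin.succ c.succAbove =
      Matrix.of fun i j : Fin d => y i (c.succAbove j) := by
    ext i j; simp
  rw [this]; ring

variable {d : ℕ} {ι : Type*}

/-- The vector orthogonal to the hyperplane spanned by `Y (f 0), …, Y (f (d-1))`. -/
noncomputable def ray (Y : ι → Fin (d + 1) → ℝ) (f : Fin d → ι) : Fin (d + 1) → ℝ :=
  cross fun i => Y (f i)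

/-- General position: any `d + 1` of the vectors are linearly independent. -/
def GP (Y : ι → Fin (d + 1) → ℝ) : Prop :=
  ∀ g : Fin (d + 1) → ι, Function.Injective g → (Matrix.of fun i => Y (g i)).det ≠ 0

lemma dot_ray (Y : ι → Fin (d + 1) → ℝ) (f : Fin d → ι) (v : ι) :
    Y v ⬝ᵥ ray Y f = (Matrix.of fun i => Y ((Fin.cons v f : Fin (d + 1) → ι) i)).det := by
  rw [ray, dot_cross]
  congr 2
  funext i
  refine Fin.cases ?_ (fun j => ?_) i <;> simp

lemma dot_ray_self (Y : ι → Fin (d + 1) → ℝ) (f : Fin d → ι) (i : Fin d) :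
    Y (f i) ⬝ᵥ ray Y f = 0 := by
  rw [dot_ray]
  exact Matrix.det_zero_of_row_eq (i := 0) (j := i.succ) (Fin.succ_ne_zero i).symm (by
    ext j; simp)

lemma dot_ray_of_mem (Y : ι → Fin (d + 1) → ℝ) (f : Fin d → ι) {v : ι}
    (h : v ∈ Set.range f) : Y v ⬝ᵥ ray Y f = 0 := by
  obtain ⟨i, rfl⟩ := h; exact dot_ray_self Y f i

lemma GP.dot_ray_ne {Y : ι → Fin (d + 1) → ℝ} (hY : GP Y) {f : Fin d → ι}
    (hf : Function.Injective f) {v : ι} (hv : v ∉ Set.range f) : Y v ⬝ᵥ ray Y f ≠ 0 := by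
  rw [dot_ray]
  exact hY _ (Fin.cons_injective_iff.2 ⟨hv, hf⟩)

lemma GP.eq_zero {Y : ι → Fin (d + 1) → ℝ} (hY : GP Y) {g : Fin (d + 1) → ι}
    (hg : Function.Injective g) {z : Fin (d + 1) → ℝ} (hz : ∀ i, Y (g i) ⬝ᵥ z = 0) : z = 0 := by
  refine Matrix.eq_zero_of_mulVec_eq_zero (hY g hg) ?_
  ext i; exact hz i

/-- Prescribed inner products with `d + 1` vectors of the family. -/
lemma GP.exists_dual {Y : ι → Fin (d + 1) → ℝ} (hY : GP Y) {g : Fin (d + 1) → ι}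
    (hg : Function.Injective g) (t : Fin (d + 1) → ℝ) : ∃ z, ∀ i, Y (g i) ⬝ᵥ z = t i := by
  have hu : IsUnit (Matrix.of fun i => Y (g i)).det := (hY g hg).isUnit
  refine ⟨(Matrix.of fun i => Y (g i))⁻¹ *ᵥ t, fun i => ?_⟩
  have : (Matrix.of fun i => Y (g i)) *ᵥ ((Matrix.of fun i => Y (g i))⁻¹ *ᵥ t) = t := by
    rw [Matrix.mulVec_mulVec, Matrix.mul_nonsing_inv _ hu, Matrix.one_mulVec]
  exact congrFun this i

lemma GP.exists_comb {Y : ι → Fin (d + 1) → ℝ} (hY : GP Y) {g : Fin (d + 1) → ι}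
    (hg : Function.Injective g) (z : Fin (d + 1) → ℝ) :
    ∃ γ : Fin (d + 1) → ℝ, z = ∑ i, γ i • Y (g i) := by
  have hu : IsUnit (Matrix.of fun i => Y (g i)).det := (hY g hg).isUnit
  refine ⟨z ᵥ* (Matrix.of fun i => Y (g i))⁻¹, ?_⟩
  have : (z ᵥ* (Matrix.of fun i => Y (g i))⁻¹) ᵥ* (Matrix.of fun i => Y (g i)) = z := by
    rw [Matrix.vecMul_vecMul, Matrix.nonsing_inv_mul _ hu, Matrix.vecMul_one]
  conv_lhs => rw [← this]
  ext j
  simp [Matrix.vecMul, dotProduct, Finset.sum_apply]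

lemma exists_notMem_range [DecidableEq ι] {R : Finset ι} (hR : d + 1 ≤ R.card) (f : Fin d → ι) :
    ∃ v ∈ R, v ∉ Set.range f := by
  by_contra hcon
  push Not at hcon
  have : R ⊆ Finset.univ.image f := fun v hv => by
    obtain ⟨i, rfl⟩ := hcon v hv; simp
  have := (Finset.card_le_card this).trans Finset.card_image_le
  simp at this; omega

/-- `ray Y f` spans the orthogonal complement of the vectors indexed by `f`. -/
lemma GP.eq_smul_ray {Y : ι → Fin (d + 1) → ℝ} (hY : GP Y) {f : Fin d → ι}
    (hf : Function.Injective f) {v : ι} (hv : v ∉ Set.range f) {x : Fin (d + 1) → ℝ}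
    (hx : ∀ i, Y (f i) ⬝ᵥ x = 0) : x = ((Y v ⬝ᵥ x) / (Y v ⬝ᵥ ray Y f)) • ray Y f := by
  have h := hY.dot_ray_ne hf hv
  rw [← sub_eq_zero]
  refine hY.eq_zero (g := Fin.cons v f) (Fin.cons_injective_iff.2 ⟨hv, hf⟩) fun i => ?_
  refine Fin.cases ?_ (fun j => ?_) i
  · simp [dotProduct_sub, dotProduct_smul, h]
  · simp [dotProduct_sub, dotProduct_smul, hx j, dot_ray_self]

lemma GP.eq_comb_of_dot_ray {Y : ι → Fin (d + 1) → ℝ} (hY : GP Y) {f : Fin d → ι}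
    (hf : Function.Injective f) {v : ι} (hv : v ∉ Set.range f) {z : Fin (d + 1) → ℝ}
    (hz : z ⬝ᵥ ray Y f = 0) : ∃ γ : Fin d → ℝ, z = ∑ i, γ i • Y (f i) := by
  obtain ⟨γ, hγ⟩ := hY.exists_comb (g := Fin.cons v f) (Fin.cons_injective_iff.2 ⟨hv, hf⟩) z
  rw [Fin.sum_univ_succ] at hγ
  simp only [Fin.cons_zero, Fin.cons_succ] at hγ
  have h0 : γ 0 = 0 := by
    rw [hγ, add_dotProduct, sum_dotProduct] at hz
    simp only [smul_dotProduct, dot_ray_self, smul_eq_mul, mul_zero, Finset.sum_const_zero,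
      add_zero] at hz
    exact (mul_eq_zero.1 hz).resolve_right (hY.dot_ray_ne hf hv)
  refine ⟨fun i => γ i.succ, ?_⟩
  simpa [h0] using hγ

lemma ray_comp_swap (Y : ι → Fin (d + 1) → ℝ) (f : Fin d → ι) {i j : Fin d} (hij : i ≠ j) :
    ray Y (f ∘ Equiv.swap i j) = - ray Y f := by
  ext c
  simp only [ray, cross, Pi.neg_apply, Function.comp]
  have := Matrix.det_permute (Equiv.swap i j) (Matrix.of fun i j : Fin d => Y (f i) (c.succAbove j))
  rw [Equiv.Perm.sign_swap hij] at this
  have h2 : (Matrix.of fun i_1 j_1 : Fin d => Y (f (Equiv.swap i j i_1)) (c.succAbove j_1)) =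
    (Matrix.of fun i j : Fin d => Y (f i) (c.succAbove j)).submatrix (Equiv.swap i j) id := by
    ext; simp
  rw [h2, this]
  simp

lemma range_comp_swap (f : Fin d → ι) (i j : Fin d) :
    Set.range (f ∘ Equiv.swap i j) = Set.range f := by
  rw [Set.range_comp, (Equiv.swap i j).range_eq_univ, Set.image_univ]

/-- A nonzero vector orthogonal to the vectors indexed by `f` is, after reordering `f`, a
positive multiple of `ray Y f`. -/
lemma GP.exists_oriented (hd : 2 ≤ d) {Y : ι → Fin (d + 1) → ℝ} (hY : GP Y) {f : Fin d → ι}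
    (hf : Function.Injective f) {v : ι} (hv : v ∉ Set.range f) {x : Fin (d + 1) → ℝ}
    (hx0 : x ≠ 0) (hx : ∀ i, Y (f i) ⬝ᵥ x = 0) :
    ∃ f' : Fin d → ι, Function.Injective f' ∧ Set.range f' = Set.range f ∧
      ∃ α : ℝ, 0 < α ∧ x = α • ray Y f' := by
  have h := hY.eq_smul_ray hf hv hx
  set α := (Y v ⬝ᵥ x) / (Y v ⬝ᵥ ray Y f)
  have hα : α ≠ 0 := by rintro h0; rw [h0, zero_smul] at h; exact hx0 h
  rcases lt_or_gt_of_ne hα with hneg | hpos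
  · have hne : (⟨0, by omega⟩ : Fin d) ≠ ⟨1, by omega⟩ := by simp
    refine ⟨f ∘ Equiv.swap ⟨0, by omega⟩ ⟨1, by omega⟩, hf.comp (Equiv.injective _),
      range_comp_swap _ _ _, -α, by linarith, ?_⟩
    rw [ray_comp_swap _ _ hne, smul_neg, neg_smul, neg_neg]
    exact h
  · exact ⟨f, hf, rfl, α, hpos, h⟩

section Rays

variable [Fintype ι]

/-- `v` lies strictly on the positive side of the ray of `f`. -/
def Conf (Y : ι → Fin (d + 1) → ℝ) (f : Fin d → ι) (v : ι) : Prop := 0 < Y v ⬝ᵥ ray Y f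

open Classical in
/-- The ordered `d`-tuples whose ray is an extreme ray of the polar cone of `R`. -/
noncomputable def rays (Y : ι → Fin (d + 1) → ℝ) (R : Finset ι) : Finset (Fin d → ι) :=
  Finset.univ.filter fun f => Function.Injective f ∧ (∀ i, f i ∈ R) ∧ ∀ v ∈ R, ¬ Conf Y f v

lemma mem_rays {Y : ι → Fin (d + 1) → ℝ} {R : Finset ι} {f : Fin d → ι} :
    f ∈ rays Y R ↔ Function.Injective f ∧ (∀ i, f i ∈ R) ∧ ∀ v ∈ R, ¬ Conf Y f v := by
  simp [rays]

lemma rays_nonpos {Y : ι → Fin (d + 1) → ℝ} {R : Finset ι} {f : Fin d → ι} (hf : f ∈ rays Y R)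
    {v : ι} (hv : v ∈ R) : Y v ⬝ᵥ ray Y f ≤ 0 := not_lt.1 ((mem_rays.1 hf).2.2 v hv)

lemma rays_neg {Y : ι → Fin (d + 1) → ℝ} (hY : GP Y) {R : Finset ι} {f : Fin d → ι}
    (hf : f ∈ rays Y R) {v : ι} (hv : v ∈ R) (hvf : v ∉ Set.range f) : Y v ⬝ᵥ ray Y f < 0 :=
  lt_of_le_of_ne (rays_nonpos hf hv) (hY.dot_ray_ne (mem_rays.1 hf).1 hvf)

/-- `f'` is adjacent to `f` across the ridge omitting the `i`-th entry. -/
def IsNbr (f : Fin d → ι) (i : Fin d) (f' : Fin d → ι) : Prop :=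
  f i ∉ Set.range f' ∧ ∀ j, j ≠ i → f j ∈ Set.range f'

/-- The polar cone is a pointed cone of full dimension, so each extreme ray has a neighbour across each
of its ridges. -/
theorem GP.exists_nbr (hd : 2 ≤ d) {Y : ι → Fin (d + 1) → ℝ} (hY : GP Y) {R : Finset ι}
    (hR : d + 1 ≤ R.card) {f : Fin d → ι} (hf : f ∈ rays Y R) (i : Fin d) :
    ∃ f' ∈ rays Y R, IsNbr f i f' := by
  classical
  obtain ⟨hinj, hfR, -⟩ := mem_rays.1 hf
  obtain ⟨v, hvR, hv⟩ := exists_notMem_range hR f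
  obtain ⟨y, hy⟩ := hY.exists_dual (g := Fin.cons v f) (Fin.cons_injective_iff.2 ⟨hv, hinj⟩)
    (Fin.cons 0 (fun j => if j = i then -1 else 0))
  have hyf : ∀ j, Y (f j) ⬝ᵥ y = if j = i then -1 else 0 := fun j => by
    simpa using hy j.succ
  set R' := R.filter fun a => a ∉ Set.range f
  obtain ⟨a, ha, hmax⟩ := Finset.exists_max_image R'
    (fun a => (Y a ⬝ᵥ y) / (-(Y a ⬝ᵥ ray Y f))) ⟨v, by simp only [R', Finset.mem_filter]; exact ⟨hvR, hv⟩⟩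
  have haR : a ∈ R := (Finset.mem_filter.1 ha).1
  have haf : a ∉ Set.range f := (Finset.mem_filter.1 ha).2
  set σ := (Y a ⬝ᵥ y) / (-(Y a ⬝ᵥ ray Y f))
  set w := y + σ • ray Y f
  have hneg : ∀ b ∈ R, b ∉ Set.range f → Y b ⬝ᵥ ray Y f < 0 := fun b hb hbf =>
    rays_neg hY hf hb hbf
  have hwf : ∀ j, Y (f j) ⬝ᵥ w = if j = i then -1 else 0 := fun j => by
    simp [w, dotProduct_add, dotProduct_smul, hyf, dot_ray_self]
  have hwle : ∀ b ∈ R, Y b ⬝ᵥ w ≤ 0 := by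
    intro b hb
    by_cases hbf : b ∈ Set.range f
    · obtain ⟨j, rfl⟩ := hbf
      rw [hwf]; split_ifs <;> norm_num
    · have h1 := hmax b (by simp only [R', Finset.mem_filter]; exact ⟨hb, hbf⟩)
      have h2 := hneg b hb hbf
      rw [div_le_iff₀ (by linarith)] at h1
      simp only [w, dotProduct_add, dotProduct_smul, smul_eq_mul]
      linarith
  have hwa : Y a ⬝ᵥ w = 0 := by
    have h2 := hneg a haR haf
    simp only [w, dotProduct_add, dotProduct_smul, smul_eq_mul, σ]
    rw [div_neg, neg_mul, div_mul_cancel₀ _ h2.ne, add_neg_cancel]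
  have hupd : Function.Injective (Function.update f i a) := by
    intro j k hjk
    by_cases hj : j = i <;> by_cases hk : k = i
    · rw [hj, hk]
    · subst hj
      rw [Function.update_self, Function.update_of_ne hk] at hjk
      exact (haf ⟨k, hjk.symm⟩).elim
    · subst hk
      rw [Function.update_self, Function.update_of_ne hj] at hjk
      exact (haf ⟨j, hjk⟩).elim
    · rw [Function.update_of_ne hk, Function.update_of_ne hj] at hjk
      exact hinj hjk
  have hfi : f i ∉ Set.range (Function.update f i a) := by
    rintro ⟨j, hj⟩
    by_cases hji : j = i
    · subst hji; rw [Function.update_self] at hj; exact haf ⟨j, hj.symm⟩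
    · rw [Function.update_of_ne hji] at hj; exact hji (hinj hj)
  have hw0 : w ≠ 0 := by
    intro h; have := hwf i; rw [h] at this; simp at this
  obtain ⟨f', hf'inj, hf'r, α, hα, hw⟩ := hY.exists_oriented hd hupd hfi hw0 (fun j => by
    by_cases hji : j = i
    · subst hji; rw [Function.update_self]; exact hwa
    · rw [Function.update_of_ne hji, hwf, if_neg hji])
  refine ⟨f', mem_rays.2 ⟨hf'inj, fun j => ?_, fun b hb hc => ?_⟩, ?_, fun j hj => ?_⟩
  · have : f' j ∈ Set.range (Function.update f i a) := hf'r ▸ ⟨j, rfl⟩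
    obtain ⟨k, hk⟩ := this
    rw [← hk]
    by_cases hki : k = i
    · subst hki; rwa [Function.update_self]
    · rw [Function.update_of_ne hki]; exact hfR k
  · have := hwle b hb
    rw [hw, dotProduct_smul, smul_eq_mul] at this
    have h2 : 0 < α * (Y b ⬝ᵥ ray Y f') := mul_pos hα hc
    linarith
  · rwa [hf'r]
  · rw [hf'r]; exact ⟨j, by rw [Function.update_of_ne hj]⟩

/-- At the extreme ray of `f`, the polar cone of `R` lies in the cone spanned by the line of
that ray and the adjacent rays. -/
theorem GP.tangent {Y : ι → Fin (d + 1) → ℝ} (hY : GP Y) {R : Finset ι}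
    (hR : d + 1 ≤ R.card) {f : Fin d → ι} (hf : f ∈ rays Y R) {nb : Fin d → Fin d → ι}
    (hnb : ∀ i, nb i ∈ rays Y R ∧ IsNbr f i (nb i)) {x : Fin (d + 1) → ℝ}
    (hx : ∀ v ∈ R, Y v ⬝ᵥ x ≤ 0) :
    ∃ (α : ℝ) (β : Fin d → ℝ), (∀ i, 0 ≤ β i) ∧ x = α • ray Y f + ∑ i, β i • ray Y (nb i) := by
  classical
  obtain ⟨hinj, hfR, -⟩ := mem_rays.1 hf
  obtain ⟨v, hvR, hv⟩ := exists_notMem_range hR f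
  have hneg : ∀ i, Y (f i) ⬝ᵥ ray Y (nb i) < 0 := fun i =>
    rays_neg hY (hnb i).1 (hfR i) (hnb i).2.1
  set β : Fin d → ℝ := fun i => (Y (f i) ⬝ᵥ x) / (Y (f i) ⬝ᵥ ray Y (nb i))
  have hres : ∀ j, Y (f j) ⬝ᵥ (x - ∑ i, β i • ray Y (nb i)) = 0 := by
    intro j
    rw [dotProduct_sub, dotProduct_sum, Finset.sum_eq_single j]
    · simp only [dotProduct_smul, smul_eq_mul, β]
      rw [div_mul_cancel₀ _ (hneg j).ne, sub_self]
    · intro i _ hij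
      rw [dotProduct_smul, dot_ray_of_mem Y (nb i) ((hnb i).2.2 j hij.symm), smul_zero]
    · simp
  have := hY.eq_smul_ray hinj hv hres
  refine ⟨(Y v ⬝ᵥ (x - ∑ i, β i • ray Y (nb i))) / (Y v ⬝ᵥ ray Y f), β,
    fun i => div_nonneg_of_nonpos (hx _ (hfR i)) (hneg i).le, ?_⟩
  rw [← this]; abel

/-- Conflict sets are connected: if a set `K` of extreme rays on the positive side of `v` is
only adjacent to rays in `K` or on the nonpositive side, then `K` contains all rays on the
positive side. Otherwise a ray maximizing a suitable ratio over `K` could be improved. -/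
theorem GP.closure {Y : ι → Fin (d + 1) → ℝ} (hY : GP Y) {R : Finset ι}
    (hR : d + 1 ≤ R.card) {K W : Finset (Fin d → ι)} (hW : ∀ f ∈ W, f ∈ rays Y R)
    (hKW : K ⊆ W) (hK0 : K.Nonempty) (hKr : ∀ f ∈ K, ∀ f' ∈ W, Set.range f = Set.range f' → f' ∈ K)
    {v : ι} (hv : ∀ f ∈ K, Conf Y f v)
    (hnb : ∀ f ∈ K, ∀ i, ∃ f' ∈ W, IsNbr f i f' ∧ (f' ∈ K ∨ ¬ Conf Y f' v)) :
    ∀ f ∈ W, Conf Y f v → f ∈ K := by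
  classical
  intro g hgW hgv
  by_contra hgK
  set c := ∑ i, Y (g i) with hc
  obtain ⟨hginj, hgR, -⟩ := mem_rays.1 (hW g hgW)
  have hcle : ∀ f ∈ W, c ⬝ᵥ ray Y f ≤ 0 := fun f hf => by
    rw [hc, sum_dotProduct]
    exact Finset.sum_nonpos fun i _ => rays_nonpos (hW f hf) (hgR i)
  have hclt : ∀ f ∈ K, c ⬝ᵥ ray Y f < 0 := fun f hf => by
    refine lt_of_le_of_ne (hcle f (hKW hf)) fun h0 => hgK ?_
    rw [hc, sum_dotProduct, Finset.sum_eq_zero_iff_of_nonpos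
      (fun i _ => rays_nonpos (hW f (hKW hf)) (hgR i))] at h0
    have hsub : Set.range g ⊆ Set.range f := by
      rintro _ ⟨i, rfl⟩
      by_contra hcon
      exact hY.dot_ray_ne (mem_rays.1 (hW f (hKW hf))).1 hcon (h0 i (Finset.mem_univ i))
    refine hKr f hf g hgW (Set.Subset.antisymm ?_ hsub)
    have hfinj := (mem_rays.1 (hW f (hKW hf))).1
    have h1 : (Finset.univ.image g) ⊆ Finset.univ.image f := by
      intro a ha; simp only [Finset.mem_image, Finset.mem_univ, true_and] at ha ⊢; exact hsub ha
    have h2 := Finset.eq_of_subset_of_card_le h1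
      (by rw [Finset.card_image_of_injective _ hginj, Finset.card_image_of_injective _ hfinj])
    intro a ha
    have : a ∈ Finset.univ.image f := by simpa using ha
    rw [← h2] at this
    simpa using this
  obtain ⟨f, hfK, hmax⟩ := Finset.exists_max_image K
    (fun f => (c ⬝ᵥ ray Y f) / (Y v ⬝ᵥ ray Y f)) hK0
  set ρ := (c ⬝ᵥ ray Y f) / (Y v ⬝ᵥ ray Y f)
  have hvf : 0 < Y v ⬝ᵥ ray Y f := hv f hfK
  have hρ : ρ < 0 := div_neg_of_neg_of_pos (hclt f hfK) hvf
  choose nb hnbW hnbI hnbK using hnb f hfK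
  obtain ⟨α, β, hβ, hx⟩ := hY.tangent hR (hW f (hKW hfK)) (fun i => ⟨hW _ (hnbW i), hnbI i⟩)
    (x := ray Y g) (fun u hu => rays_nonpos (hW g hgW) hu)
  have hφf : (c - ρ • Y v) ⬝ᵥ ray Y f = 0 := by
    rw [sub_dotProduct, smul_dotProduct, smul_eq_mul, div_mul_cancel₀ _ hvf.ne', sub_self]
  have hφg : 0 < (c - ρ • Y v) ⬝ᵥ ray Y g := by
    have h0 : c ⬝ᵥ ray Y g = 0 := by
      rw [hc, sum_dotProduct]; exact Finset.sum_eq_zero fun i _ => dot_ray_self Y g i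
    rw [sub_dotProduct, smul_dotProduct, smul_eq_mul, h0]
    have : 0 < Y v ⬝ᵥ ray Y g := hgv
    nlinarith
  rw [hx, dotProduct_add, dotProduct_smul, hφf, smul_zero, zero_add, dotProduct_sum] at hφg
  obtain ⟨i, -, hi⟩ := Finset.exists_lt_of_sum_lt (s := Finset.univ) (f := fun _ : Fin d => (0 : ℝ))
    (g := fun i => (c - ρ • Y v) ⬝ᵥ β i • ray Y (nb i)) (by simpa using hφg)
  rw [dotProduct_smul, smul_eq_mul] at hi
  have hi' : 0 < (c - ρ • Y v) ⬝ᵥ ray Y (nb i) := pos_of_mul_pos_right hi (hβ i)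
  rw [sub_dotProduct, smul_dotProduct, smul_eq_mul] at hi'
  have h1 := hcle _ (hnbW i)
  have h2 : 0 < Y v ⬝ᵥ ray Y (nb i) := by
    by_contra hcon
    push Not at hcon
    nlinarith
  rcases hnbK i with h3 | h3
  · have h4 := hmax _ h3
    rw [div_le_iff₀ h2] at h4
    linarith
  · exact h3 h2

/-- A vector on the nonpositive side of all extreme rays is a nonnegative combination of the
vectors of `R`. -/
theorem GP.farkas (hd : 2 ≤ d) {Y : ι → Fin (d + 1) → ℝ} (hY : GP Y) {R : Finset ι}
    (hR : d + 1 ≤ R.card) (h0 : (rays Y R).Nonempty) {v : ι}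
    (hv : ∀ f ∈ rays Y R, ¬ Conf Y f v) :
    ∃ c : ι → ℝ, (∀ a, 0 ≤ c a) ∧ Y v = ∑ a ∈ R, c a • Y a := by
  classical
  set s := -∑ a ∈ R, Y a with hs
  have hspos : ∀ f ∈ rays Y R, 0 < s ⬝ᵥ ray Y f := fun f hf => by
    obtain ⟨a, haR, haf⟩ := exists_notMem_range hR f
    rw [hs, neg_dotProduct, sum_dotProduct, neg_pos]
    exact Finset.sum_neg' (fun b hb => rays_nonpos hf hb) ⟨a, haR, rays_neg hY hf haR haf⟩
  obtain ⟨f, hf, hmax⟩ := Finset.exists_max_image (rays Y R)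
    (fun f => (Y v ⬝ᵥ ray Y f) / (s ⬝ᵥ ray Y f)) h0
  set ρ := (Y v ⬝ᵥ ray Y f) / (s ⬝ᵥ ray Y f)
  have hρ : ρ ≤ 0 := div_nonpos_of_nonpos_of_nonneg (not_lt.1 (hv f hf)) (hspos f hf).le
  obtain ⟨hinj, hfR, -⟩ := mem_rays.1 hf
  obtain ⟨u, -, hu⟩ := exists_notMem_range hR f
  have hφf : (Y v - ρ • s) ⬝ᵥ ray Y f = 0 := by
    rw [sub_dotProduct, smul_dotProduct, smul_eq_mul, div_mul_cancel₀ _ (hspos f hf).ne', sub_self]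
  obtain ⟨γ, hγ⟩ := hY.eq_comb_of_dot_ray hinj hu hφf
  have hγ0 : ∀ i, 0 ≤ γ i := by
    intro i
    obtain ⟨f', hf', hn⟩ := hY.exists_nbr hd hR hf i
    have h1 := hmax f' hf'
    rw [div_le_iff₀ (hspos f' hf')] at h1
    have h2 : (Y v - ρ • s) ⬝ᵥ ray Y f' = γ i * (Y (f i) ⬝ᵥ ray Y f') := by
      rw [hγ, sum_dotProduct, Finset.sum_eq_single i]
      · rw [smul_dotProduct, smul_eq_mul]
      · intro j _ hj
        rw [smul_dotProduct, dot_ray_of_mem Y f' (hn.2 j hj), smul_zero]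
      · simp
    rw [sub_dotProduct, smul_dotProduct, smul_eq_mul] at h2
    have h3 := rays_neg hY hf' (hfR i) hn.1
    by_contra hcon
    push Not at hcon
    have := mul_pos_of_neg_of_neg hcon h3
    linarith
  refine ⟨fun a => -ρ + ∑ i, if f i = a then γ i else 0, fun a => ?_, ?_⟩
  · refine add_nonneg (by linarith) (Finset.sum_nonneg fun i _ => ?_)
    split_ifs
    · exact hγ0 i
    · exact le_rfl
  · have h1 : Y v = (Y v - ρ • s) + ρ • s := by abel
    rw [h1, hγ, hs]
    simp only [add_smul, Finset.sum_add_distrib, ← Finset.smul_sum, Finset.sum_smul, ite_smul,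
      zero_smul]
    rw [Finset.sum_comm]
    have h2 : ∀ i, ∑ a ∈ R, (if f i = a then γ i • Y a else 0) = γ i • Y (f i) := fun i => by
      rw [Finset.sum_ite_eq]; simp [hfR i]
    simp only [h2, smul_neg, neg_smul]
    abel

end Rays

end Hopcroft

/-! ### Generation by extreme rays -/

namespace Hopcroft

open Matrix

set_option linter.unusedSectionVars false

variable {d : ℕ} {ι : Type*} [Fintype ι]

lemma GP.eq_zero_of_card {Y : ι → Fin (d + 1) → ℝ} (hY : GP Y) {T : Finset ι}
    (hT : d + 1 ≤ T.card) {z : Fin (d + 1) → ℝ} (hz : ∀ a ∈ T, Y a ⬝ᵥ z = 0) : z = 0 := by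
  obtain ⟨T', hT', hc⟩ := Finset.exists_subset_card_eq hT
  let e := (T'.equivFinOfCardEq hc).symm
  exact hY.eq_zero (g := fun i => (e i : ι))
    (Subtype.val_injective.comp e.injective) fun i => hz _ (hT' (e i).2)

/-- Moving inside the polar cone of `R` in a direction orthogonal to the tight constraints
until a further constraint becomes tight. -/
lemma exists_move {Y : ι → Fin (d + 1) → ℝ} {R : Finset ι}
    {x y : Fin (d + 1) → ℝ} (hx : ∀ a ∈ R, Y a ⬝ᵥ x ≤ 0)
    (hy : ∀ a ∈ R, Y a ⬝ᵥ x = 0 → Y a ⬝ᵥ y = 0) (hpos : ∃ a ∈ R, 0 < Y a ⬝ᵥ y) :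
    ∃ t : ℝ, 0 < t ∧ (∀ a ∈ R, Y a ⬝ᵥ (x + t • y) ≤ 0) ∧
      (R.filter fun a => Y a ⬝ᵥ (x + t • y) ≠ 0).card < (R.filter fun a => Y a ⬝ᵥ x ≠ 0).card := by
  classical
  obtain ⟨a0, ha0, ha0y⟩ := hpos
  obtain ⟨a, ha, hmin⟩ := Finset.exists_min_image (R.filter fun a => 0 < Y a ⬝ᵥ y)
    (fun a => -(Y a ⬝ᵥ x) / (Y a ⬝ᵥ y)) ⟨a0, Finset.mem_filter.2 ⟨ha0, ha0y⟩⟩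
  obtain ⟨haR, hay⟩ := Finset.mem_filter.1 ha
  have hax : Y a ⬝ᵥ x < 0 := lt_of_le_of_ne (hx a haR) fun h => by
    rw [hy a haR h] at hay; exact lt_irrefl _ hay
  set t := -(Y a ⬝ᵥ x) / (Y a ⬝ᵥ y)
  have ht : 0 < t := div_pos (by linarith) hay
  have hzero : Y a ⬝ᵥ (x + t • y) = 0 := by
    rw [dotProduct_add, dotProduct_smul, smul_eq_mul, div_mul_cancel₀ _ hay.ne']; ring
  refine ⟨t, ht, fun b hb => ?_, ?_⟩
  · rw [dotProduct_add, dotProduct_smul, smul_eq_mul]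
    by_cases hby : 0 < Y b ⬝ᵥ y
    · have := hmin b (Finset.mem_filter.2 ⟨hb, hby⟩)
      rw [le_div_iff₀ hby] at this
      linarith
    · have := hx b hb
      push Not at hby
      nlinarith
  · refine Finset.card_lt_card (Finset.ssubset_iff_of_subset ?_ |>.2 ⟨a, ?_, ?_⟩)
    · intro b hb
      obtain ⟨hbR, hb⟩ := Finset.mem_filter.1 hb
      refine Finset.mem_filter.2 ⟨hbR, fun h => hb ?_⟩
      rw [dotProduct_add, dotProduct_smul, h, hy b hbR h, smul_zero, add_zero]
    · exact Finset.mem_filter.2 ⟨haR, hax.ne⟩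
    · exact fun h => (Finset.mem_filter.1 h).2 hzero

/-- The polar cone of `R` is spanned by its extreme rays. -/
theorem GP.exists_cone (hd : 2 ≤ d) {Y : ι → Fin (d + 1) → ℝ} (hY : GP Y) {R : Finset ι}
    (hR : d + 1 ≤ R.card) {x : Fin (d + 1) → ℝ} (hx : ∀ a ∈ R, Y a ⬝ᵥ x ≤ 0) :
    ∃ c : (Fin d → ι) → ℝ, (∀ f, 0 ≤ c f) ∧ x = ∑ f ∈ rays Y R, c f • ray Y f := by
  classical
  induction hn : (R.filter fun a => Y a ⬝ᵥ x ≠ 0).card using Nat.strong_induction_on generalizing x with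
  | _ n ih =>
  by_cases hx0 : x = 0
  · exact ⟨0, fun _ => le_rfl, by simp [hx0]⟩
  set T := R.filter fun a => Y a ⬝ᵥ x = 0
  have hTR : ∀ a ∈ T, a ∈ R := fun a ha => (Finset.mem_filter.1 ha).1
  have hTx : ∀ a ∈ T, Y a ⬝ᵥ x = 0 := fun a ha => (Finset.mem_filter.1 ha).2
  have hTd : T.card ≤ d := by
    by_contra hcon
    exact hx0 (hY.eq_zero_of_card (T := T) (by omega) hTx)
  rcases hTd.lt_or_eq with hlt | heq
  · -- some nonzero direction is orthogonal to the tight vectors and to the sum of all vectors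
    obtain ⟨y, hy0, hyT, hyS⟩ : ∃ y : Fin (d + 1) → ℝ, y ≠ 0 ∧ (∀ a ∈ T, Y a ⬝ᵥ y = 0) ∧
        (∑ a ∈ R, Y a) ⬝ᵥ y = 0 := by
      let M : Matrix (Option T) (Fin (d + 1)) ℝ :=
        Matrix.of fun o => o.elim (∑ a ∈ R, Y a) (fun a => Y a)
      have hker : LinearMap.ker M.mulVecLin ≠ ⊥ := by
        apply LinearMap.ker_ne_bot_of_finrank_lt
        simp only [Module.finrank_fintype_fun_eq_card, Fintype.card_option, Fintype.card_coe,
          Fintype.card_fin]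
        omega
      obtain ⟨y, hy, hy0⟩ := Submodule.exists_mem_ne_zero_of_ne_bot hker
      rw [LinearMap.mem_ker, Matrix.mulVecLin_apply] at hy
      exact ⟨y, hy0, fun a ha => congrFun hy (some ⟨a, ha⟩), congrFun hy none⟩
    rw [sum_dotProduct] at hyS
    have hne : ∃ a ∈ R, Y a ⬝ᵥ y ≠ 0 := by
      by_contra hcon
      push Not at hcon
      exact hy0 (hY.eq_zero_of_card hR hcon)
    have hp1 := Finset.exists_pos_of_sum_zero_of_exists_nonzero _ hyS hne
    have hp2 : ∃ a ∈ R, 0 < Y a ⬝ᵥ (-y) :=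
      Finset.exists_pos_of_sum_zero_of_exists_nonzero (fun a => Y a ⬝ᵥ (-y))
        (by simp only [dotProduct_neg, Finset.sum_neg_distrib, hyS, neg_zero])
        (by obtain ⟨a, ha, h⟩ := hne; exact ⟨a, ha, by simpa using h⟩)
    have hyT' : ∀ a ∈ R, Y a ⬝ᵥ x = 0 → Y a ⬝ᵥ y = 0 := fun a ha h =>
      hyT a (Finset.mem_filter.2 ⟨ha, h⟩)
    obtain ⟨t₁, ht₁, hx₁, hc₁⟩ := exists_move hx hyT' hp1
    obtain ⟨t₂, ht₂, hx₂, hc₂⟩ := exists_move hx (y := -y)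
      (fun a ha h => by rw [dotProduct_neg, hyT' a ha h, neg_zero]) hp2
    obtain ⟨c₁, hc₁0, hc₁⟩ := ih _ (hn ▸ hc₁) hx₁ rfl
    obtain ⟨c₂, hc₂0, hc₂⟩ := ih _ (hn ▸ hc₂) hx₂ rfl
    have hs : 0 < t₁ + t₂ := by linarith
    refine ⟨fun f => t₂ / (t₁ + t₂) * c₁ f + t₁ / (t₁ + t₂) * c₂ f, fun f => ?_, ?_⟩
    · have := hc₁0 f; have := hc₂0 f; positivity
    · simp only [add_smul, mul_smul, Finset.sum_add_distrib, ← Finset.smul_sum, ← hc₁, ← hc₂]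
      have : x = (t₂ / (t₁ + t₂) + t₁ / (t₁ + t₂)) • x +
          (t₂ / (t₁ + t₂) * t₁ - t₁ / (t₁ + t₂) * t₂) • y := by
        have h1 : t₂ / (t₁ + t₂) + t₁ / (t₁ + t₂) = 1 := by field_simp; ring
        have h2 : t₂ / (t₁ + t₂) * t₁ - t₁ / (t₁ + t₂) * t₂ = 0 := by ring
        rw [h1, h2, one_smul, zero_smul, add_zero]
      conv_lhs => rw [this]
      module
  · let e := (T.equivFinOfCardEq heq).symm
    let f : Fin d → ι := fun i => (e i : ι)
    have hfinj : Function.Injective f := Subtype.val_injective.comp e.injective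
    obtain ⟨v, -, hv⟩ := exists_notMem_range hR f
    obtain ⟨f', hf'inj, hf'r, α, hα, hxα⟩ := hY.exists_oriented hd hfinj hv hx0
      (fun i => hTx _ (e i).2)
    have hf' : f' ∈ rays Y R := by
      refine mem_rays.2 ⟨hf'inj, fun i => ?_, fun b hb hc => ?_⟩
      · have : f' i ∈ Set.range f := hf'r ▸ ⟨i, rfl⟩
        obtain ⟨j, hj⟩ := this
        rw [← hj]; exact hTR _ (e j).2
      · have h1 := hx b hb
        rw [hxα, dotProduct_smul, smul_eq_mul] at h1
        have h2 : 0 < α * (Y b ⬝ᵥ ray Y f') := mul_pos hα hc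
        linarith
    refine ⟨Pi.single f' α, fun g => ?_, ?_⟩
    · by_cases h : g = f'
      · subst h; simp [hα.le]
      · simp [h]
    · rw [Finset.sum_eq_single f']
      · simpa using hxα
      · intro g _ hg; simp [hg]
      · exact fun h => (h hf').elim

/-- Every halfspace range of `β` agrees, outside of `d` elements, with the range cut out by a
hyperplane spanned by `d` elements of `β`. -/
theorem GP.exists_canonical (hd : 2 ≤ d) {Y : ι → Fin (d + 1) → ℝ} (hY : GP Y) {β : Finset ι}
    (hβ : d + 1 ≤ β.card) {w : Fin (d + 1) → ℝ} (hw : w ≠ 0) :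
    ∃ f : Fin d → ι, Function.Injective f ∧ (∀ i, f i ∈ β) ∧
      ∀ v ∈ β, v ∉ Set.range f → (0 < Y v ⬝ᵥ w ↔ Conf Y f v) := by
  classical
  let σ : ι → ℝ := fun v => if 0 < Y v ⬝ᵥ w then -1 else 1
  have hσ : ∀ v, σ v ≠ 0 := fun v => by simp only [σ]; split_ifs <;> norm_num
  let Y' : ι → Fin (d + 1) → ℝ := fun v => σ v • Y v
  have hY' : GP Y' := by
    intro g hg
    have : (Matrix.of fun i => Y' (g i)) = Matrix.of fun i j => σ (g i) * Matrix.of (fun i => Y (g i)) i j := by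
      ext i j; simp [Y']
    rw [this, Matrix.det_mul_column]
    exact mul_ne_zero (Finset.prod_ne_zero_iff.2 fun i _ => hσ _) (hY g hg)
  have hx : ∀ a ∈ β, Y' a ⬝ᵥ w ≤ 0 := by
    intro a _
    simp only [Y', σ, smul_dotProduct]
    split_ifs with h
    · simp only [smul_eq_mul]; linarith
    · simpa using h
  obtain ⟨c, -, hc⟩ := hY'.exists_cone hd hβ hx
  obtain ⟨f, hf⟩ : (rays Y' β).Nonempty := by
    by_contra hcon
    rw [Finset.not_nonempty_iff_eq_empty] at hcon
    rw [hcon] at hc; exact hw (by simpa using hc)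
  obtain ⟨hinj, hfβ, -⟩ := mem_rays.1 hf
  obtain ⟨u, huβ, hu⟩ := exists_notMem_range hβ f
  have hz : ray Y' f ≠ 0 := fun h => hY'.dot_ray_ne hinj hu (by rw [h, dotProduct_zero])
  obtain ⟨f', hf'inj, hf'r, α, hα, hx⟩ := hY.exists_oriented hd hinj hu hz (fun i => by
    have := dot_ray_self Y' f i
    simp only [Y', smul_dotProduct, smul_eq_mul] at this
    exact (mul_eq_zero.1 this).resolve_left (hσ _))
  refine ⟨f', hf'inj, fun i => ?_, fun v hv hvf => ?_⟩
  · have : f' i ∈ Set.range f := hf'r ▸ ⟨i, rfl⟩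
    obtain ⟨j, hj⟩ := this
    rw [← hj]; exact hfβ j
  · rw [hf'r] at hvf
    have h1 := rays_neg hY' hf hv hvf
    rw [hx] at h1
    simp only [Y', smul_dotProduct, dotProduct_smul, smul_eq_mul] at h1
    unfold Conf
    by_cases h : 0 < Y v ⬝ᵥ w
    · simp only [σ, if_pos h] at h1
      refine iff_of_true h ?_
      by_contra hcon
      push Not at hcon
      nlinarith
    · simp only [σ, if_neg h] at h1
      refine iff_of_false h ?_
      intro hcon
      nlinarith

/-! ### The upper bound theorem -/

/-- If the negative parts of the expansion of `c` along `f` and `c₀` are shared by `f'`, then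
the normalized ray of `f'` has at most the inner product with `c` that the ray of `f` has. -/
lemma GP.ubt_le {Y : ι → Fin (d + 1) → ℝ} {R : Finset ι}
    {f f' : Fin d → ι} (hf : f ∈ rays Y R) (hf' : f' ∈ rays Y R)
    {c c₀ : Fin (d + 1) → ℝ} {w w' : Fin (d + 1) → ℝ} {t t' : ℝ} (ht' : 0 < t')
    (hw : w = t • ray Y f) (hw' : w' = t' • ray Y f')
    (h0 : c₀ ⬝ᵥ w = c₀ ⬝ᵥ w') {l : Fin d → ℝ} {μ : ℝ} (hc : c = ∑ i, l i • Y (f i) + μ • c₀)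
    (hN : ∀ i, l i < 0 → f i ∈ Set.range f') :
    c ⬝ᵥ w' ≤ c ⬝ᵥ w ∧ (c ⬝ᵥ w' = c ⬝ᵥ w → ∀ i, l i ≠ 0 → Y (f i) ⬝ᵥ ray Y f' = 0) := by
  have h1 : c ⬝ᵥ w = μ * (c₀ ⬝ᵥ w) := by
    rw [hc, add_dotProduct, sum_dotProduct, hw]
    simp [dotProduct_smul, dot_ray_self]
    ring
  have h2 : c ⬝ᵥ w' = ∑ i, l i * (t' * (Y (f i) ⬝ᵥ ray Y f')) + μ * (c₀ ⬝ᵥ w) := by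
    rw [h0, hc, add_dotProduct, sum_dotProduct, hw']
    simp only [dotProduct_smul, smul_dotProduct, smul_eq_mul]
    congr 1
    · exact Finset.sum_congr rfl fun i _ => by ring
    · ring
  have h3 : ∀ i ∈ Finset.univ, l i * (t' * (Y (f i) ⬝ᵥ ray Y f')) ≤ 0 := by
    intro i _
    rcases lt_or_ge (l i) 0 with h | h
    · rw [dot_ray_of_mem Y f' (hN i h)]; simp
    · have := rays_nonpos hf' ((mem_rays.1 hf).2.1 i)
      exact mul_nonpos_of_nonneg_of_nonpos h (mul_nonpos_of_nonneg_of_nonpos ht'.le this)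
  have h4 := Finset.sum_nonpos h3
  refine ⟨by linarith, fun h i hi => ?_⟩
  have h5 : ∑ i, l i * (t' * (Y (f i) ⬝ᵥ ray Y f')) = 0 := by linarith
  have := (Finset.sum_eq_zero_iff_of_nonpos h3).1 h5 i (Finset.mem_univ i)
  have := (mul_eq_zero.1 this).resolve_left hi
  exact (mul_eq_zero.1 this).resolve_left ht'.ne'

lemma range_eq_of_subset {f g : Fin d → ι} (hf : Function.Injective f) (hg : Function.Injective g)
    (h : Set.range g ⊆ Set.range f) : Set.range g = Set.range f := by
  refine Set.eq_of_subset_of_ncard_le h ?_ (Set.finite_range f)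
  rw [← Set.image_univ, ← Set.image_univ, Set.ncard_image_of_injective _ hf,
    Set.ncard_image_of_injective _ hg]

/-- The entries with negative coefficient in the expansion of `c` determine an extreme ray. Each of two
rays sharing these entries has at most the inner product with `c` that the other one has. -/
lemma GP.ubt_range {Y : ι → Fin (d + 1) → ℝ} (hY : GP Y) {R : Finset ι}
    {f f' : Fin d → ι} (hf : f ∈ rays Y R) (hf' : f' ∈ rays Y R)
    {c c₀ : Fin (d + 1) → ℝ} (hs : 0 < (c₀ ⬝ᵥ ray Y f) * (c₀ ⬝ᵥ ray Y f'))
    {l l' : Fin d → ℝ} {μ μ' : ℝ} (hc : c = ∑ i, l i • Y (f i) + μ • c₀)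
    (hc' : c = ∑ i, l' i • Y (f' i) + μ' • c₀)
    (hl : ∀ i, l i ≠ 0)
    (hN : ∀ i, l i < 0 → f i ∈ Set.range f') (hN' : ∀ i, l' i < 0 → f' i ∈ Set.range f) :
    Set.range f = Set.range f' := by
  have hne : c₀ ⬝ᵥ ray Y f ≠ 0 := fun h => by simp [h] at hs
  have hne' : c₀ ⬝ᵥ ray Y f' ≠ 0 := fun h => by simp [h] at hs
  have ht : 0 < |c₀ ⬝ᵥ ray Y f| := abs_pos.2 hne
  have ht' : 0 < |c₀ ⬝ᵥ ray Y f'| := abs_pos.2 hne'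
  have h0 : c₀ ⬝ᵥ (|c₀ ⬝ᵥ ray Y f'| • ray Y f) = c₀ ⬝ᵥ (|c₀ ⬝ᵥ ray Y f| • ray Y f') := by
    rw [dotProduct_smul, dotProduct_smul, smul_eq_mul, smul_eq_mul]
    rcases lt_or_gt_of_ne hne with h | h
    · have h' : c₀ ⬝ᵥ ray Y f' < 0 := by
        by_contra hcon; push Not at hcon; nlinarith
      rw [abs_of_neg h, abs_of_neg h']; ring
    · have h' : 0 < c₀ ⬝ᵥ ray Y f' := by
        by_contra hcon; push Not at hcon; nlinarith
      rw [abs_of_pos h, abs_of_pos h']; ring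
  obtain ⟨h1, h2⟩ := GP.ubt_le hf hf' ht rfl rfl h0 hc hN
  obtain ⟨h3, -⟩ := GP.ubt_le hf' hf ht' rfl rfl h0.symm hc' hN'
  have h4 := h2 (le_antisymm h1 h3)
  refine range_eq_of_subset (mem_rays.1 hf').1 (mem_rays.1 hf).1 ?_
  rintro _ ⟨i, rfl⟩
  by_contra hcon
  exact hY.dot_ray_ne (mem_rays.1 hf').1 hcon (h4 i (hl i))

lemma span_range_ne_top (y : Fin d → Fin (d + 1) → ℝ) : Submodule.span ℝ (Set.range y) ≠ ⊤ := by
  intro h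
  have := finrank_range_le_card (R := ℝ) y
  rw [Set.finrank, h, finrank_top] at this
  simp at this

lemma exists_avoid {τ : Type*} [Fintype τ] (W : τ → Fin d → Fin (d + 1) → ℝ) :
    ∃ c, ∀ t, c ∉ Submodule.span ℝ (Set.range (W t)) := by
  classical
  have h := Subspace.biUnion_ne_univ_of_top_notMem (k := ℝ)
    (s := Finset.univ.image fun t => Submodule.span ℝ (Set.range (W t)))
    (by
      simp only [Finset.mem_image, Finset.mem_univ, true_and, not_exists]
      exact fun t => span_range_ne_top (W t))
  obtain ⟨c, hc⟩ := (Set.ne_univ_iff_exists_notMem _).1 h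
  refine ⟨c, fun t ht => hc ?_⟩
  simp only [Set.mem_iUnion]
  exact ⟨_, Finset.mem_image_of_mem _ (Finset.mem_univ t), ht⟩

lemma exists_enum {k : ℕ} (S : Finset ι) (hS : S.card ≤ k) :
    ∃ κ : Fin k → Option ι, ∀ a, a ∈ S ↔ ∃ i, κ i = some a := by
  let e := S.equivFin
  refine ⟨fun i => if h : (i : ℕ) < S.card then some (e.symm ⟨i, h⟩) else none, fun a => ⟨fun ha => ?_, ?_⟩⟩
  · refine ⟨⟨e ⟨a, ha⟩, (e ⟨a, ha⟩).2.trans_le hS⟩, ?_⟩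
    simp
  · rintro ⟨i, hi⟩
    dsimp only at hi
    split_ifs at hi with h
    · rw [← Option.some_injective _ hi]; exact (e.symm ⟨i, h⟩).2

/-- The upper bound theorem: the polar cone of `R` has `O(|R|^⌊d/2⌋)` extreme rays. -/
theorem GP.card_rays_le {Y : ι → Fin (d + 1) → ℝ} (hY : GP Y) (R : Finset ι) :
    (rays Y R).card ≤ 4 * d ^ d * (R.card + 1) ^ (d / 2) := by
  classical
  have hfib : ∀ S : Finset ι, S.card ≤ d →
      ((Fintype.piFinset fun _ : Fin d => S).card ≤ d ^ d) := fun S hS => by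
    rw [Fintype.card_piFinset]; simpa using Nat.pow_le_pow_left hS d
  by_cases hR : d + 1 ≤ R.card
  swap
  · have : rays Y R ⊆ Fintype.piFinset fun _ : Fin d => R := fun f hf =>
      Fintype.mem_piFinset.2 (mem_rays.1 hf).2.1
    calc (rays Y R).card ≤ d ^ d := (Finset.card_le_card this).trans (hfib R (by omega))
      _ ≤ 4 * d ^ d * (R.card + 1) ^ (d / 2) := by
        have := Nat.one_le_pow (d / 2) (R.card + 1) (by omega)
        nlinarith [Nat.zero_le (d ^ d)]
  obtain ⟨c₀, hc₀⟩ := exists_avoid (fun f : Fin d → ι => fun i => Y (f i))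
  obtain ⟨c, hc⟩ := exists_avoid
    (fun p : (Fin d → ι) × Fin d => Function.update (fun i => Y (p.1 i)) p.2 c₀)
  have hexp : ∀ f ∈ rays Y R, c₀ ⬝ᵥ ray Y f ≠ 0 ∧ ∃ (l : Fin d → ℝ) (μ : ℝ),
      (∀ i, l i ≠ 0) ∧ c = ∑ i, l i • Y (f i) + μ • c₀ := by
    intro f hf
    obtain ⟨v, -, hv⟩ := exists_notMem_range hR f
    have hinj := (mem_rays.1 hf).1
    have hne : c₀ ⬝ᵥ ray Y f ≠ 0 := fun h => by
      obtain ⟨γ, hγ⟩ := hY.eq_comb_of_dot_ray hinj hv h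
      refine hc₀ f (hγ ▸ Submodule.sum_mem _ fun i _ => Submodule.smul_mem _ _ ?_)
      exact Submodule.subset_span ⟨i, rfl⟩
    refine ⟨hne, ?_⟩
    obtain ⟨l, hl⟩ := hY.eq_comb_of_dot_ray hinj hv
      (z := c - ((c ⬝ᵥ ray Y f) / (c₀ ⬝ᵥ ray Y f)) • c₀) (by
        rw [sub_dotProduct, smul_dotProduct, smul_eq_mul, div_mul_cancel₀ _ hne, sub_self])
    have hl' := sub_eq_iff_eq_add.1 hl
    refine ⟨l, _, fun i hi => hc (f, i) ?_, hl'⟩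
    rw [hl']
    refine Submodule.add_mem _ (Submodule.sum_mem _ fun j _ => ?_) (Submodule.smul_mem _ _ ?_)
    · by_cases hji : j = i
      · rw [hji, hi, zero_smul]; exact Submodule.zero_mem _
      · exact Submodule.smul_mem _ _ (Submodule.subset_span ⟨j, by simp [hji]⟩)
    · exact Submodule.subset_span ⟨i, by simp⟩
  choose! hne l μ hl hexp using hexp
  let N : (Fin d → ι) → Bool → Finset ι := fun f b =>
    (Finset.univ.filter fun i => if b then l f i < 0 else 0 < l f i).image f
  have hN : ∀ f ∈ rays Y R, ∃ b, (N f b).card ≤ d / 2 := by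
    intro f hf
    by_contra hcon
    push Not at hcon
    have h1 := (hcon true).trans_le Finset.card_image_le
    have h2 := (hcon false).trans_le Finset.card_image_le
    have h3 := Finset.card_union_of_disjoint (s := Finset.univ.filter fun i => l f i < 0)
      (t := Finset.univ.filter fun i => 0 < l f i) (by
        rw [Finset.disjoint_filter]; intro i _ h1 h2; linarith)
    have h4 := Finset.card_le_univ ((Finset.univ.filter fun i => l f i < 0) ∪
      (Finset.univ.filter fun i => 0 < l f i))
    simp only [if_true, Bool.false_eq_true, if_false] at h1 h2
    simp only [Fintype.card_fin] at h4
    omega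
  choose! b hb using hN
  have hκ : ∀ f ∈ rays Y R, ∃ κ : Fin (d / 2) → Option ι, ∀ a, a ∈ N f (b f) ↔ ∃ i, κ i = some a :=
    fun f hf => exists_enum _ (hb f hf)
  choose! κ hκ using hκ
  let key : (Fin d → ι) → Bool × Bool × (Fin (d / 2) → Option ι) := fun f =>
    (decide (0 < c₀ ⬝ᵥ ray Y f), b f, κ f)
  let K : Finset (Bool × Bool × (Fin (d / 2) → Option ι)) :=
    Finset.univ ×ˢ Finset.univ ×ˢ Fintype.piFinset fun _ => Finset.insertNone R
  have hK : K.card = 4 * (R.card + 1) ^ (d / 2) := by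
    simp only [K, Finset.card_product, Finset.card_univ, Fintype.card_bool,
      Fintype.card_piFinset_const, Finset.card_insertNone]
    ring
  have hmaps : ∀ f ∈ rays Y R, key f ∈ K := by
    intro f hf
    simp only [K, key, Finset.mem_product, Finset.mem_univ, true_and, Fintype.mem_piFinset]
    intro i
    rw [Finset.mem_insertNone]
    intro a ha
    have : a ∈ N f (b f) := (hκ f hf a).2 ⟨i, ha⟩
    obtain ⟨j, -, rfl⟩ := Finset.mem_image.1 this
    exact (mem_rays.1 hf).2.1 j
  have hrange : ∀ f ∈ rays Y R, ∀ f' ∈ rays Y R, key f = key f' → Set.range f = Set.range f' := by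
    intro f hf f' hf' h
    simp only [key, Prod.mk.injEq, decide_eq_decide] at h
    obtain ⟨hs, hbb, hκκ⟩ := h
    have hs' : 0 < (c₀ ⬝ᵥ ray Y f) * (c₀ ⬝ᵥ ray Y f') := by
      rcases lt_or_gt_of_ne (hne f hf) with h | h
      · have : c₀ ⬝ᵥ ray Y f' < 0 := lt_of_le_of_ne
          (not_lt.1 fun h' => not_lt.2 h.le (hs.2 h')) (hne f' hf')
        exact mul_pos_of_neg_of_neg h this
      · exact mul_pos h (hs.1 h)
    have hNN : N f (b f) = N f' (b f) := by
      ext a; rw [hκ f hf, hκκ]; conv_rhs => rw [hbb]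
      rw [← hκ f' hf']
    have hsub : ∀ g g' : Fin d → ι, ∀ β, N g β = N g' β → ∀ i,
        (if β then l g i < 0 else 0 < l g i) → g i ∈ Set.range g' := by
      intro g g' β hN i hi
      have : g i ∈ N g' β := hN ▸ Finset.mem_image_of_mem _ (by simpa using hi)
      obtain ⟨j, -, hj⟩ := Finset.mem_image.1 this
      exact ⟨j, hj⟩
    cases hbf : b f with
    | true =>
      rw [hbf] at hNN
      exact hY.ubt_range hf hf' hs' (hexp f hf) (hexp f' hf') (hl f hf)
        (fun i hi => hsub f f' true hNN i (by simpa using hi))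
        (fun i hi => hsub f' f true hNN.symm i (by simpa using hi))
    | false =>
      rw [hbf] at hNN
      have hneg : ∀ g ∈ rays Y R, -c = ∑ i, (-l g i) • Y (g i) + (-μ g) • c₀ := fun g hg => by
        conv_lhs => rw [hexp g hg]
        simp only [neg_smul, Finset.sum_neg_distrib]; abel
      exact hY.ubt_range hf hf' hs' (hneg f hf) (hneg f' hf') (fun i => neg_ne_zero.2 (hl f hf i))
        (fun i hi => hsub f f' false hNN i (by simpa using hi))
        (fun i hi => hsub f' f false hNN.symm i (by simpa using hi))
  have := Finset.card_le_mul_card_image_of_maps_to (s := rays Y R) (t := K) (f := key) hmaps (d ^ d)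
    (by
      intro x _
      rcases (Finset.filter (fun f => key f = x) (rays Y R)).eq_empty_or_nonempty with h | ⟨g, hg⟩
      · rw [h]; simp
      · obtain ⟨hg, hgx⟩ := Finset.mem_filter.1 hg
        refine le_trans (Finset.card_le_card (t := Fintype.piFinset fun _ : Fin d => Finset.univ.image g)
          fun f hf => ?_) (hfib _ (Finset.card_image_le.trans (by simp)))
        obtain ⟨hf, hfx⟩ := Finset.mem_filter.1 hf
        rw [Fintype.mem_piFinset]
        intro i
        have : f i ∈ Set.range g := hrange f hf g hg (hfx.trans hgx.symm) ▸ ⟨i, rfl⟩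
        simpa using this)
  rw [hK] at this
  calc _ ≤ _ := this
    _ = _ := by ring

end Hopcroft

/-! ### Tests and certificates -/

namespace Hopcroft

open Matrix

set_option linter.unusedSectionVars false

/-- `z` is a nonnegative combination of the vectors `v g`, `g ∈ G`. -/
def InCone {κ E : Type*} [AddCommGroup E] [Module ℝ E] (v : κ → E) (G : Finset κ) (z : E) : Prop :=
  ∃ c : κ → ℝ, (∀ g ∈ G, 0 ≤ c g) ∧ z = ∑ g ∈ G, c g • v g

/-- Conic Carathéodory theorem. -/
theorem InCone.exists_indep {κ E : Type*} [AddCommGroup E] [Module ℝ E] {v : κ → E}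
    {G : Finset κ} {z : E} (h : InCone v G z) :
    ∃ S ⊆ G, LinearIndepOn ℝ v (S : Set κ) ∧ InCone v S z := by
  classical
  induction hn : G.card using Nat.strong_induction_on generalizing G with
  | _ n ih =>
  by_cases hli : LinearIndepOn ℝ v (G : Set κ)
  · exact ⟨G, subset_rfl, hli, h⟩
  obtain ⟨c, hc, hz⟩ := h
  rw [linearIndepOn_finset_iff] at hli
  push Not at hli
  obtain ⟨f, hf, g₀, hg₀, hfg₀⟩ := hli
  obtain ⟨f, hf, g₀, hg₀, hfg₀⟩ : ∃ f : κ → ℝ, ∑ i ∈ G, f i • v i = 0 ∧ ∃ i ∈ G, 0 < f i := by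
    rcases lt_or_gt_of_ne hfg₀ with h | h
    · exact ⟨fun i => -f i, by simp [Finset.sum_neg_distrib, hf], g₀, hg₀, by linarith⟩
    · exact ⟨f, hf, g₀, hg₀, h⟩
  obtain ⟨a, ha, hmin⟩ := Finset.exists_min_image (G.filter fun i => 0 < f i) (fun i => c i / f i)
    ⟨g₀, Finset.mem_filter.2 ⟨hg₀, hfg₀⟩⟩
  obtain ⟨haG, haf⟩ := Finset.mem_filter.1 ha
  have ht : 0 ≤ c a / f a := div_nonneg (hc a haG) haf.le
  have hnew : InCone v (G.erase a) z := by
    refine ⟨fun i => c i - c a / f a * f i, fun i hi => ?_, ?_⟩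
    · have hiG := Finset.mem_of_mem_erase hi
      by_cases hfi : 0 < f i
      · have := hmin i (Finset.mem_filter.2 ⟨hiG, hfi⟩)
        rw [le_div_iff₀ hfi] at this
        linarith
      · have := hc i hiG
        push Not at hfi
        nlinarith
    · rw [Finset.sum_erase]
      · simp only [sub_smul, Finset.sum_sub_distrib, mul_smul, ← Finset.smul_sum, hf, smul_zero,
          sub_zero]
        exact hz
      · dsimp only
        rw [div_mul_cancel₀ _ haf.ne', sub_self, zero_smul]
  obtain ⟨S, hS, h1, h2⟩ := ih _ (by rw [← hn]; exact Finset.card_erase_lt_of_mem haG) hnew rfl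
  exact ⟨S, hS.trans (Finset.erase_subset _ _), h1, h2⟩

/-- Labels of the vectors occurring in determinant tests: members of the family, rays spanned
by `d` members, and standard basis vectors. -/
abbrev Gen (d : ℕ) (ι : Type*) := ι ⊕ (Fin d → ι) ⊕ Fin (d + 1)

/-- Test labels: a pair asks whether an inner product is positive; a sign and `d + 1`
vector labels ask whether the signed determinant is positive. -/
abbrev Test (d : ℕ) (ι : Type*) := (ι × ι) ⊕ (Bool × (Fin (d + 1) → Gen d ι))

variable {d : ℕ} {ι : Type*}

/-- The vector denoted by a label. -/
noncomputable def vec (Y : ι → Fin (d + 1) → ℝ) : Gen d ι → Fin (d + 1) → ℝ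
  | .inl a => Y a
  | .inr (.inl f) => ray Y f
  | .inr (.inr c) => Pi.single c 1

/-- Determinant of the vectors denoted by `g`. -/
noncomputable def gdet (Y : ι → Fin (d + 1) → ℝ) (g : Fin (d + 1) → Gen d ι) : ℝ :=
  (Matrix.of fun i => vec Y (g i)).det

/-- The real number whose positivity a test asks for. -/
noncomputable def tval (Y : ι → Fin (d + 1) → ℝ) : Test d ι → ℝ
  | .inl p => Y p.1 ⬝ᵥ Y p.2
  | .inr (true, g) => gdet Y g
  | .inr (false, g) => - gdet Y g

open Classical in
/-- The outcome of a test. -/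
noncomputable def tst (Y : ι → Fin (d + 1) → ℝ) (t : Test d ι) : Bool := decide (0 < tval Y t)

lemma tst_eq_iff {Y Y' : ι → Fin (d + 1) → ℝ} {t : Test d ι} :
    tst Y' t = tst Y t ↔ (0 < tval Y' t ↔ 0 < tval Y t) := by
  simp [tst]

variable [Fintype ι] [DecidableEq ι]

/-- The labels mentioning only elements of `X`. -/
def genOn (X : Finset ι) : Finset (Gen d ι) :=
  X.disjSum ((Fintype.piFinset fun _ => X).disjSum Finset.univ)

/-- The tests mentioning only elements of `X`. -/
def testsOn (X : Finset ι) : Finset (Test d ι) :=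
  (X ×ˢ X).disjSum (Finset.univ ×ˢ Fintype.piFinset fun _ => genOn X)

@[simp] lemma inl_mem_genOn {X : Finset ι} {a : ι} : (Sum.inl a : Gen d ι) ∈ genOn X ↔ a ∈ X := by
  simp [genOn]

@[simp] lemma ray_mem_genOn {X : Finset ι} {f : Fin d → ι} :
    (Sum.inr (Sum.inl f) : Gen d ι) ∈ genOn X ↔ ∀ i, f i ∈ X := by
  simp [genOn]

@[simp] lemma std_mem_genOn {X : Finset ι} {c : Fin (d + 1)} :
    (Sum.inr (Sum.inr c) : Gen d ι) ∈ genOn X := by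
  simp [genOn]

@[simp] lemma pair_mem_testsOn {X : Finset ι} {a b : ι} :
    (Sum.inl (a, b) : Test d ι) ∈ testsOn X ↔ a ∈ X ∧ b ∈ X := by
  simp [testsOn]

@[simp] lemma det_mem_testsOn {X : Finset ι} {s : Bool} {g : Fin (d + 1) → Gen d ι} :
    (Sum.inr (s, g) : Test d ι) ∈ testsOn X ↔ ∀ i, g i ∈ genOn X := by
  simp [testsOn]

lemma genOn_mono {X X' : Finset ι} (h : X ⊆ X') : (genOn X : Finset (Gen d ι)) ⊆ genOn X' := by
  rintro (a | f | c) hx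
  · simp only [inl_mem_genOn] at hx ⊢; exact h hx
  · simp only [ray_mem_genOn] at hx ⊢; exact fun i => h (hx i)
  · simp

lemma testsOn_mono {X X' : Finset ι} (h : X ⊆ X') : (testsOn X : Finset (Test d ι)) ⊆ testsOn X' := by
  rintro (⟨a, b⟩ | ⟨s, g⟩) hx
  · simp only [pair_mem_testsOn] at hx ⊢; exact ⟨h hx.1, h hx.2⟩
  · simp only [det_mem_testsOn] at hx ⊢; exact fun i => genOn_mono h (hx i)

lemma card_testsOn (X : Finset ι) : (testsOn X : Finset (Test d ι)).card =
    X.card ^ 2 + 2 * (X.card + (X.card ^ d + (d + 1))) ^ (d + 1) := by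
  simp [testsOn, genOn, Finset.card_disjSum, sq]

/-- `Cert Y X c P`: some `c` tests on `X` have outcomes at `Y` that force the property `P`
for all configurations in general position with these outcomes. -/
def Cert (Y : ι → Fin (d + 1) → ℝ) (X : Finset ι) (c : ℕ)
    (P : (ι → Fin (d + 1) → ℝ) → Prop) : Prop :=
  ∃ Q : Finset (Test d ι), Q ⊆ testsOn X ∧ Q.card ≤ c ∧
    ∀ Y', GP Y' → (∀ t ∈ Q, tst Y' t = tst Y t) → P Y'

variable {Y : ι → Fin (d + 1) → ℝ} {X X' : Finset ι} {c c' : ℕ}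
  {P P' : (ι → Fin (d + 1) → ℝ) → Prop}

lemma Cert.mono (h : Cert Y X c P) (hc : c ≤ c') (hP : ∀ Y', GP Y' → P Y' → P' Y') :
    Cert Y X c' P' := by
  obtain ⟨Q, h1, h2, h3⟩ := h
  exact ⟨Q, h1, h2.trans hc, fun Y' hY' h => hP _ hY' (h3 Y' hY' h)⟩

lemma Cert.mono_set (h : Cert Y X c P) (hX : X ⊆ X') : Cert Y X' c P := by
  obtain ⟨Q, h1, h2⟩ := h
  exact ⟨Q, h1.trans (testsOn_mono hX), h2⟩

lemma Cert.and (h : Cert Y X c P) (h' : Cert Y X c' P') :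
    Cert Y X (c + c') (fun Y' => P Y' ∧ P' Y') := by
  classical
  obtain ⟨Q, h1, h2, h3⟩ := h
  obtain ⟨Q', h1', h2', h3'⟩ := h'
  refine ⟨Q ∪ Q', Finset.union_subset h1 h1', (Finset.card_union_le _ _).trans (by omega), ?_⟩
  intro Y' hY' h
  exact ⟨h3 Y' hY' fun t ht => h t (Finset.mem_union_left _ ht),
    h3' Y' hY' fun t ht => h t (Finset.mem_union_right _ ht)⟩

lemma Cert.triv (h : ∀ Y', GP Y' → P Y') : Cert Y X 0 P :=
  ⟨∅, by simp, by simp, fun Y' hY' _ => h Y' hY'⟩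

lemma Cert.forall {α : Type*} (s : Finset α) (c : α → ℕ) {P : α → (ι → Fin (d + 1) → ℝ) → Prop}
    (h : ∀ a ∈ s, Cert Y X (c a) (P a)) : Cert Y X (∑ a ∈ s, c a) (fun Y' => ∀ a ∈ s, P a Y') := by
  classical
  induction s using Finset.induction_on with
  | empty => exact Cert.triv (by simp)
  | insert a s ha ih =>
    rw [Finset.sum_insert ha]
    refine ((h a (Finset.mem_insert_self _ _)).and
      (ih fun b hb => h b (Finset.mem_insert_of_mem hb))).mono le_rfl ?_
    rintro Y' - ⟨h1, h2⟩ b hb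
    rcases Finset.mem_insert.1 hb with rfl | hb
    · exact h1
    · exact h2 b hb

lemma Cert.forall_const {α : Type*} (s : Finset α) (c : ℕ) {P : α → (ι → Fin (d + 1) → ℝ) → Prop}
    (h : ∀ a ∈ s, Cert Y X c (P a)) : Cert Y X (s.card * c) (fun Y' => ∀ a ∈ s, P a Y') := by
  simpa using Cert.forall s (fun _ => c) h

lemma Cert.test {t : Test d ι} (ht : t ∈ testsOn X) :
    Cert Y X 1 (fun Y' => 0 < tval Y' t ↔ 0 < tval Y t) :=
  ⟨{t}, by simpa using ht, by simp, fun Y' _ h => tst_eq_iff.1 (h t (Finset.mem_singleton_self t))⟩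

lemma Cert.pair {a b : ι} (ha : a ∈ X) (hb : b ∈ X) :
    Cert Y X 1 (fun Y' => 0 < Y' a ⬝ᵥ Y' b ↔ 0 < Y a ⬝ᵥ Y b) :=
  Cert.test (t := Sum.inl (a, b)) (by simp [ha, hb])

/-- The determinant test deciding `Conf Y f v`. -/
def confTest (f : Fin d → ι) (v : ι) : Test d ι :=
  Sum.inr (true, fun i => Sum.inl ((Fin.cons v f : Fin (d + 1) → ι) i))

lemma tval_confTest (f : Fin d → ι) (v : ι) : tval Y (confTest f v) = Y v ⬝ᵥ ray Y f := by
  rw [dot_ray]; rfl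

lemma confTest_mem {f : Fin d → ι} {v : ι} (hf : ∀ i, f i ∈ X) (hv : v ∈ X) :
    confTest f v ∈ testsOn X := by
  simp only [confTest, det_mem_testsOn, inl_mem_genOn]
  intro i
  refine Fin.cases ?_ (fun j => ?_) i
  · simpa using hv
  · simpa using hf j

lemma tst_confTest {f : Fin d → ι} {v : ι} : tst Y (confTest f v) = true ↔ Conf Y f v := by
  simp only [tst, decide_eq_true_eq, tval_confTest, Conf]

lemma Cert.conf {f : Fin d → ι} {v : ι} (hf : ∀ i, f i ∈ X) (hv : v ∈ X) :
    Cert Y X 1 (fun Y' => Conf Y' f v ↔ Conf Y f v) := by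
  have := Cert.test (Y := Y) (confTest_mem hf hv)
  simp only [tval_confTest] at this
  exact this

lemma Cert.sign {g : Fin (d + 1) → Gen d ι} (hg : ∀ i, g i ∈ genOn X) :
    Cert Y X 2 (fun Y' => (0 < gdet Y' g ↔ 0 < gdet Y g) ∧ (gdet Y' g < 0 ↔ gdet Y g < 0)) := by
  have h1 := Cert.test (Y := Y) (t := Sum.inr (true, g)) (by simpa using hg)
  have h2 := Cert.test (Y := Y) (t := Sum.inr (false, g)) (by simpa using hg)
  simpa [tval] using h1.and h2

/-- Cramer's rule. -/
lemma gdet_update {g : Fin (d + 1) → Gen d ι} {z : Gen d ι} {γ : Fin (d + 1) → ℝ}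
    (h : vec Y z = ∑ j, γ j • vec Y (g j)) (i : Fin (d + 1)) :
    gdet Y (Function.update g i z) = γ i * gdet Y g := by
  have := Matrix.det_updateRow_sum (Matrix.of fun i => vec Y (g i)) i γ
  rw [smul_eq_mul] at this
  unfold gdet
  rw [← this]
  congr 1
  ext a b
  by_cases ha : a = i
  · subst ha; simp only [Matrix.of_apply, Function.update_self, Matrix.updateRow_self, h]
    simp [Finset.sum_apply]
  · simp [Matrix.updateRow_ne ha, Function.update_of_ne ha]

lemma exists_comb_of_gdet {g : Fin (d + 1) → Gen d ι} (hg : gdet Y g ≠ 0)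
    (z : Fin (d + 1) → ℝ) : ∃ γ : Fin (d + 1) → ℝ, z = ∑ i, γ i • vec Y (g i) := by
  have hu : IsUnit (Matrix.of fun i => vec Y (g i)).det := hg.isUnit
  refine ⟨z ᵥ* (Matrix.of fun i => vec Y (g i))⁻¹, ?_⟩
  have : (z ᵥ* (Matrix.of fun i => vec Y (g i))⁻¹) ᵥ* (Matrix.of fun i => vec Y (g i)) = z := by
    rw [Matrix.vecMul_vecMul, Matrix.nonsing_inv_mul _ hu, Matrix.vecMul_one]
  conv_lhs => rw [← this]
  ext j
  simp [Matrix.vecMul, dotProduct, Finset.sum_apply]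

/-- A vector in the cone of `G` has nonnegative coordinates in some basis made of members of
`G` and standard basis vectors, the latter with zero coordinates. -/
lemma exists_basis {G : Finset (Gen d ι)} {z : Fin (d + 1) → ℝ} (h : InCone (vec Y) G z) :
    ∃ (g : Fin (d + 1) → Gen d ι) (γ : Fin (d + 1) → ℝ), gdet Y g ≠ 0 ∧
      (∀ i, g i ∈ G ∨ ∃ c, g i = Sum.inr (Sum.inr c)) ∧ (∀ i, 0 ≤ γ i) ∧
      (∀ i, γ i ≠ 0 → g i ∈ G) ∧ z = ∑ i, γ i • vec Y (g i) := by
  classical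
  obtain ⟨S, hSG, hS, c, hc, hz⟩ := h.exists_indep
  let St : Set (Gen d ι) := Set.range fun c : Fin (d + 1) => Sum.inr (Sum.inr c)
  obtain ⟨b, hbt, hSb, hspan, hb⟩ := exists_linearIndepOn_extension hS
    (Set.subset_union_left (t := St))
  have htop : Submodule.span ℝ (vec Y '' b) = ⊤ := by
    rw [eq_top_iff, ← (Pi.basisFun ℝ (Fin (d + 1))).span_eq, Submodule.span_le]
    rintro _ ⟨i, rfl⟩
    refine hspan ⟨Sum.inr (Sum.inr i), Or.inr ⟨i, rfl⟩, ?_⟩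
    simp [vec]
  have hfin : Fintype b := Fintype.ofFinite b
  have hcard : Fintype.card b = d + 1 := by
    have h1 : Module.finrank ℝ (Submodule.span ℝ (Set.range fun x : b => vec Y x)) = Fintype.card b :=
      finrank_span_eq_card hb
    have h2 : (Set.range fun x : b => vec Y x) = vec Y '' b := by
      ext; simp
    rw [h2, htop, finrank_top] at h1
    simpa using h1.symm
  let e : Fin (d + 1) ≃ b := (Fintype.equivFinOfCardEq hcard).symm
  refine ⟨fun i => (e i : Gen d ι), fun i => if (e i : Gen d ι) ∈ S then c (e i) else 0, ?_,
    fun i => ?_, fun i => ?_, fun i hi => ?_, ?_⟩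
  · have h1 : LinearIndependent ℝ (Matrix.of fun i => vec Y (e i : Gen d ι)).row := by
      have := LinearIndependent.comp hb e e.injective
      exact this
    rw [Matrix.linearIndependent_rows_iff_isUnit, Matrix.isUnit_iff_isUnit_det] at h1
    exact h1.ne_zero
  · rcases hbt (e i).2 with h | ⟨c, hc⟩
    · exact Or.inl (hSG h)
    · exact Or.inr ⟨c, hc.symm⟩
  · dsimp only; split_ifs with h
    · exact hc _ h
    · exact le_rfl
  · dsimp only at hi; split_ifs at hi with h
    · exact hSG h
    · exact (hi rfl).elim
  · rw [hz]
    have h1 : ∑ i, (if (e i : Gen d ι) ∈ S then c (e i) else 0) • vec Y (e i : Gen d ι) =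
        ∑ x : b, (if (x : Gen d ι) ∈ S then c x else 0) • vec Y (x : Gen d ι) :=
      Equiv.sum_comp e (fun x : b => (if (x : Gen d ι) ∈ S then c x else 0) • vec Y (x : Gen d ι))
    rw [h1, ← Finset.sum_coe_sort S]
    symm
    have hinj : Function.Injective (fun x : S => (⟨x, hSb x.2⟩ : b)) := fun x y h => by
      have h' := congrArg Subtype.val h
      exact Subtype.ext h'
    rw [← Finset.sum_subset (Finset.subset_univ (Finset.univ.image fun x : S => (⟨x, hSb x.2⟩ : b)))]
    · rw [Finset.sum_image fun x _ y _ h => hinj h]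
      exact Finset.sum_congr rfl fun x _ => by simp
    · intro x _ hx
      have : (x : Gen d ι) ∉ S := fun h => hx (Finset.mem_image.2 ⟨⟨x, h⟩, by simp, rfl⟩)
      rw [if_neg this, zero_smul]

/-- Membership of a labelled vector in the cone of labelled vectors has a certificate of
constant size, by Cramer's rule. -/
theorem Cert.cone {G : Finset (Gen d ι)} {z : Gen d ι} (hG : G ⊆ genOn X) (hz : z ∈ genOn X)
    (h : InCone (vec Y) G (vec Y z)) :
    Cert Y X (2 * d + 4) (fun Y' => InCone (vec Y') G (vec Y' z)) := by
  classical
  obtain ⟨g, γ, hdet, hgG, hγ, hγG, hzγ⟩ := exists_basis h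
  have hgX : ∀ i, g i ∈ genOn X := fun i => by
    rcases hgG i with h | ⟨c, hc⟩
    · exact hG h
    · rw [hc]; simp
  have h1 := Cert.sign (Y := Y) hgX
  have h2 := Cert.forall_const (Y := Y) (X := X) (Finset.univ : Finset (Fin (d + 1))) 2
    (P := fun i Y' => (0 < gdet Y' (Function.update g i z) ↔ 0 < gdet Y (Function.update g i z)) ∧
      (gdet Y' (Function.update g i z) < 0 ↔ gdet Y (Function.update g i z) < 0))
    (fun i _ => Cert.sign fun j => by
      by_cases hj : j = i
      · subst hj; simpa using hz
      · rw [Function.update_of_ne hj]; exact hgX j)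
  refine (h1.and h2).mono (by simp; omega) ?_
  rintro Y' - ⟨⟨hp, hn⟩, hu⟩
  have hdet' : gdet Y' g ≠ 0 := by
    rcases lt_or_gt_of_ne hdet with h | h
    · exact (hn.2 h).ne
    · exact (hp.2 h).ne'
  obtain ⟨γ', hγ'⟩ := exists_comb_of_gdet hdet' (vec Y' z)
  have hkey : ∀ i, 0 ≤ γ' i ∧ (γ' i ≠ 0 → γ i ≠ 0) := by
    intro i
    obtain ⟨hu1, hu2⟩ := hu i (Finset.mem_univ i)
    rw [gdet_update hzγ, gdet_update hγ'] at hu1 hu2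
    have h0 := hγ i
    rcases lt_or_gt_of_ne hdet with hd | hd
    · have hd' := hn.2 hd
      constructor
      · by_contra hcon
        push Not at hcon
        have := hu1.1 (mul_pos_of_neg_of_neg hcon hd')
        nlinarith
      · intro h1 h2
        rw [h2, zero_mul] at hu1 hu2
        rcases lt_or_gt_of_ne h1 with h | h
        · exact absurd (hu1.1 (mul_pos_of_neg_of_neg h hd')) (lt_irrefl _)
        · exact absurd (hu2.1 (mul_neg_of_pos_of_neg h hd')) (lt_irrefl _)
    · have hd' := hp.2 hd
      constructor
      · by_contra hcon
        push Not at hcon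
        have := hu2.1 (mul_neg_of_neg_of_pos hcon hd')
        nlinarith
      · intro h1 h2
        rw [h2, zero_mul] at hu1 hu2
        rcases lt_or_gt_of_ne h1 with h | h
        · exact absurd (hu2.1 (mul_neg_of_neg_of_pos h hd')) (lt_irrefl _)
        · exact absurd (hu1.1 (mul_pos h hd')) (lt_irrefl _)
  refine ⟨fun x => ∑ i, if g i = x then γ' i else 0, fun x _ => Finset.sum_nonneg fun i _ => ?_, ?_⟩
  · split_ifs
    · exact (hkey i).1
    · exact le_rfl
  · rw [hγ']
    simp only [Finset.sum_smul, ite_smul, zero_smul]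
    rw [Finset.sum_comm]
    refine Finset.sum_congr rfl fun i _ => ?_
    rw [Finset.sum_ite_eq]
    split_ifs with h
    · rfl
    · have : γ' i = 0 := by
        by_contra hcon
        exact h (hγG i ((hkey i).2 hcon))
      rw [this, zero_smul]

lemma InCone.dot_nonpos {κ : Type*} {v : κ → Fin (d + 1) → ℝ} {G : Finset κ}
    {z w : Fin (d + 1) → ℝ} (h : InCone v G z) (hw : ∀ g ∈ G, w ⬝ᵥ v g ≤ 0) : w ⬝ᵥ z ≤ 0 := by
  obtain ⟨c, hc, hz⟩ := h
  rw [hz, dotProduct_sum]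
  refine Finset.sum_nonpos fun g hg => ?_
  rw [dotProduct_smul, smul_eq_mul]
  exact mul_nonpos_of_nonneg_of_nonpos (hc g hg) (hw g hg)

end Hopcroft

/-! ### Certifying extreme rays -/

namespace Hopcroft

open Matrix

set_option linter.unusedSectionVars false

variable {d : ℕ} {ι : Type*} [Fintype ι] [DecidableEq ι]
  {Y : ι → Fin (d + 1) → ℝ} {X : Finset ι}

/-- All extreme rays of the polar cone of `R` at `Y` are extreme rays at `Y'`. -/
def Valid (Y : ι → Fin (d + 1) → ℝ) (R : Finset ι) (Y' : ι → Fin (d + 1) → ℝ) : Prop :=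
  ∀ f ∈ rays Y R, f ∈ rays Y' R

/-- The labels of the extreme rays. -/
noncomputable def rayGens (F : Finset (Fin d → ι)) : Finset (Gen d ι) :=
  F.image fun f => Sum.inr (Sum.inl f)

lemma rayGens_subset {R : Finset ι} {F : Finset (Fin d → ι)} (hF : F ⊆ rays Y R) (hR : R ⊆ X) :
    rayGens F ⊆ genOn X := by
  intro g hg
  obtain ⟨f, hf, rfl⟩ := Finset.mem_image.1 hg
  rw [ray_mem_genOn]
  exact fun i => hR ((mem_rays.1 (hF hf)).2.1 i)

lemma GP.inCone_rays (hd : 2 ≤ d) (hY : GP Y) {R : Finset ι} (hR : d + 1 ≤ R.card)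
    {x : Fin (d + 1) → ℝ} (hx : ∀ a ∈ R, Y a ⬝ᵥ x ≤ 0) : InCone (vec Y) (rayGens (rays Y R)) x := by
  obtain ⟨c, hc, hxc⟩ := hY.exists_cone hd hR hx
  refine ⟨fun g => match g with
    | .inr (.inl f) => c f
    | _ => 0, fun g hg => ?_, ?_⟩
  · obtain ⟨f, hf, rfl⟩ := Finset.mem_image.1 hg
    exact hc f
  · rw [rayGens, Finset.sum_image (fun a _ b _ h => by simpa using h)]
    exact hxc

lemma GP.conf_congr (hY : GP Y) {R : Finset ι} (hR : d + 1 ≤ R.card) {f f' : Fin d → ι}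
    (hf : f ∈ rays Y R) (hf' : f' ∈ rays Y R) (h : Set.range f = Set.range f') {v : ι}
    (hv : Conf Y f v) : Conf Y f' v := by
  obtain ⟨u, huR, hu⟩ := exists_notMem_range hR f
  have h1 := hY.eq_smul_ray (mem_rays.1 hf).1 hu (x := ray Y f') (fun i =>
    dot_ray_of_mem Y f' (h ▸ ⟨i, rfl⟩))
  have h2 := rays_neg hY hf huR hu
  have h3 := rays_neg hY hf' huR (h ▸ hu)
  unfold Conf at *
  rw [h1, dotProduct_smul, smul_eq_mul]
  exact mul_pos (div_pos_of_neg_of_neg h3 h2) hv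

open Classical in
/-- The extreme rays of the polar cone of `R` in conflict with `v`. -/
noncomputable def confRays (Y : ι → Fin (d + 1) → ℝ) (R : Finset ι) (v : ι) :
    Finset (Fin d → ι) := (rays Y R).filter fun f => Conf Y f v

/-- Once the extreme rays are known to be valid, few tests certify that no further ray gets in
conflict with `v`. -/
theorem GP.cert_conflict (hd : 2 ≤ d) (hY : GP Y) {R : Finset ι} (hR : d + 1 ≤ R.card)
    (hRX : R ⊆ X) {v : ι} (hv : v ∈ X) :
    Cert Y X ((2 * d + 4) + (d + 1) * (confRays Y R v).card) (fun Y' => Valid Y R Y' →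
      ∀ f ∈ rays Y R, Conf Y' f v → Conf Y f v) := by
  classical
  set K := confRays Y R v with hK
  rcases (rays Y R).eq_empty_or_nonempty with h0 | h0
  · exact (Cert.triv (fun Y' _ => by simp [h0])).mono (Nat.zero_le _) (fun _ _ h => h)
  rcases K.eq_empty_or_nonempty with hK0 | hK0
  · have hno : ∀ f ∈ rays Y R, ¬ Conf Y f v := fun f hf hc => by
      have : f ∈ K := Finset.mem_filter.2 ⟨hf, hc⟩
      simp [hK0] at this
    obtain ⟨c, hc, hvc⟩ := hY.farkas hd hR h0 hno
    have hG : R.image (Sum.inl : ι → Gen d ι) ⊆ genOn X := by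
      intro g hg
      obtain ⟨a, ha, rfl⟩ := Finset.mem_image.1 hg
      simpa using hRX ha
    have hin : InCone (vec Y) (R.image (Sum.inl : ι → Gen d ι)) (vec Y (Sum.inl v)) := by
      refine ⟨fun g => match g with
        | .inl a => c a
        | _ => 0, fun g hg => ?_, ?_⟩
      · obtain ⟨a, ha, rfl⟩ := Finset.mem_image.1 hg
        exact hc a
      · rw [Finset.sum_image (fun a _ b _ h => by simpa using h)]
        exact hvc
    refine (Cert.cone hG (by simpa using hv) hin).mono (by omega) ?_
    intro Y' _ h hval f hf hconf
    exfalso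
    have : ray Y' f ⬝ᵥ vec Y' (Sum.inl v) ≤ 0 := h.dot_nonpos fun g hg => by
      obtain ⟨a, ha, rfl⟩ := Finset.mem_image.1 hg
      rw [dotProduct_comm]; exact rays_nonpos (hval f hf) ha
    rw [dotProduct_comm] at this
    exact not_lt.2 this hconf
  · have hKr : ∀ f ∈ K, f ∈ rays Y R := fun f hf => (Finset.mem_filter.1 hf).1
    have hKc : ∀ f ∈ K, Conf Y f v := fun f hf => (Finset.mem_filter.1 hf).2
    have hnb : ∀ f ∈ K, ∀ i, ∃ f' ∈ rays Y R, IsNbr f i f' := fun f hf i =>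
      hY.exists_nbr hd hR (hKr f hf) i
    choose! nb hnbR hnbI using hnb
    have hX : ∀ f ∈ rays Y R, ∀ i, f i ∈ X := fun f hf i => hRX ((mem_rays.1 hf).2.1 i)
    have h1 := Cert.forall_const (Y := Y) (X := X) K (1 + d * 1)
      (P := fun f Y' => (Conf Y' f v ↔ Conf Y f v) ∧
        ∀ i ∈ (Finset.univ : Finset (Fin d)), (Conf Y' (nb f i) v ↔ Conf Y (nb f i) v))
      (fun f hf => by
        have h2 := Cert.forall_const (Y := Y) (X := X) (Finset.univ : Finset (Fin d)) 1
          (P := fun i Y' => (Conf Y' (nb f i) v ↔ Conf Y (nb f i) v))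
          (fun i _ => Cert.conf (hX _ (hnbR f hf i)) hv)
        simpa using (Cert.conf (hX _ (hKr f hf)) hv).and h2)
    refine h1.mono (by nlinarith) ?_
    intro Y' hY' h hval f hf hconf
    have := hY'.closure hR (K := K) (W := rays Y R) hval (Finset.filter_subset _ _) hK0
      (fun g hg g' hg' hgg => Finset.mem_filter.2 ⟨hg', hY.conf_congr hR (hKr g hg) hg' hgg (hKc g hg)⟩)
      (v := v) (fun g hg => ((h g hg).1).2 (hKc g hg))
      (fun g hg i => ⟨nb g i, hnbR g hg i, hnbI g hg i, by
        by_cases hc : Conf Y (nb g i) v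
        · exact Or.inl (Finset.mem_filter.2 ⟨hnbR g hg i, hc⟩)
        · exact Or.inr fun hc' => hc (((h g hg).2 i (Finset.mem_univ i)).1 hc')⟩) f hf hconf
    exact hKc f this

lemma rays_mono_nonempty (hd : 2 ≤ d) (hY : GP Y) {V : Finset ι} {v : ι}
    (hV : d + 1 ≤ (V.erase v).card) (h : (rays Y V).Nonempty) : (rays Y (V.erase v)).Nonempty := by
  obtain ⟨f, hf⟩ := h
  by_contra hcon
  rw [Finset.not_nonempty_iff_eq_empty] at hcon
  obtain ⟨c, -, hc⟩ := hY.exists_cone hd hV (x := ray Y f) (fun a ha =>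
    rays_nonpos hf (Finset.mem_of_mem_erase ha))
  rw [hcon, Finset.sum_empty] at hc
  obtain ⟨u, -, hu⟩ := exists_notMem_range hV f
  exact hY.dot_ray_ne (mem_rays.1 hf).1 hu (by rw [hc, dotProduct_zero])

open Classical in
/-- The extreme rays whose tuple contains `v`. -/
noncomputable def raysAt (Y : ι → Fin (d + 1) → ℝ) (V : Finset ι) (v : ι) :
    Finset (Fin d → ι) := (rays Y V).filter fun f => v ∈ Set.range f

lemma sum_card_raysAt (V : Finset ι) : ∑ v ∈ V, (raysAt Y V v).card = d * (rays Y V).card := by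
  classical
  have h1 : ∀ v, (raysAt Y V v).card = ∑ f ∈ rays Y V, if v ∈ Set.range f then 1 else 0 := fun v => by
    rw [raysAt, Finset.card_filter]
  simp only [h1]
  rw [Finset.sum_comm]
  have h2 : ∀ f ∈ rays Y V, (∑ v ∈ V, if v ∈ Set.range f then 1 else 0) = d := fun f hf => by
    rw [← Finset.card_filter]
    have : V.filter (fun v => v ∈ Set.range f) = Finset.univ.image f := by
      ext a
      simp only [Finset.mem_filter, Set.mem_range, Finset.mem_image, Finset.mem_univ, true_and]
      constructor
      · exact fun h => h.2
      · rintro ⟨i, rfl⟩; exact ⟨(mem_rays.1 hf).2.1 i, i, rfl⟩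
    rw [this, Finset.card_image_of_injective _ (mem_rays.1 hf).1]; simp
  rw [Finset.sum_congr rfl h2]
  simp [mul_comm]

lemma rays_insert_split {V : Finset ι} {v : ι} (hv : v ∈ V) :
    (rays Y V).card + (confRays Y (V.erase v) v).card =
      (rays Y (V.erase v)).card + (raysAt Y V v).card := by
  classical
  have h1 : (rays Y V).filter (fun f => ¬ v ∈ Set.range f) =
      (rays Y (V.erase v)).filter (fun f => ¬ Conf Y f v) := by
    ext f
    simp only [Finset.mem_filter, mem_rays, Set.mem_range, not_exists, Finset.mem_erase]
    constructor
    · rintro ⟨⟨h1, h2, h3⟩, h4⟩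
      exact ⟨⟨h1, fun i => ⟨h4 i, h2 i⟩, fun u hu => h3 u hu.2⟩, h3 v hv⟩
    · rintro ⟨⟨h1, h2, h3⟩, h4⟩
      refine ⟨⟨h1, fun i => (h2 i).2, fun u hu => ?_⟩, fun i => (h2 i).1⟩
      by_cases huv : u = v
      · rwa [huv]
      · exact h3 u ⟨huv, hu⟩
  have h2 := Finset.card_filter_add_card_filter_not (s := rays Y V) (fun f => v ∈ Set.range f)
  have h3 := Finset.card_filter_add_card_filter_not (s := rays Y (V.erase v)) (fun f => Conf Y f v)
  rw [h1] at h2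
  unfold confRays raysAt
  omega

/-- One incremental step in certifying the extreme rays. -/
lemma GP.cert_valid_step (hd : 2 ≤ d) (hY : GP Y) {V : Finset ι} (hVX : V ⊆ X) {v : ι} (hv : v ∈ V)
    (hV : d + 1 ≤ (V.erase v).card) {c : ℕ} (h : Cert Y X c (Valid Y (V.erase v))) :
    Cert Y X (c + ((2 * d + 4) + (d + 1) * (confRays Y (V.erase v) v).card) +
      (raysAt Y V v).card * (2 * d + 4)) (Valid Y V) := by
  classical
  have hV'X : V.erase v ⊆ X := (Finset.erase_subset _ _).trans hVX
  have h2 := hY.cert_conflict hd hV hV'X (hVX hv)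
  have h3 := Cert.forall_const (Y := Y) (X := X) (raysAt Y V v) (2 * d + 4)
    (P := fun f Y' => InCone (vec Y') (rayGens (rays Y (V.erase v))) (vec Y' (Sum.inr (Sum.inl f))))
    (fun f hf => by
      have hf' := (Finset.mem_filter.1 hf).1
      refine Cert.cone (rayGens_subset subset_rfl hV'X) ?_ ?_
      · rw [ray_mem_genOn]; exact fun i => hVX ((mem_rays.1 hf').2.1 i)
      · exact hY.inCone_rays hd hV fun a ha => rays_nonpos hf' (Finset.mem_of_mem_erase ha))
  refine ((h.and h2).and h3).mono le_rfl ?_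
  rintro Y' hY' ⟨⟨hval, hconf⟩, hcone⟩ f hf
  obtain ⟨hinj, hfV, hfc⟩ := mem_rays.1 hf
  refine mem_rays.2 ⟨hinj, hfV, fun u hu hc => ?_⟩
  by_cases hvf : v ∈ Set.range f
  · by_cases huv : u = v
    · subst huv
      unfold Conf at hc
      rw [dot_ray_of_mem Y' f hvf] at hc
      exact lt_irrefl _ hc
    · have := (hcone f (Finset.mem_filter.2 ⟨hf, hvf⟩)).dot_nonpos (w := Y' u) fun g hg => by
        obtain ⟨f', hf', rfl⟩ := Finset.mem_image.1 hg
        exact rays_nonpos (hval f' hf') (Finset.mem_erase.2 ⟨huv, hu⟩)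
      exact not_lt.2 this hc
  · have hf' : f ∈ rays Y (V.erase v) := mem_rays.2 ⟨hinj, fun i => Finset.mem_erase.2
      ⟨fun h => hvf ⟨i, h⟩, hfV i⟩, fun u hu => hfc u (Finset.mem_of_mem_erase hu)⟩
    by_cases huv : u = v
    · subst huv
      exact hfc u hu (hconf hval f hf' hc)
    · exact (mem_rays.1 (hval f hf')).2.2 u (Finset.mem_erase.2 ⟨huv, hu⟩) hc

/-- Average number of extreme rays per element, up to the factor `|V|^(⌊d/2⌋-1)`. -/
def avgConst (d : ℕ) : ℕ := d * (4 * d ^ d) * 2 ^ (d / 2)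

/-- The constant in the certificate size for extreme rays. -/
def validConst (d : ℕ) : ℕ := (2 * d + 4) + (3 * d + 5) * avgConst d + 2 * (d + 1) ^ (d + 1)

lemma GP.exists_light (hd : 2 ≤ d) (hY : GP Y) {V : Finset ι} (hV : V.Nonempty) :
    ∃ v ∈ V, (raysAt Y V v).card ≤ avgConst d * V.card ^ (d / 2 - 1) := by
  by_contra hcon
  push Not at hcon
  have h1 := Finset.sum_lt_sum_of_nonempty hV hcon
  rw [sum_card_raysAt, Finset.sum_const, smul_eq_mul] at h1
  have h2 := hY.card_rays_le V
  have hpos : 1 ≤ V.card := hV.card_pos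
  have h3 : (V.card + 1) ^ (d / 2) ≤ 2 ^ (d / 2) * V.card ^ (d / 2) := by
    rw [← mul_pow]; exact Nat.pow_le_pow_left (by omega) _
  have h4 : V.card * V.card ^ (d / 2 - 1) = V.card ^ (d / 2) := by
    rw [← pow_succ']; congr 1; omega
  have h5 : d * (rays Y V).card ≤ d * (4 * d ^ d * (2 ^ (d / 2) * V.card ^ (d / 2))) := by gcongr; exact h2.trans (by gcongr)
  have h6 : V.card * (avgConst d * V.card ^ (d / 2 - 1)) = d * (4 * d ^ d * (2 ^ (d / 2) * V.card ^ (d / 2))) := by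
    rw [← h4]; unfold avgConst; ring
  omega

/-- The extreme rays of the polar cone of `V` have a certificate of size `O(|V|^⌊d/2⌋)`. -/
theorem GP.cert_valid (hd : 2 ≤ d) (hY : GP Y) {V : Finset ι} (hVX : V ⊆ X) (hV : d + 1 ≤ V.card) :
    Cert Y X (validConst d * V.card ^ (d / 2)) (Valid Y V) := by
  classical
  suffices h : ∀ n, ∀ V : Finset ι, V ⊆ X → V.card = d + 1 + n → ∃ c,
      c + (d + 1) * (rays Y V).card ≤ validConst d * V.card ^ (d / 2) ∧ Cert Y X c (Valid Y V) by
    obtain ⟨c, hc, h⟩ := h (V.card - (d + 1)) V hVX (by omega)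
    exact h.mono (by omega) fun _ _ h => h
  intro n
  induction n with
  | zero =>
    intro V hVX hV
    have h1 := Cert.forall_const (Y := Y) (X := X) (rays Y V) ((d + 1) * 1)
      (P := fun f Y' => ∀ v ∈ V, (Conf Y' f v ↔ Conf Y f v))
      (fun f hf => by
        have := Cert.forall_const (Y := Y) (X := X) V 1
          (P := fun v Y' => (Conf Y' f v ↔ Conf Y f v))
          (fun v hv => Cert.conf (fun i => hVX ((mem_rays.1 hf).2.1 i)) (hVX hv))
        rwa [hV] at this)
    refine ⟨_, ?_, h1.mono le_rfl fun Y' _ h f hf => mem_rays.2 ⟨(mem_rays.1 hf).1,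
      (mem_rays.1 hf).2.1, fun v hv hc => (mem_rays.1 hf).2.2 v hv ((h f hf v hv).1 hc)⟩⟩
    have h2 : (rays Y V).card ≤ (d + 1) ^ d := by
      have : rays Y V ⊆ Fintype.piFinset fun _ : Fin d => V := fun f hf =>
        Fintype.mem_piFinset.2 (mem_rays.1 hf).2.1
      have := Finset.card_le_card this
      rw [Fintype.card_piFinset_const, hV] at this
      exact this
    have h3 : 1 ≤ V.card ^ (d / 2) := Nat.one_le_pow _ _ (by omega)
    have h4 : 2 * (d + 1) ^ (d + 1) ≤ validConst d := by unfold validConst; omega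
    calc _ = 2 * (d + 1) * (rays Y V).card := by ring
      _ ≤ 2 * (d + 1) * (d + 1) ^ d := by gcongr
      _ = 2 * (d + 1) ^ (d + 1) * 1 := by ring
      _ ≤ _ := by gcongr
  | succ n ih =>
    intro V hVX hV
    obtain ⟨v, hv, hlight⟩ := hY.exists_light hd (V := V) (Finset.card_pos.1 (by omega))
    have hcard : (V.erase v).card = d + 1 + n := by rw [Finset.card_erase_of_mem hv]; omega
    obtain ⟨c, hc, hcert⟩ := ih (V.erase v) ((Finset.erase_subset _ _).trans hVX) hcard
    refine ⟨_, ?_, hY.cert_valid_step hd hVX hv (by omega) hcert⟩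
    have hsplit := rays_insert_split (Y := Y) hv
    set N := (raysAt Y V v).card
    set m := V.card with hm
    have hm1 : (V.erase v).card = m - 1 := by omega
    rw [hm1] at hc
    have hpow : (m - 1) ^ (d / 2) + m ^ (d / 2 - 1) ≤ m ^ (d / 2) := by
      have e1 : d / 2 = (d / 2 - 1) + 1 := by omega
      have : (m - 1) ^ (d / 2) ≤ (m - 1) * m ^ (d / 2 - 1) := by
        conv_lhs => rw [e1, pow_succ']
        gcongr; omega
      have h2 : m ^ (d / 2) = m * m ^ (d / 2 - 1) := by
        conv_lhs => rw [e1, pow_succ']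
      have h3 : m = (m - 1) + 1 := by omega
      calc _ ≤ (m - 1) * m ^ (d / 2 - 1) + m ^ (d / 2 - 1) := by gcongr
        _ = ((m - 1) + 1) * m ^ (d / 2 - 1) := by ring
        _ = _ := by rw [← h3, h2]
    have hone : 1 ≤ m ^ (d / 2 - 1) := Nat.one_le_pow _ _ (by omega)
    have hC : (2 * d + 4) + (3 * d + 5) * N ≤ validConst d * m ^ (d / 2 - 1) := by
      calc (2 * d + 4) + (3 * d + 5) * N ≤ (2 * d + 4) * m ^ (d / 2 - 1) +
            (3 * d + 5) * (avgConst d * m ^ (d / 2 - 1)) := by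
            gcongr
            exact Nat.le_mul_of_pos_right _ hone
        _ = ((2 * d + 4) + (3 * d + 5) * avgConst d) * m ^ (d / 2 - 1) := by ring
        _ ≤ _ := by gcongr; unfold validConst; omega
    have hfin : validConst d * (m - 1) ^ (d / 2) + validConst d * m ^ (d / 2 - 1) ≤
        validConst d * m ^ (d / 2) := by
      rw [← mul_add]; gcongr
    have hs2 : (d + 1) * (rays Y V).card + (d + 1) * (confRays Y (V.erase v) v).card =
      (d + 1) * (rays Y (V.erase v)).card + (d + 1) * N := by rw [← mul_add, hsplit, mul_add]
    have e3 : N * (2 * d + 4) + (d + 1) * N = (3 * d + 5) * N := by ring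
    omega

/-- A bichromatic family without positive pair has a certificate of size
`O(|Z| + |V|^⌊d/2⌋)`. -/
theorem GP.cert_nonpos (hd : 2 ≤ d) (hY : GP Y) {Z V : Finset ι} (hZX : Z ⊆ X) (hVX : V ⊆ X)
    (h : ∀ z ∈ Z, ∀ v ∈ V, Y v ⬝ᵥ Y z ≤ 0) :
    Cert Y X ((2 * d + 4) * Z.card + validConst d * V.card ^ (d / 2))
      (fun Y' => ∀ z ∈ Z, ∀ v ∈ V, Y' v ⬝ᵥ Y' z ≤ 0) := by
  classical
  by_cases hV : d + 1 ≤ V.card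
  · have h1 := hY.cert_valid hd hVX hV
    have h2 := Cert.forall_const (Y := Y) (X := X) Z (2 * d + 4)
      (P := fun z Y' => InCone (vec Y') (rayGens (rays Y V)) (vec Y' (Sum.inl z)))
      (fun z hz => Cert.cone (rayGens_subset subset_rfl hVX) (by simpa using hZX hz)
        (hY.inCone_rays hd hV fun a ha => h z hz a ha))
    refine (h2.and h1).mono (by rw [mul_comm]) ?_
    rintro Y' _ ⟨hcone, hval⟩ z hz v hv
    refine (hcone z hz).dot_nonpos fun g hg => ?_
    obtain ⟨f, hf, rfl⟩ := Finset.mem_image.1 hg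
    exact rays_nonpos (hval f hf) hv
  · have h1 := Cert.forall_const (Y := Y) (X := X) Z (V.card * 1)
      (P := fun z Y' => ∀ v ∈ V, (0 < Y' v ⬝ᵥ Y' z ↔ 0 < Y v ⬝ᵥ Y z))
      (fun z hz => Cert.forall_const V 1 fun v hv => Cert.pair (hVX hv) (hZX hz))
    refine h1.mono ?_ fun Y' _ h' z hz v hv => not_lt.1 fun hlt =>
      not_lt.2 (h z hz v hv) ((h' z hz v hv).1 hlt)
    calc Z.card * (V.card * 1) ≤ Z.card * (2 * d + 4) := by gcongr; omega
      _ = (2 * d + 4) * Z.card := mul_comm _ _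
      _ ≤ _ := Nat.le_add_right _ _

end Hopcroft

/-! ### Random sampling -/

namespace Hopcroft

open Matrix

set_option linter.unusedSectionVars false

/-- Probability that the sample of `V` with density `p` equals `R`. -/
noncomputable def wt {ι : Type*} (p : ℝ) (V R : Finset ι) : ℝ :=
  p ^ R.card * (1 - p) ^ (V.card - R.card)

/-- Expectation of `g` over a sample of `V` with density `p`. -/
noncomputable def expect {ι : Type*} (p : ℝ) (V : Finset ι) (g : Finset ι → ℝ) : ℝ :=
  ∑ R ∈ V.powerset, wt p V R * g R

section

variable {ι : Type*} {p : ℝ} {V : Finset ι}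

lemma wt_nonneg (h0 : 0 ≤ p) (h1 : p ≤ 1) (V R : Finset ι) : 0 ≤ wt p V R := by
  have : 0 ≤ 1 - p := by linarith
  unfold wt; positivity

lemma expect_mono (h0 : 0 ≤ p) (h1 : p ≤ 1) {g g' : Finset ι → ℝ}
    (h : ∀ R ⊆ V, g R ≤ g' R) : expect p V g ≤ expect p V g' :=
  Finset.sum_le_sum fun R hR =>
    mul_le_mul_of_nonneg_left (h R (Finset.mem_powerset.1 hR)) (wt_nonneg h0 h1 V R)

lemma expect_const (p : ℝ) (V : Finset ι) (c : ℝ) : expect p V (fun _ => c) = c := by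
  unfold expect wt
  rw [← Finset.sum_mul, Finset.sum_pow_mul_eq_add_pow]
  simp

lemma expect_smul (p : ℝ) (V : Finset ι) (c : ℝ) (g : Finset ι → ℝ) :
    expect p V (fun R => c * g R) = c * expect p V g := by
  unfold expect; rw [Finset.mul_sum]
  exact Finset.sum_congr rfl fun _ _ => by ring

lemma expect_add (p : ℝ) (V : Finset ι) (g g' : Finset ι → ℝ) :
    expect p V (fun R => g R + g' R) = expect p V g + expect p V g' := by
  unfold expect; rw [← Finset.sum_add_distrib]
  exact Finset.sum_congr rfl fun _ _ => by ring

lemma expect_sum {κ : Type*} (p : ℝ) (V : Finset ι) (s : Finset κ) (g : κ → Finset ι → ℝ) :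
    expect p V (fun R => ∑ a ∈ s, g a R) = ∑ a ∈ s, expect p V (g a) := by
  unfold expect; rw [Finset.sum_comm]
  exact Finset.sum_congr rfl fun _ _ => by rw [Finset.mul_sum]

lemma exists_lt_of_expect_lt (h0 : 0 ≤ p) (h1 : p ≤ 1) {g : Finset ι → ℝ} {c : ℝ}
    (h : expect p V g < c) : ∃ R ⊆ V, g R < c := by
  by_contra hcon
  push Not at hcon
  have := expect_mono (V := V) h0 h1 (g := fun _ => c) hcon
  rw [expect_const] at this
  linarith

/-- The generating function of the size of the trace of the sample on `S`. -/
lemma expect_pow_card_inter [DecidableEq ι] (p a : ℝ) {S : Finset ι} (hS : S ⊆ V) :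
    expect p V (fun R => a ^ (R ∩ S).card) = (p * a + (1 - p)) ^ S.card := by
  have h := Finset.prod_add (fun v => p * (if v ∈ S then a else 1)) (fun _ => 1 - p) V
  have h2 : ∏ v ∈ V, (p * (if v ∈ S then a else 1) + (1 - p)) =
      (p * a + (1 - p)) ^ S.card := by
    rw [← Finset.prod_subset hS (fun v _ hv => by simp [hv])]
    rw [Finset.prod_congr rfl (g := fun _ => p * a + (1 - p)) (fun v hv => by simp [hv])]
    simp
  rw [h2] at h
  rw [h, expect]
  refine Finset.sum_congr rfl fun R hR => ?_
  rw [Finset.prod_mul_distrib, Finset.prod_const, Finset.prod_const, wt,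
    Finset.card_sdiff_of_subset (Finset.mem_powerset.1 hR), Finset.prod_ite_mem,
    Finset.prod_const]
  ring

/-- The probability of containing `D` and missing `S`. -/
lemma expect_contains [DecidableEq ι] (p : ℝ) {D S : Finset ι} (hD : D ⊆ V) (hS : S ⊆ V)
    (hDS : Disjoint D S) :
    expect p V (fun R => if D ⊆ R ∧ Disjoint R S then 1 else 0) =
      p ^ D.card * (1 - p) ^ S.card := by
  have h := Finset.prod_add (fun v => p * (if v ∈ S then 0 else 1))
    (fun v => (1 - p) * (if v ∈ D then 0 else 1)) V
  have h2 : ∏ v ∈ V, (p * (if v ∈ S then 0 else 1) + (1 - p) * (if v ∈ D then 0 else 1)) =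
      p ^ D.card * (1 - p) ^ S.card := by
    rw [← Finset.prod_subset (Finset.union_subset hD hS)
      (fun v _ hv => by simp only [Finset.mem_union, not_or] at hv; simp [hv]),
      Finset.prod_union hDS]
    congr 1
    · rw [Finset.prod_congr rfl (g := fun _ => p) (fun v hv => by
        simp [hv, Finset.disjoint_left.1 hDS hv])]
      simp
    · rw [Finset.prod_congr rfl (g := fun _ => 1 - p) (fun v hv => by
        simp [hv, Finset.disjoint_right.1 hDS hv])]
      simp
  rw [h2] at h
  rw [h, expect]
  refine Finset.sum_congr rfl fun R hR => ?_
  have hRV := Finset.mem_powerset.1 hR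
  rw [Finset.prod_mul_distrib, Finset.prod_mul_distrib, Finset.prod_const, Finset.prod_const, wt,
    Finset.card_sdiff_of_subset hRV]
  have e1 : ∏ v ∈ R, (if v ∈ S then (0:ℝ) else 1) = if Disjoint R S then 1 else 0 := by
    split_ifs with hh
    · exact Finset.prod_eq_one fun v hv => by simp [Finset.disjoint_left.1 hh hv]
    · rw [Finset.not_disjoint_iff] at hh
      obtain ⟨v, h1, h2⟩ := hh
      exact Finset.prod_eq_zero h1 (by simp [h2])
  have e2 : ∏ v ∈ V \ R, (if v ∈ D then (0:ℝ) else 1) = if D ⊆ R then 1 else 0 := by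
    split_ifs with hh
    · exact Finset.prod_eq_one fun v hv => by
        have : v ∉ D := fun h => (Finset.mem_sdiff.1 hv).2 (hh h)
        simp [this]
    · rw [Finset.not_subset] at hh
      obtain ⟨v, h1, h2⟩ := hh
      exact Finset.prod_eq_zero (i := v) (by simp [h2, hD h1]) (by simp [h1])
  rw [e1, e2]
  by_cases a : Disjoint R S <;> by_cases b : D ⊆ R <;> simp [a, b]

lemma one_add_mul_pow_le_exp {x : ℝ} (hx : 0 ≤ 1 + x) (n : ℕ) : (1 + x) ^ n ≤ Real.exp (x * n) := by
  rw [mul_comm, Real.exp_nat_mul]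
  exact pow_le_pow_left₀ hx (by linarith [Real.add_one_le_exp x]) n

lemma pow_le_factorial_mul_exp {x : ℝ} (hx : 0 ≤ x) (n : ℕ) :
    x ^ n ≤ n.factorial * Real.exp x := by
  have := Real.pow_div_factorial_le_exp x hx n
  rw [div_le_iff₀ (by positivity)] at this
  linarith

lemma expect_exp_card_le (h0 : 0 ≤ p) (hV : 1 ≤ p * V.card) :
    expect p V (fun R => Real.exp (R.card / (p * V.card))) ≤ Real.exp 2 := by
  classical
  set μ := p * V.card with hμ
  have h := expect_pow_card_inter p (Real.exp (1 / μ)) (subset_refl V)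
  have e : expect p V (fun R => Real.exp (R.card / μ)) =
      expect p V (fun R => Real.exp (1 / μ) ^ (R ∩ V).card) := by
    refine Finset.sum_congr rfl fun R hR => ?_
    dsimp only
    rw [Finset.inter_eq_left.2 (Finset.mem_powerset.1 hR), ← Real.exp_nat_mul]
    congr 2; ring
  rw [e, h]
  have h2 : Real.exp (1 / μ) ≤ 1 + 2 * (1 / μ) := by
    have hx : 0 ≤ 1 / μ := by positivity
    have hx1 : 1 / μ ≤ 1 := by rw [div_le_one (by linarith)]; exact hV
    have := Real.exp_bound_div_one_sub_of_interval hx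
    have hb := Real.abs_exp_sub_one_le (x := 1 / μ) (by rwa [abs_of_nonneg hx])
    rw [abs_of_nonneg hx] at hb
    linarith [le_abs_self (Real.exp (1 / μ) - 1)]
  have h3 : p * Real.exp (1 / μ) + (1 - p) = 1 + p * (Real.exp (1 / μ) - 1) := by ring
  have h4 : 0 ≤ Real.exp (1/μ) - 1 := by
    have := Real.add_one_le_exp (1/μ)
    have hx : 0 ≤ 1 / μ := by positivity
    linarith
  rw [h3]
  refine (one_add_mul_pow_le_exp (by positivity) _).trans (Real.exp_le_exp.2 ?_)
  have : p * (Real.exp (1/μ) - 1) * V.card = μ * (Real.exp (1/μ) - 1) := by rw [hμ]; ring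
  rw [this]
  calc μ * (Real.exp (1/μ) - 1) ≤ μ * (2 * (1/μ)) := by gcongr; linarith
    _ = 2 := by field_simp

lemma expect_card_pow_le (h0 : 0 ≤ p) (h1 : p ≤ 1) (hV : 1 ≤ p * V.card) (k : ℕ) :
    expect p V (fun R => ((R.card : ℝ) + 1) ^ k) ≤
      k.factorial * Real.exp 3 * (p * V.card) ^ k := by
  have h := expect_exp_card_le h0 hV
  set μ := p * V.card with hμ
  have hμ0 : 0 < μ := by linarith
  calc expect p V (fun R => ((R.card : ℝ) + 1) ^ k)
      ≤ expect p V (fun R => (μ ^ k * k.factorial * Real.exp 1) * Real.exp (R.card / μ)) := by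
        refine expect_mono h0 h1 fun R _ => ?_
        have h2 := pow_le_factorial_mul_exp (x := (R.card + 1) / μ) (by positivity) k
        have h3 : Real.exp ((R.card + 1) / μ) ≤ Real.exp 1 * Real.exp (R.card / μ) := by
          rw [← Real.exp_add]
          refine Real.exp_le_exp.2 ?_
          rw [add_div, add_comm]
          gcongr
          rw [div_le_one hμ0]; exact hV
        rw [div_pow, div_le_iff₀ (by positivity)] at h2
        calc ((R.card : ℝ) + 1) ^ k ≤ _ := h2
          _ ≤ k.factorial * (Real.exp 1 * Real.exp (R.card / μ)) * μ ^ k := by gcongr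
          _ = _ := by ring
    _ = (μ ^ k * k.factorial * Real.exp 1) * expect p V (fun R => Real.exp (R.card / μ)) :=
        expect_smul ..
    _ ≤ (μ ^ k * k.factorial * Real.exp 1) * Real.exp 2 := by gcongr
    _ = k.factorial * Real.exp 3 * μ ^ k := by
        rw [show (3:ℝ) = 1 + 2 by norm_num, Real.exp_add]; ring

end

variable {d : ℕ} {ι : Type*} [Fintype ι] [DecidableEq ι]

open Classical in
/-- The elements of `V` in conflict with `f`. -/
noncomputable def confSet (Y : ι → Fin (d + 1) → ℝ) (V : Finset ι) (f : Fin d → ι) : Finset ι :=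
  V.filter (Conf Y f)

lemma mem_confSet {Y : ι → Fin (d + 1) → ℝ} {V : Finset ι} {f : Fin d → ι} {v : ι} :
    v ∈ confSet Y V f ↔ v ∈ V ∧ Conf Y f v := by simp [confSet]

lemma confSet_subset (Y : ι → Fin (d + 1) → ℝ) (V : Finset ι) (f : Fin d → ι) :
    confSet Y V f ⊆ V :=
  fun _ hv => (mem_confSet.1 hv).1

open Classical in
/-- The injective tuples with entries in `V`. -/
noncomputable def tuples (d : ℕ) (V : Finset ι) : Finset (Fin d → ι) :=
  Finset.univ.filter fun f => Function.Injective f ∧ ∀ i, f i ∈ V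

/-- An injective tuple is an extreme ray of a sample iff the sample contains it and misses its conflict
set. -/
lemma expect_rays (Y : ι → Fin (d + 1) → ℝ) (V : Finset ι) (p : ℝ) (g : (Fin d → ι) → ℝ) :
    expect p V (fun R => ∑ f ∈ rays Y R, g f) =
      ∑ f ∈ tuples d V, p ^ d * (1 - p) ^ (confSet Y V f).card * g f := by
  classical
  have e : expect p V (fun R => ∑ f ∈ rays Y R, g f) =
      expect p V (fun R => ∑ f ∈ tuples d V,
        g f * if Finset.univ.image f ⊆ R ∧ Disjoint R (confSet Y V f) then 1 else 0) := by
    refine Finset.sum_congr rfl fun R hR => ?_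
    congr 1
    have hRV := Finset.mem_powerset.1 hR
    have : rays Y R = (tuples d V).filter fun f =>
        Finset.univ.image f ⊆ R ∧ Disjoint R (confSet Y V f) := by
      ext f
      simp only [mem_rays, tuples, Finset.mem_filter, Finset.mem_univ, true_and,
        Finset.disjoint_left, mem_confSet, not_and, Finset.subset_iff, Finset.mem_image,
        forall_exists_index, forall_apply_eq_imp_iff]
      constructor
      · rintro ⟨h1, h2, h3⟩
        exact ⟨⟨h1, fun i => hRV (h2 i)⟩, h2, fun v hv _ => h3 v hv⟩
      · rintro ⟨⟨h1, _⟩, h2, h3⟩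
        exact ⟨h1, h2, fun v hv => h3 hv (hRV hv)⟩
    dsimp only
    rw [this, Finset.sum_filter]
    exact Finset.sum_congr rfl fun f _ => by split_ifs <;> simp
  rw [e, expect_sum]
  refine Finset.sum_congr rfl fun f hf => ?_
  simp only [tuples, Finset.mem_filter, Finset.mem_univ, true_and] at hf
  rw [expect_smul, expect_contains]
  · rw [Finset.card_image_of_injective _ hf.1]; simp; ring
  · intro v hv
    simp only [Finset.mem_image, Finset.mem_univ, true_and] at hv
    obtain ⟨i, rfl⟩ := hv; exact hf.2 i
  · exact confSet_subset _ _ _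
  · rw [Finset.disjoint_left]
    intro v hv hv2
    simp only [Finset.mem_image, Finset.mem_univ, true_and] at hv
    obtain ⟨i, rfl⟩ := hv
    have := (mem_confSet.1 hv2).2
    rw [Conf, dot_ray_self] at this
    exact lt_irrefl _ this

/-- Passing from density `p` to `p / 2` absorbs any power of the conflict size. -/
lemma density_bound {p : ℝ} (h0 : 0 ≤ p) (h1 : p ≤ 1) (d c s : ℕ) :
    p ^ d * (1 - p) ^ s * (1 + p * s) ^ c ≤
      (2 ^ d * (c.factorial * 2 ^ c * Real.exp (1/2))) * ((p / 2) ^ d * (1 - p / 2) ^ s * 1) := by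
  have a1 : (1 - p) ^ s ≤ (1 - p/2) ^ s * Real.exp (-(p * s) / 2) := by
    have : (1 - p/2) ^ s ≤ Real.exp (-(p * s) / 2) := by
      have := one_add_mul_pow_le_exp (x := -(p/2)) (by linarith) s
      rw [show -(p * s) / 2 = -(p/2) * s by ring]
      simpa [sub_eq_add_neg] using this
    calc (1 - p) ^ s ≤ ((1 - p/2) * (1 - p/2)) ^ s :=
          pow_le_pow_left₀ (by linarith) (by nlinarith) _
      _ = (1 - p/2) ^ s * (1 - p/2) ^ s := mul_pow _ _ _
      _ ≤ _ := by
        have : 0 ≤ 1 - p/2 := by linarith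
        gcongr
  have a2 : (1 + p * s) ^ c ≤ c.factorial * 2 ^ c * Real.exp (1/2) * Real.exp (p * s / 2) := by
    have := pow_le_factorial_mul_exp (x := (1 + p * s) / 2) (by positivity) c
    rw [div_pow, div_le_iff₀ (by positivity)] at this
    calc _ ≤ _ := this
      _ = _ := by rw [add_div, Real.exp_add]; ring
  have a3 : Real.exp (-(p * s) / 2) * Real.exp (p * s / 2) = 1 := by
    rw [← Real.exp_add]; ring_nf; simp
  have hp : 0 ≤ 1 - p := by linarith
  have hp2 : 0 ≤ 1 - p/2 := by linarith
  calc p ^ d * (1 - p) ^ s * (1 + p * s) ^ c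
      ≤ p ^ d * ((1 - p/2) ^ s * Real.exp (-(p * s) / 2)) *
        (c.factorial * 2 ^ c * Real.exp (1/2) * Real.exp (p * s / 2)) := by gcongr
    _ = p ^ d * (1 - p/2) ^ s * (c.factorial * 2 ^ c * Real.exp (1/2)) *
        (Real.exp (-(p * s) / 2) * Real.exp (p * s / 2)) := by ring
    _ = _ := by rw [a3, div_pow]; field_simp

/-- The constant of the moment bound. -/
noncomputable def momentConst (d c : ℕ) : ℝ :=
  (2 ^ d * (c.factorial * 2 ^ c * Real.exp (1/2))) *
    (4 * d ^ d * ((d/2).factorial * Real.exp 3))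

lemma momentConst_nonneg (d c : ℕ) : 0 ≤ momentConst d c := by unfold momentConst; positivity

/-- The Clarkson–Shor moment bound: up to constants, the `c`-th moment of the conflict sizes at density
`p` is at most the number of rays at density `p / 2`, which the upper bound theorem controls. -/
theorem expect_moment_le {Y : ι → Fin (d + 1) → ℝ} (hY : GP Y) (V : Finset ι) {p : ℝ}
    (h0 : 0 ≤ p) (h1 : p ≤ 1) (hV : 2 ≤ p * V.card) (c : ℕ) :
    expect p V (fun R => ∑ f ∈ rays Y R, (1 + p * (confSet Y V f).card) ^ c) ≤
      momentConst d c * (p * V.card) ^ (d / 2) := by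
  rw [expect_rays]
  calc _ ≤ ∑ f ∈ tuples d V, (2 ^ d * (c.factorial * 2 ^ c * Real.exp (1/2))) *
        ((p / 2) ^ d * (1 - p / 2) ^ (confSet Y V f).card * 1) :=
        Finset.sum_le_sum fun f _ => density_bound h0 h1 d c _
    _ = (2 ^ d * (c.factorial * 2 ^ c * Real.exp (1/2))) *
        expect (p/2) V (fun R => ∑ f ∈ rays Y R, 1) := by
        rw [expect_rays, Finset.mul_sum]
    _ ≤ (2 ^ d * (c.factorial * 2 ^ c * Real.exp (1/2))) *
        (4 * d ^ d * ((d/2).factorial * Real.exp 3 * (p/2 * V.card) ^ (d / 2))) := by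
        gcongr
        refine le_trans (expect_mono (by linarith) (by linarith)
          (g' := fun R => 4 * d ^ d * ((R.card : ℝ) + 1) ^ (d/2)) fun R _ => ?_) ?_
        · simp only [Finset.sum_const, nsmul_eq_mul, mul_one]
          exact_mod_cast hY.card_rays_le R
        · rw [expect_smul]
          gcongr
          exact expect_card_pow_le (by linarith) (by linarith) (by linarith) _
    _ ≤ (2 ^ d * (c.factorial * 2 ^ c * Real.exp (1/2))) *
        (4 * d ^ d * ((d/2).factorial * Real.exp 3 * (p * V.card) ^ (d / 2))) := by
        gcongr; linarith
    _ = _ := by unfold momentConst; ring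

lemma exists_small_exp (d : ℕ) :
    ∃ r : ℝ, ∀ x, r ≤ x → 2 ^ d * Real.exp (- x / 2) ≤ 1 / 4 := by
  have : Filter.Tendsto (fun x : ℝ => 2 ^ d * Real.exp (-x/2)) Filter.atTop (nhds (2 ^ d * 0)) := by
    refine Filter.Tendsto.const_mul _ ?_
    refine Real.tendsto_exp_atBot.comp ?_
    have := Filter.tendsto_neg_atTop_atBot.comp
      (Filter.tendsto_id.atTop_div_const (r := (2:ℝ)) (by norm_num) (f := fun x : ℝ => x) (l := Filter.atTop))
    refine this.congr fun x => ?_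
    simp [neg_div]
  rw [mul_zero] at this
  have := (this.eventually (ge_mem_nhds (show (0:ℝ) < 1/4 by norm_num)))
  exact Filter.eventually_atTop.1 this

lemma four_mul_exp_two_le : 4 * Real.exp 2 ≤ Real.exp 4 := by
  have h : (4:ℝ) ≤ Real.exp 2 := by
    rw [show (2:ℝ) = 1 + 1 by norm_num, Real.exp_add]
    nlinarith [Real.exp_one_gt_d9]
  rw [show Real.exp 4 = Real.exp 2 * Real.exp 2 by rw [← Real.exp_add]; norm_num]
  gcongr

/-- A good sample: bounded size, and conflict sizes of order `1 / p` on average, even in the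
`c`-th moment. -/
theorem exists_sample (d c : ℕ) : ∃ r₀ : ℝ, 2 ≤ r₀ ∧ ∀ (ι : Type) [Fintype ι] [DecidableEq ι]
    (Y : ι → Fin (d + 1) → ℝ), GP Y → ∀ (V : Finset ι) (p : ℝ), 0 < p → p ≤ 1 →
    r₀ ≤ p * V.card → ∃ R ⊆ V, d + 1 ≤ R.card ∧ (R.card : ℝ) ≤ 4 * (p * V.card) ∧
      ∑ f ∈ rays Y R, (1 + p * (confSet Y V f).card) ^ c ≤
        (4 * momentConst d c + 1) * (p * V.card) ^ (d / 2) := by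
  obtain ⟨r, hr⟩ := exists_small_exp d
  refine ⟨max r 2, le_max_right _ _, fun ι _ _ Y hY V p h0 h1 hV => ?_⟩
  have hr' := hr _ ((le_max_left _ _).trans hV)
  have hV2 := (le_max_right _ _).trans hV
  have e1 := expect_moment_le hY V h0.le h1 hV2 c
  have e2 := expect_exp_card_le h0.le (by linarith : 1 ≤ p * V.card)
  have e3 := expect_pow_card_inter p (1/2) (subset_refl V)
  set μ := p * V.card with hμ
  have hμ0 : 0 < μ := by linarith
  have e3' : expect p V (fun R => (1/2) ^ (R ∩ V).card) ≤ Real.exp (-μ/2) := by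
    rw [e3]
    have := one_add_mul_pow_le_exp (x := -(p/2)) (by linarith) V.card
    calc _ = (1 + -(p/2)) ^ V.card := by ring
      _ ≤ _ := this
      _ = _ := by rw [hμ]; ring_nf
  set B := (4 * momentConst d c + 1) * μ ^ (d/2) with hB
  have hm := momentConst_nonneg d c
  have hB0 : 0 < B := by positivity
  have key : expect p V (fun R => (1/B) * ∑ f ∈ rays Y R, (1 + p * (confSet Y V f).card) ^ c +
      ((1 / (4 * Real.exp 2)) * Real.exp (R.card / μ) + 2 ^ d * (1/2) ^ (R ∩ V).card)) < 1 := by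
    rw [expect_add, expect_add, expect_smul, expect_smul, expect_smul]
    have a1 : (1/B) * expect p V (fun R => ∑ f ∈ rays Y R, (1 + p * (confSet Y V f).card) ^ c)
        < 1/2 := by
      rw [one_div, inv_mul_lt_iff₀ hB0]
      have : 0 < μ ^ (d/2) := pow_pos hμ0 _
      have h5 : 0 ≤ momentConst d c * μ ^ (d/2) := mul_nonneg hm this.le
      rw [hB]
      linarith
    have a2 : (1 / (4 * Real.exp 2)) * expect p V (fun R => Real.exp (R.card / μ)) ≤ 1/4 := by
      rw [one_div, inv_mul_le_iff₀ (by positivity)]; linarith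
    have a3 : 2 ^ d * expect p V (fun R => (1/2) ^ (R ∩ V).card) ≤ 1/4 :=
      le_trans (by gcongr) hr'
    linarith
  obtain ⟨R, hRV, hR⟩ := exists_lt_of_expect_lt h0.le h1 key
  have n1 : 0 ≤ ∑ f ∈ rays Y R, (1 + p * (confSet Y V f).card) ^ c :=
    Finset.sum_nonneg fun f _ => by positivity
  have n1' : 0 ≤ (1/B) * ∑ f ∈ rays Y R, (1 + p * (confSet Y V f).card) ^ c :=
    mul_nonneg (one_div_nonneg.2 hB0.le) n1
  have n2 : 0 < (1 / (4 * Real.exp 2)) * Real.exp (R.card / μ) := by positivity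
  have n3 : (0:ℝ) < 2 ^ d * (1/2) ^ (R ∩ V).card := by positivity
  refine ⟨R, hRV, ?_, ?_, ?_⟩
  · by_contra hcon
    have : (2:ℝ) ^ d * (1/2) ^ (R ∩ V).card < 1 := by linarith
    rw [Finset.inter_eq_left.2 hRV, one_div, inv_pow, ← div_eq_mul_inv,
      div_lt_one (pow_pos two_pos _)] at this
    have := (pow_lt_pow_iff_right₀ (one_lt_two : (1:ℝ) < 2)).1 this
    omega
  · have : (1 / (4 * Real.exp 2)) * Real.exp (R.card / μ) < 1 := by linarith
    rw [one_div, inv_mul_lt_iff₀ (by positivity), mul_one] at this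
    have := Real.exp_lt_exp.1 (this.trans_le four_mul_exp_two_le)
    rw [div_lt_iff₀ hμ0] at this
    exact this.le
  · have : (1/B) * ∑ f ∈ rays Y R, (1 + p * (confSet Y V f).card) ^ c < 1 := by linarith
    rw [one_div, inv_mul_lt_iff₀ hB0, mul_one] at this
    exact this.le

end Hopcroft

/-! ### Shallow cuttings -/

namespace Hopcroft

open Matrix

set_option linter.unusedSectionVars false

/-- Refinement of a single cell: a small sample of the conflict set of `f` such that the doubly
refined conflict sets have size `O(1 / p)`. -/
lemma exists_refine (d : ℕ) (hd : 2 ≤ d) : ∃ C : ℝ, 1 ≤ C ∧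
    ∀ (ι : Type) [Fintype ι] [DecidableEq ι]
    (Y : ι → Fin (d + 1) → ℝ), GP Y → ∀ (V R₀ : Finset ι) (p : ℝ), 0 < p → p ≤ 1 → R₀ ⊆ V →
    d + 1 ≤ R₀.card → ∀ f : Fin d → ι, ∃ Q ⊆ V, d + 1 ≤ Q.card ∧
      ((Q.card : ℝ) + 1) ^ (d / 2) ≤ C * (1 + p * (confSet Y V f).card) ^ (2 * (d / 2)) ∧
      ∀ f' ∈ rays Y Q, p * (confSet Y V f ∩ confSet Y V f').card ≤ C := by
  obtain ⟨r, hr2, hr⟩ := exists_sample d (2 * (d / 2))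
  have hk : 1 ≤ d / 2 := by omega
  set k := d / 2
  set r₁ : ℝ := max r (d + 1) with hr₁
  set K : ℝ := 4 * momentConst d (2 * k) + 1 with hK
  have hm := momentConst_nonneg d (2 * k)
  have hK1 : 1 ≤ K := by linarith
  refine ⟨max (max r₁ K) ((d + 2 : ℝ) ^ k + 5 ^ k), ?_, ?_⟩
  · exact (hK1.trans (le_max_right _ _)).trans (le_max_left _ _)
  intro ι _ _ Y hY V R₀ p h0 h1 hR₀ hcard f
  set S := confSet Y V f with hS
  set t : ℝ := p * S.card with ht
  have ht0 : 0 ≤ t := by positivity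
  have hSV : S ⊆ V := confSet_subset _ _ _
  by_cases hl : t < r₁
  · -- a cell that is already small: any simplicial subset will do
    obtain ⟨Q, hQ, hQc⟩ := Finset.exists_subset_card_eq hcard
    refine ⟨Q, hQ.trans hR₀, hQc.ge, ?_, fun f' _ => ?_⟩
    · rw [hQc]
      push_cast
      calc ((d:ℝ) + 1 + 1) ^ k = (d + 2 : ℝ) ^ k * 1 := by ring
        _ ≤ max (max r₁ K) ((d + 2 : ℝ) ^ k + 5 ^ k) * (1 + t) ^ (2 * k) := by
          gcongr
          · exact le_trans (by linarith [pow_pos (show (0:ℝ) < 5 by norm_num) k])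
              (le_max_right _ _)
          · exact one_le_pow₀ (by linarith)
    · have h2 : ((S ∩ confSet Y V f').card : ℝ) ≤ S.card := by
        exact_mod_cast Finset.card_le_card Finset.inter_subset_left
      calc p * ((S ∩ confSet Y V f').card : ℝ) ≤ t := by rw [ht]; gcongr
        _ ≤ r₁ := hl.le
        _ ≤ _ := (le_max_left _ _).trans (le_max_left _ _)
  push Not at hl
  have htr : r ≤ t := (le_max_left _ _).trans hl
  have htd : (d:ℝ) + 1 ≤ t := (le_max_right _ _).trans hl
  have ht1 : 1 ≤ t := by linarith
  have hsize : (4 * t ^ 2 + 1) ^ k ≤ 5 ^ k * (1 + t) ^ (2 * k) := by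
    rw [pow_mul, ← mul_pow]
    gcongr
    nlinarith
  have hsize' : (4 * t ^ 2 + 1) ^ k ≤
      max (max r₁ K) ((d + 2 : ℝ) ^ k + 5 ^ k) * (1 + t) ^ (2 * k) := by
    refine hsize.trans ?_
    gcongr
    exact le_trans (by linarith [show (0:ℝ) ≤ (d+2:ℝ)^k by positivity]) (le_max_right _ _)
  by_cases hp : 1 ≤ p * t
  · -- the conflict set itself is small enough
    refine ⟨S, hSV, ?_, ?_, fun f' hf' => ?_⟩
    · have : (d:ℝ) + 1 ≤ S.card := htd.trans (by rw [ht]; nlinarith [show (0:ℝ) ≤ S.card by positivity])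
      exact_mod_cast this
    · refine le_trans ?_ hsize'
      gcongr
      have : t ^ 2 = (p * t) * S.card := by rw [ht]; ring
      rw [this]
      nlinarith [show (0:ℝ) ≤ S.card by positivity]
    · have : S ∩ confSet Y V f' = ∅ := by
        ext v
        simp only [Finset.mem_inter, mem_confSet, Finset.notMem_empty, iff_false, not_and]
        exact fun hv _ => (mem_rays.1 hf').2.2 v hv
      rw [this]
      simp only [Finset.card_empty, Nat.cast_zero, mul_zero]
      exact le_trans (by positivity) (le_max_right _ _)
  · push Not at hp
    have e : p * t * S.card = t ^ 2 := by rw [ht]; ring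
    obtain ⟨Q, hQ, h2, h3, h4⟩ := hr ι Y hY S (p * t) (by positivity) hp.le (by rw [e]; nlinarith)
    rw [e] at h3 h4
    refine ⟨Q, hQ.trans hSV, h2, ?_, fun f' hf' => ?_⟩
    · refine le_trans ?_ hsize'
      gcongr
    · have e2 : S ∩ confSet Y V f' = confSet Y S f' := by
        ext v
        simp only [Finset.mem_inter, mem_confSet]
        exact ⟨fun h => ⟨h.1, h.2.2⟩, fun h => ⟨h.1, hSV h.1, h.2⟩⟩
      rw [e2]
      set s : ℝ := ((confSet Y S f').card : ℝ) with hs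
      have h5 : (1 + p * t * s) ^ (2 * k) ≤ K * (t ^ 2) ^ k :=
        (Finset.single_le_sum (f := fun f => (1 + p * t * ((confSet Y S f).card : ℝ)) ^ (2 * k))
          (fun _ _ => by positivity) hf').trans h4
      have hs0 : 0 ≤ s := by positivity
      have h6 : (p * s) ^ (2 * k) ≤ K := by
        have : (t * (p * s)) ^ (2 * k) ≤ K * (t ^ 2) ^ k := by
          refine le_trans ?_ h5
          gcongr
          nlinarith [show 0 ≤ p * t * s by positivity]
        rw [mul_pow, ← pow_mul] at this
        have ht' : 0 < t ^ (2 * k) := by positivity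
        nlinarith
      have h7 : p * s ≤ K := by
        by_cases h8 : p * s ≤ 1
        · linarith
        · push Not at h8
          exact (le_self_pow₀ h8.le (by omega)).trans h6
      exact h7.trans ((le_max_right _ _).trans (le_max_left _ _))

/-- A shallow cutting: a sample `R`, refined inside each conflict set, with all the doubly
refined conflict sets of size `O(1 / p)` and of total complexity `O((p |V|) ^ (d / 2))`. -/
theorem exists_cut (d : ℕ) (hd : 2 ≤ d) : ∃ C r₀ : ℝ, 1 ≤ C ∧ 2 ≤ r₀ ∧
    ∀ (ι : Type) [Fintype ι] [DecidableEq ι]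
    (Y : ι → Fin (d + 1) → ℝ), GP Y → ∀ (V : Finset ι) (p : ℝ), 0 < p → p ≤ 1 →
    r₀ ≤ p * V.card → ∃ R ⊆ V, ∃ Q : (Fin d → ι) → Finset ι,
      d + 1 ≤ R.card ∧ (R.card : ℝ) ≤ C * (p * V.card) ∧
      (∀ f, Q f ⊆ V ∧ d + 1 ≤ (Q f).card) ∧
      ∑ f ∈ rays Y R, (1 + p * (confSet Y V f).card) * (((Q f).card : ℝ) + 1) ^ (d / 2) ≤
        C * (p * V.card) ^ (d / 2) ∧
      ∀ f, ∀ f' ∈ rays Y (Q f), p * (confSet Y V f ∩ confSet Y V f').card ≤ C := by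
  obtain ⟨r, hr2, hr⟩ := exists_sample d (2 * (d / 2) + 1)
  obtain ⟨C₁, hC₁, href⟩ := exists_refine d hd
  have hm := momentConst_nonneg d (2 * (d / 2) + 1)
  set K : ℝ := 4 * momentConst d (2 * (d / 2) + 1) + 1 with hK
  refine ⟨max (max 4 C₁) (C₁ * K), r, ?_, hr2, ?_⟩
  · exact (hC₁.trans (le_max_right _ _)).trans (le_max_left _ _)
  intro ι _ _ Y hY V p h0 h1 hV
  obtain ⟨R, hRV, hRc, hRs, hsum⟩ := hr ι Y hY V p h0 h1 hV
  choose Q hQ1 hQ2 hQ3 hQ4 using href ι Y hY V R p h0 h1 hRV hRc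
  refine ⟨R, hRV, Q, hRc, ?_, fun f => ⟨hQ1 f, hQ2 f⟩, ?_, fun f f' hf' => ?_⟩
  · refine hRs.trans ?_
    gcongr
    exact (le_max_left _ _).trans (le_max_left _ _)
  · calc _ ≤ ∑ f ∈ rays Y R, C₁ * (1 + p * (confSet Y V f).card) ^ (2 * (d / 2) + 1) := by
          refine Finset.sum_le_sum fun f _ => ?_
          calc _ ≤ (1 + p * (confSet Y V f).card) *
                (C₁ * (1 + p * (confSet Y V f).card) ^ (2 * (d / 2))) := by
                gcongr; exact hQ3 f
            _ = _ := by ring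
      _ = C₁ * ∑ f ∈ rays Y R, (1 + p * (confSet Y V f).card) ^ (2 * (d / 2) + 1) := by
          rw [Finset.mul_sum]
      _ ≤ C₁ * (K * (p * V.card) ^ (d / 2)) := by gcongr
      _ ≤ _ := by
          rw [← mul_assoc]
          gcongr
          exact le_max_right _ _
  · exact (hQ4 f f' hf').trans ((le_max_right _ _).trans (le_max_left _ _))

/-- A sparse subset that is representative for every large set of a short list. -/
lemma exists_approx {ι : Type*} [DecidableEq ι] (β : Finset ι) (𝒮 : Finset (Finset ι))
    (h𝒮 : ∀ S ∈ 𝒮, S ⊆ β) {π m : ℝ} (h0 : 0 < π) (h1 : π ≤ 1) (hb : 1 ≤ π * β.card)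
    (hm : 𝒮.card * Real.exp (-(π * m) / 4) ≤ 1 / 2) :
    ∃ A ⊆ β, (A.card : ℝ) ≤ 4 * (π * β.card) ∧
      ∀ S ∈ 𝒮, m ≤ (S.card : ℝ) → π * S.card / 4 ≤ (A ∩ S).card := by
  classical
  set μ := π * β.card with hμ
  have hμ0 : 0 < μ := by linarith
  have key : expect π β (fun R => (1 / (4 * Real.exp 2)) * Real.exp (R.card / μ) +
      ∑ S ∈ 𝒮.filter (fun S => m ≤ (S.card : ℝ)),
        Real.exp (π * S.card / 4) * (1/2) ^ (R ∩ S).card) < 1 := by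
    rw [expect_add, expect_smul, expect_sum]
    have a2 : (1 / (4 * Real.exp 2)) * expect π β (fun R => Real.exp (R.card / μ)) ≤ 1/4 := by
      have := expect_exp_card_le h0.le hb
      rw [one_div, inv_mul_le_iff₀ (by positivity)]; linarith
    have a3 : ∑ S ∈ 𝒮.filter (fun S => m ≤ (S.card : ℝ)),
        expect π β (fun R => Real.exp (π * S.card / 4) * (1/2) ^ (R ∩ S).card) ≤
        ∑ S ∈ 𝒮.filter (fun S => m ≤ (S.card : ℝ)), Real.exp (-(π * m) / 4) := by
      refine Finset.sum_le_sum fun S hS => ?_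
      obtain ⟨hS, hSm⟩ := Finset.mem_filter.1 hS
      rw [expect_smul, expect_pow_card_inter _ _ (h𝒮 S hS)]
      have := one_add_mul_pow_le_exp (x := -(π/2)) (by linarith) S.card
      calc Real.exp (π * S.card / 4) * (π * (1/2) + (1 - π)) ^ S.card
          = Real.exp (π * S.card / 4) * (1 + -(π/2)) ^ S.card := by ring
        _ ≤ Real.exp (π * S.card / 4) * Real.exp (-(π/2) * S.card) := by gcongr
        _ = Real.exp (-(π * S.card) / 4) := by rw [← Real.exp_add]; ring_nf
        _ ≤ _ := by
          refine Real.exp_le_exp.2 ?_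
          have : π * m ≤ π * S.card := by gcongr
          linarith
    have a4 : ∑ S ∈ 𝒮.filter (fun S => m ≤ (S.card : ℝ)), Real.exp (-(π * m) / 4) ≤ 1/2 := by
      rw [Finset.sum_const, nsmul_eq_mul]
      refine le_trans ?_ hm
      gcongr
      exact Finset.filter_subset _ _
    linarith
  obtain ⟨R, hRV, hR⟩ := exists_lt_of_expect_lt h0.le h1 key
  have n2 : 0 < (1 / (4 * Real.exp 2)) * Real.exp (R.card / μ) := by positivity
  have n3 : 0 ≤ ∑ S ∈ 𝒮.filter (fun S => m ≤ (S.card : ℝ)),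
        Real.exp (π * S.card / 4) * (1/2) ^ (R ∩ S).card :=
    Finset.sum_nonneg fun _ _ => by positivity
  refine ⟨R, hRV, ?_, fun S hS hSm => ?_⟩
  · have : (1 / (4 * Real.exp 2)) * Real.exp (R.card / μ) < 1 := by linarith
    rw [one_div, inv_mul_lt_iff₀ (by positivity), mul_one] at this
    have := Real.exp_lt_exp.1 (this.trans_le four_mul_exp_two_le)
    rw [div_lt_iff₀ hμ0] at this
    exact this.le
  · have h5 : Real.exp (π * S.card / 4) * (1/2) ^ (R ∩ S).card < 1 := by
      refine lt_of_le_of_lt (Finset.single_le_sum (s := 𝒮.filter (fun S => m ≤ (S.card : ℝ)))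
        (f := fun S : Finset ι => Real.exp (π * S.card / 4) * (1/2) ^ (R ∩ S).card)
        (fun _ _ => by positivity) (Finset.mem_filter.2 ⟨hS, hSm⟩)) ?_
      linarith
    have h6 : Real.exp (-((R ∩ S).card : ℝ)) ≤ (1/2) ^ (R ∩ S).card := by
      rw [← mul_neg_one, Real.exp_nat_mul]
      refine pow_le_pow_left₀ (Real.exp_pos _).le ?_ _
      rw [Real.exp_neg, one_div]
      gcongr
      linarith [Real.exp_one_gt_d9]
    have h7 : Real.exp (π * S.card / 4) * Real.exp (-((R ∩ S).card : ℝ)) < 1 :=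
      lt_of_le_of_lt (by gcongr) h5
    rw [← Real.exp_add, Real.exp_lt_one_iff] at h7
    linarith

end Hopcroft

/-! ### Cells of a cutting -/

namespace Hopcroft

open Matrix

set_option linter.unusedSectionVars false

/-- Splitting a finite set into disjoint blocks of size exactly `g` and a small rest. -/
lemma exists_blocks {ι : Type*} [DecidableEq ι] {g : ℕ} (hg : 1 ≤ g) (U : Finset ι) :
    ∃ (𝒢 : Finset (Finset ι)) (Z : Finset ι), (∀ G ∈ 𝒢, G ⊆ U ∧ G.card = g) ∧
      (𝒢 : Set (Finset ι)).PairwiseDisjoint id ∧ Z.card < g ∧ U = 𝒢.biUnion id ∪ Z := by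
  induction hn : U.card using Nat.strong_induction_on generalizing U with
  | _ n ih =>
  by_cases h : U.card < g
  · exact ⟨∅, U, by simp, by simp, h, by simp⟩
  push Not at h
  obtain ⟨G, hGU, hG⟩ := Finset.exists_subset_card_eq h
  obtain ⟨𝒢, Z, h1, h2, h3, h4⟩ := ih (U \ G).card (by
    rw [Finset.card_sdiff_of_subset hGU]; omega) (U \ G) rfl
  refine ⟨insert G 𝒢, Z, ?_, ?_, h3, ?_⟩
  · intro G' hG'
    rcases Finset.mem_insert.1 hG' with rfl | hG'
    · exact ⟨hGU, hG⟩
    · exact ⟨(h1 G' hG').1.trans Finset.sdiff_subset, (h1 G' hG').2⟩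
  · rw [Finset.coe_insert]
    refine h2.insert fun G' hG' _ => ?_
    exact Finset.disjoint_of_subset_right (h1 G' hG').1 Finset.disjoint_sdiff
  · rw [Finset.biUnion_insert, Finset.union_assoc, ← h4]
    simp [Finset.union_sdiff_of_subset hGU]

/-- Splitting a finite set into few groups of size at most `g`. -/
lemma exists_groups {ι : Type*} [DecidableEq ι] {g : ℕ} (hg : 1 ≤ g) (U : Finset ι) :
    ∃ 𝒢 : Finset (Finset ι), (∀ G ∈ 𝒢, G ⊆ U ∧ G.card ≤ g) ∧ (∀ u ∈ U, ∃ G ∈ 𝒢, u ∈ G) ∧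
      (𝒢.card : ℝ) ≤ U.card / g + 1 := by
  obtain ⟨𝒢, Z, h1, h2, h3, h4⟩ := exists_blocks hg U
  refine ⟨insert Z 𝒢, ?_, ?_, ?_⟩
  · intro G hG
    rcases Finset.mem_insert.1 hG with rfl | hG
    · exact ⟨by rw [h4]; exact Finset.subset_union_right, h3.le⟩
    · exact ⟨(h1 G hG).1, (h1 G hG).2.le⟩
  · intro u hu
    rw [h4] at hu
    rcases Finset.mem_union.1 hu with hu | hu
    · obtain ⟨G, hG, hu⟩ := Finset.mem_biUnion.1 hu
      exact ⟨G, Finset.mem_insert_of_mem hG, hu⟩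
    · exact ⟨Z, Finset.mem_insert_self _ _, hu⟩
  · have e : 𝒢.card * g ≤ U.card := by
      have : (𝒢.biUnion id).card = 𝒢.card * g := by
        rw [Finset.card_biUnion h2]
        exact (Finset.sum_congr rfl fun G hG => (h1 G hG).2).trans (by simp)
      rw [← this, h4]
      exact Finset.card_le_card Finset.subset_union_left
    have hg' : (0:ℝ) < g := by exact_mod_cast hg
    have h5 : (𝒢.card : ℝ) ≤ U.card / g := by
      rw [le_div_iff₀ hg']; exact_mod_cast e
    have h6 : ((insert Z 𝒢).card : ℝ) ≤ 𝒢.card + 1 := by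
      exact_mod_cast Finset.card_insert_le _ _
    linarith

variable {d : ℕ} {ι : Type*} [Fintype ι] [DecidableEq ι]
  {Y : ι → Fin (d + 1) → ℝ}

/-- By Carathéodory's theorem, a vector of the polar cone is carried by at most `d + 1` extreme rays. -/
lemma GP.exists_support (hd : 2 ≤ d) (hY : GP Y) {R : Finset ι} (hR : d + 1 ≤ R.card)
    {x : Fin (d + 1) → ℝ} (hx : ∀ a ∈ R, Y a ⬝ᵥ x ≤ 0) :
    ∃ s ⊆ rays Y R, s.card ≤ d + 1 ∧ InCone (vec Y) (rayGens s) x := by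
  classical
  obtain ⟨S, hS, hli, hc⟩ := (hY.inCone_rays hd hR hx).exists_indep
  refine ⟨(rays Y R).filter fun f => Sum.inr (Sum.inl f) ∈ S, Finset.filter_subset _ _, ?_, ?_⟩
  · have h1 : S.card ≤ d + 1 := by
      have := LinearIndependent.fintype_card_le_finrank hli
      simpa using this
    refine le_trans ?_ h1
    refine Finset.card_le_card_of_injOn (fun f => Sum.inr (Sum.inl f)) ?_ ?_
    · intro f hf
      exact (Finset.mem_filter.1 (Finset.mem_coe.1 hf)).2
    · intro f _ f' _ h
      simpa using h
  · convert hc using 1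
    ext g
    simp only [rayGens, Finset.mem_image, Finset.mem_filter]
    constructor
    · rintro ⟨f, ⟨_, hf⟩, rfl⟩; exact hf
    · intro hg
      obtain ⟨f, hf, rfl⟩ := Finset.mem_image.1 (hS hg)
      exact ⟨f, ⟨hf, hg⟩, rfl⟩

lemma InCone.exists_conf {s : Finset (Fin d → ι)} {x : Fin (d + 1) → ℝ}
    (h : InCone (vec Y) (rayGens s) x) {v : ι} (hv : 0 < Y v ⬝ᵥ x) : ∃ f ∈ s, Conf Y f v := by
  by_contra hcon
  push Not at hcon
  refine not_le.2 hv (h.dot_nonpos fun g hg => ?_)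
  obtain ⟨f, hf, rfl⟩ := Finset.mem_image.1 hg
  exact not_lt.1 (hcon f hf)

/-- The pairs of rays of a cutting `R` with refinements `Q`. -/
noncomputable def cells (Y : ι → Fin (d + 1) → ℝ) (R : Finset ι)
    (Q : (Fin d → ι) → Finset ι) : Finset ((Fin d → ι) × (Fin d → ι)) :=
  Finset.univ.filter fun c => c.1 ∈ rays Y R ∧ c.2 ∈ rays Y (Q c.1)

lemma mem_cells {R : Finset ι} {Q : (Fin d → ι) → Finset ι} {c : (Fin d → ι) × (Fin d → ι)} :
    c ∈ cells Y R Q ↔ c.1 ∈ rays Y R ∧ c.2 ∈ rays Y (Q c.1) := by simp [cells]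

lemma sum_cells {R : Finset ι} {Q : (Fin d → ι) → Finset ι} {M : Type*} [AddCommMonoid M]
    (g : (Fin d → ι) × (Fin d → ι) → M) :
    ∑ c ∈ cells Y R Q, g c = ∑ f ∈ rays Y R, ∑ f' ∈ rays Y (Q f), g (f, f') :=
  Finset.sum_finset_product _ _ _ fun _ => mem_cells

/-- The points of `I` whose support meets the cell `c`. -/
noncomputable def cellPts (I : Finset ι) (s : ι → Finset (Fin d → ι))
    (s' : ι → (Fin d → ι) → Finset (Fin d → ι)) (c : (Fin d → ι) × (Fin d → ι)) : Finset ι :=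
  I.filter fun u => c.1 ∈ s u ∧ c.2 ∈ s' u c.1

lemma sum_card_cellPts (K : Finset ((Fin d → ι) × (Fin d → ι))) {I : Finset ι}
    {s : ι → Finset (Fin d → ι)} {s' : ι → (Fin d → ι) → Finset (Fin d → ι)} {m : ℕ}
    (hs : ∀ u ∈ I, (s u).card ≤ m) (hs' : ∀ u ∈ I, ∀ f ∈ s u, (s' u f).card ≤ m) :
    ∑ c ∈ K, (cellPts I s s' c).card ≤ m * m * I.card := by
  have h1 : ∀ c, (cellPts I s s' c).card = ∑ u ∈ I, if c.1 ∈ s u ∧ c.2 ∈ s' u c.1 then 1 else 0 :=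
    fun c => by rw [cellPts, Finset.card_filter]
  simp only [h1]
  rw [Finset.sum_comm]
  calc _ ≤ ∑ u ∈ I, m * m := by
        refine Finset.sum_le_sum fun u hu => ?_
        rw [← Finset.card_filter]
        calc _ ≤ ((s u).sigma fun f => s' u f).card := by
              refine Finset.card_le_card_of_injOn (fun c => ⟨c.1, c.2⟩) ?_ ?_
              · intro c hc
                have := (Finset.mem_filter.1 (Finset.mem_coe.1 hc)).2
                simpa using this
              · rintro ⟨a, b⟩ _ ⟨a', b'⟩ _ h
                simp only [Sigma.mk.injEq, heq_eq_eq] at h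
                exact Prod.ext h.1 h.2
          _ = ∑ f ∈ s u, (s' u f).card := Finset.card_sigma _ _
          _ ≤ ∑ f ∈ s u, m := Finset.sum_le_sum fun f hf => hs' u hu f hf
          _ = (s u).card * m := by simp
          _ ≤ m * m := by gcongr; exact hs u hu
    _ = m * m * I.card := by simp [mul_comm]

/-- Every positive pair lies in a cell. -/
lemma exists_cell {Y Y' : ι → Fin (d + 1) → ℝ} {R : Finset ι} {Q : (Fin d → ι) → Finset ι}
    {I J : Finset ι} {s : ι → Finset (Fin d → ι)} {s' : ι → (Fin d → ι) → Finset (Fin d → ι)}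
    (hs : ∀ u ∈ I, s u ⊆ rays Y R)
    (hs' : ∀ u ∈ I, ∀ f ∈ s u, s' u f ⊆ rays Y (Q f))
    (hc : ∀ u ∈ I, InCone (vec Y') (rayGens (s u)) (Y' u))
    (hc' : ∀ u ∈ I, ∀ f ∈ s u, InCone (vec Y') (rayGens (s' u f)) (Y' u))
    (hJ : ∀ v ∈ J, ∀ f ∈ rays Y R, Conf Y' f v → Conf Y f v)
    (hJ' : ∀ f ∈ rays Y R, ∀ v ∈ confSet Y J f, ∀ f' ∈ rays Y (Q f), Conf Y' f' v → Conf Y f' v)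
    {u v : ι} (hu : u ∈ I) (hv : v ∈ J) (h : 0 < Y' v ⬝ᵥ Y' u) :
    ∃ c ∈ cells Y R Q, u ∈ cellPts I s s' c ∧ v ∈ confSet Y J c.1 ∩ confSet Y J c.2 := by
  obtain ⟨f, hf, hfv⟩ := (hc u hu).exists_conf h
  have hfR := hs u hu hf
  obtain ⟨f', hf', hfv'⟩ := (hc' u hu f hf).exists_conf h
  have hfR' := hs' u hu f hf hf'
  have h1 : v ∈ confSet Y J f := mem_confSet.2 ⟨hv, hJ v hv f hfR hfv⟩
  refine ⟨(f, f'), mem_cells.2 ⟨hfR, hfR'⟩, by simp [cellPts, hu, hf, hf'], ?_⟩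
  exact Finset.mem_inter.2 ⟨h1, mem_confSet.2 ⟨hv, hJ' f hfR v h1 f' hfR' hfv'⟩⟩

lemma GP.card_cells_le (hY : GP Y) (R : Finset ι) (Q : (Fin d → ι) → Finset ι) :
    (cells Y R Q).card ≤ ∑ f ∈ rays Y R, 4 * d ^ d * ((Q f).card + 1) ^ (d / 2) := by
  rw [Finset.card_eq_sum_ones, sum_cells]
  exact Finset.sum_le_sum fun f _ => by simpa using hY.card_rays_le (Q f)

/-- The defining properties of a cutting of `V` with density `p`. -/
structure IsCut (Y : ι → Fin (d + 1) → ℝ) (V : Finset ι) (p C : ℝ) (R : Finset ι)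
    (Q : (Fin d → ι) → Finset ι) : Prop where
  subset : R ⊆ V
  card : d + 1 ≤ R.card
  card_le : (R.card : ℝ) ≤ C * (p * V.card)
  subset' : ∀ f, Q f ⊆ V
  card' : ∀ f, d + 1 ≤ (Q f).card
  sum_le : ∑ f ∈ rays Y R, (1 + p * (confSet Y V f).card) * (((Q f).card : ℝ) + 1) ^ (d / 2) ≤
    C * (p * V.card) ^ (d / 2)
  cell_le : ∀ f, ∀ f' ∈ rays Y (Q f), p * (confSet Y V f ∩ confSet Y V f').card ≤ C

section

variable {V R : Finset ι} {p C : ℝ} {Q : (Fin d → ι) → Finset ι}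

lemma IsCut.sum_pow_le (h : IsCut Y V p C R Q) (hp : 0 ≤ p) :
    ∑ f ∈ rays Y R, (((Q f).card : ℝ) + 1) ^ (d / 2) ≤ C * (p * V.card) ^ (d / 2) := by
  refine le_trans (Finset.sum_le_sum fun f _ => ?_) h.sum_le
  have : 0 ≤ p * (confSet Y V f).card := by positivity
  exact le_mul_of_one_le_left (by positivity) (by linarith)

lemma IsCut.card_cells_le (h : IsCut Y V p C R Q) (hY : GP Y) (hp : 0 ≤ p) :
    ((cells Y R Q).card : ℝ) ≤ 4 * d ^ d * (C * (p * V.card) ^ (d / 2)) := by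
  calc ((cells Y R Q).card : ℝ)
      ≤ ∑ f ∈ rays Y R, 4 * (d:ℝ) ^ d * (((Q f).card : ℝ) + 1) ^ (d / 2) := by
        exact_mod_cast hY.card_cells_le R Q
    _ = 4 * d ^ d * ∑ f ∈ rays Y R, (((Q f).card : ℝ) + 1) ^ (d / 2) := by rw [Finset.mul_sum]
    _ ≤ _ := by gcongr; exact h.sum_pow_le hp

/-- Supports of the points of `I` with respect to a cutting. -/
lemma IsCut.exists_supports (h : IsCut Y V p C R Q) (hd : 2 ≤ d) (hY : GP Y) {I : Finset ι}
    (hR : ∀ u ∈ I, ∀ a ∈ R, Y a ⬝ᵥ Y u ≤ 0)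
    (hQ : ∀ u ∈ I, ∀ f ∈ rays Y R, ∀ a ∈ Q f, Y a ⬝ᵥ Y u ≤ 0) :
    ∃ (s : ι → Finset (Fin d → ι)) (s' : ι → (Fin d → ι) → Finset (Fin d → ι)),
      ∀ u ∈ I, (s u ⊆ rays Y R ∧ (s u).card ≤ d + 1 ∧ InCone (vec Y) (rayGens (s u)) (Y u)) ∧
        ∀ f ∈ rays Y R, s' u f ⊆ rays Y (Q f) ∧ (s' u f).card ≤ d + 1 ∧
          InCone (vec Y) (rayGens (s' u f)) (Y u) := by
  have h1 : ∀ u, ∃ s : Finset (Fin d → ι), u ∈ I → s ⊆ rays Y R ∧ s.card ≤ d + 1 ∧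
      InCone (vec Y) (rayGens s) (Y u) := fun u => by
    by_cases hu : u ∈ I
    · obtain ⟨s, h1, h2⟩ := hY.exists_support hd h.card (hR u hu)
      exact ⟨s, fun _ => ⟨h1, h2⟩⟩
    · exact ⟨∅, fun h => (hu h).elim⟩
  have h2 : ∀ u f, ∃ s : Finset (Fin d → ι), u ∈ I → f ∈ rays Y R → s ⊆ rays Y (Q f) ∧
      s.card ≤ d + 1 ∧ InCone (vec Y) (rayGens s) (Y u) := fun u f => by
    by_cases hu : u ∈ I ∧ f ∈ rays Y R
    · obtain ⟨s, h1, h2⟩ := hY.exists_support hd (h.card' f) (hQ u hu.1 f hu.2)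
      exact ⟨s, fun _ _ => ⟨h1, h2⟩⟩
    · exact ⟨∅, fun h h' => (hu ⟨h, h'⟩).elim⟩
  choose s hs using h1
  choose s' hs' using h2
  exact ⟨s, s', fun u hu => ⟨hs u hu, fun f hf => hs' u f hu hf⟩⟩

/-- The total number of groups of size `g` into which the cells are split. -/
lemma IsCut.sum_groups_le (h : IsCut Y V p C R Q) (hY : GP Y) (hp : 0 ≤ p) {I : Finset ι}
    {s : ι → Finset (Fin d → ι)} {s' : ι → (Fin d → ι) → Finset (Fin d → ι)}
    (hs : ∀ u ∈ I, s u ⊆ rays Y R ∧ (s u).card ≤ d + 1)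
    (hs' : ∀ u ∈ I, ∀ f ∈ rays Y R, (s' u f).card ≤ d + 1) (g : ℝ) (hg : 0 ≤ g) :
    ∑ c ∈ cells Y R Q, ((cellPts I s s' c).card / g + 1 : ℝ) ≤
      (d + 1) * (d + 1) * I.card / g + 4 * d ^ d * (C * (p * V.card) ^ (d / 2)) := by
  rw [Finset.sum_add_distrib, ← Finset.sum_div]
  have h1 := sum_card_cellPts (cells Y R Q) (I := I) (s := s) (s' := s') (m := d + 1)
    (fun u hu => (hs u hu).2) (fun u hu f hf => hs' u hu f ((hs u hu).1 hf))
  have h1' : ∑ c ∈ cells Y R Q, ((cellPts I s s' c).card : ℝ) ≤ (d + 1) * (d + 1) * I.card := by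
    exact_mod_cast h1
  have h2 := h.card_cells_le hY hp
  simp only [Finset.sum_const, nsmul_eq_mul, mul_one]
  gcongr

end

theorem exists_isCut (d : ℕ) (hd : 2 ≤ d) : ∃ C r₀ : ℝ, 1 ≤ C ∧ 2 ≤ r₀ ∧
    ∀ (ι : Type) [Fintype ι] [DecidableEq ι]
    (Y : ι → Fin (d + 1) → ℝ), GP Y → ∀ (V : Finset ι) (p : ℝ), 0 < p → p ≤ 1 →
    r₀ ≤ p * V.card → ∃ R Q, IsCut Y V p C R Q := by
  obtain ⟨C, r₀, h1, h2, h3⟩ := exists_cut d hd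
  refine ⟨C, r₀, h1, h2, fun ι _ _ Y hY V p h0 h1 hV => ?_⟩
  obtain ⟨R, hR, Q, a1, a2, a3, a4, a5⟩ := h3 ι Y hY V p h0 h1 hV
  exact ⟨R, Q, hR, a1, a2, fun f => (a3 f).1, fun f => (a3 f).2, a4, a5⟩

end Hopcroft

/-! ### Certificates for instances without positive pairs -/

namespace Hopcroft

open Matrix

set_option linter.unusedSectionVars false

section

variable {d : ℕ} {ι : Type*} [Fintype ι] [DecidableEq ι]
  {Y : ι → Fin (d + 1) → ℝ} {X : Finset ι} {c c' : ℝ} {P P' : (ι → Fin (d + 1) → ℝ) → Prop}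

/-- `Cert` with a real bound on the number of tests. -/
def CertR (Y : ι → Fin (d + 1) → ℝ) (X : Finset ι) (c : ℝ)
    (P : (ι → Fin (d + 1) → ℝ) → Prop) : Prop := ∃ n : ℕ, (n : ℝ) ≤ c ∧ Cert Y X n P

lemma CertR.mono (h : CertR Y X c P) (hc : c ≤ c') (hP : ∀ Y', GP Y' → P Y' → P' Y') :
    CertR Y X c' P' := by
  obtain ⟨n, hn, h⟩ := h
  exact ⟨n, hn.trans hc, h.mono le_rfl hP⟩

lemma CertR.and (h : CertR Y X c P) (h' : CertR Y X c' P') :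
    CertR Y X (c + c') (fun Y' => P Y' ∧ P' Y') := by
  obtain ⟨n, hn, h⟩ := h
  obtain ⟨n', hn', h'⟩ := h'
  exact ⟨n + n', by push_cast; linarith, h.and h'⟩

lemma CertR.forall {α : Type*} (s : Finset α) (c : α → ℝ) {P : α → (ι → Fin (d + 1) → ℝ) → Prop}
    (h : ∀ a ∈ s, CertR Y X (c a) (P a)) :
    CertR Y X (∑ a ∈ s, c a) (fun Y' => ∀ a ∈ s, P a Y') := by
  classical
  have h' : ∀ a, ∃ n : ℕ, a ∈ s → (n : ℝ) ≤ c a ∧ Cert Y X n (P a) := fun a => by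
    by_cases ha : a ∈ s
    · obtain ⟨n, hn⟩ := h a ha
      exact ⟨n, fun _ => hn⟩
    · exact ⟨0, fun h => (ha h).elim⟩
  choose n hn using h'
  refine ⟨∑ a ∈ s, n a, ?_, Cert.forall s n fun a ha => (hn a ha).2⟩
  push_cast
  exact Finset.sum_le_sum fun a ha => (hn a ha).1

lemma Cert.toR {n : ℕ} (h : Cert Y X n P) : CertR Y X n P := ⟨n, le_rfl, h⟩

/-- Certificate obtained by splitting `U` into groups of size `g`. -/
lemma GP.cert_groups (hd : 2 ≤ d) (hY : GP Y) {Z U : Finset ι} (hZX : Z ⊆ X) (hUX : U ⊆ X)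
    (h : ∀ z ∈ Z, ∀ u ∈ U, Y z ⬝ᵥ Y u ≤ 0) {g : ℕ} (hg : 1 ≤ g) {m : ℝ} (hm : (Z.card : ℝ) ≤ m) :
    CertR Y X ((U.card / g + 1) * ((2 * d + 4) * m + validConst d * g ^ (d / 2)))
      (fun Y' => ∀ z ∈ Z, ∀ u ∈ U, Y' z ⬝ᵥ Y' u ≤ 0) := by
  obtain ⟨𝒢, h1, h2, h3⟩ := exists_groups hg U
  have h4 := CertR.forall (Y := Y) (X := X) 𝒢
    (fun _ => (2 * d + 4) * m + validConst d * (g : ℝ) ^ (d / 2))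
    (P := fun G Y' => ∀ z ∈ Z, ∀ v ∈ G, Y' v ⬝ᵥ Y' z ≤ 0) (fun G hG => by
      have := (hY.cert_nonpos hd hZX ((h1 G hG).1.trans hUX) (fun z hz v hv => by
        rw [dotProduct_comm]; exact h z hz v ((h1 G hG).1 hv))).toR
      refine this.mono ?_ fun _ _ h => h
      have h5 : (G.card : ℝ) ≤ g := by exact_mod_cast (h1 G hG).2
      push_cast
      gcongr)
  refine h4.mono ?_ fun Y' _ h' z hz u hu => ?_
  · rw [Finset.sum_const, nsmul_eq_mul]
    have hm0 : 0 ≤ m := le_trans (by positivity) hm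
    gcongr
  · obtain ⟨G, hG, huG⟩ := h2 u hu
    rw [dotProduct_comm]
    exact h' G hG z hz u huG

lemma sum_confRays (R V : Finset ι) :
    ∑ v ∈ V, ((confRays Y R v).card : ℝ) = ∑ f ∈ rays Y R, ((confSet Y V f).card : ℝ) := by
  classical
  have h1 : ∀ v, ((confRays Y R v).card : ℝ) = ∑ f ∈ rays Y R, if Conf Y f v then 1 else 0 :=
    fun v => by rw [confRays, Finset.card_filter]; push_cast; rfl
  have h2 : ∀ f, ((confSet Y V f).card : ℝ) = ∑ v ∈ V, if Conf Y f v then 1 else 0 :=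
    fun v => by rw [confSet, Finset.card_filter]; push_cast; rfl
  simp only [h1, h2]
  exact Finset.sum_comm

/-- Certificate that no ray gets into new conflict with an element of `V`. -/
lemma GP.cert_conflicts (hd : 2 ≤ d) (hY : GP Y) {R V : Finset ι} (hR : d + 1 ≤ R.card)
    (hRX : R ⊆ X) (hVX : V ⊆ X) :
    CertR Y X (validConst d * R.card ^ (d / 2) +
        ((2 * d + 4) * V.card + (d + 1) * ∑ f ∈ rays Y R, ((confSet Y V f).card : ℝ)))
      (fun Y' => ∀ v ∈ V, ∀ f ∈ rays Y R, Conf Y' f v → Conf Y f v) := by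
  have h1 := (hY.cert_valid hd hRX hR).toR
  have h2 := CertR.forall (Y := Y) (X := X) V
    (fun v => (2 * d + 4) + (d + 1) * ((confRays Y R v).card : ℝ))
    (P := fun v Y' => Valid Y R Y' → ∀ f ∈ rays Y R, Conf Y' f v → Conf Y f v)
    (fun v hv => (hY.cert_conflict hd hR hRX (hVX hv)).toR.mono (by push_cast; rfl)
      fun _ _ h => h)
  refine (h1.and h2).mono ?_ fun Y' _ h v hv => h.2 v hv h.1
  rw [Finset.sum_add_distrib, ← Finset.mul_sum, sum_confRays]
  push_cast
  simp only [Finset.sum_const, nsmul_eq_mul]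
  apply le_of_eq; ring

/-- The certificate read off from a cutting: validity of the rays of `R` and of the refinements, their
conflict lists, and the supports of the vectors of `I`. This reduces the claim to pairs within one
cell, where the vectors of `I` are treated in groups of size `g`. -/
lemma IsCut.cert {V R : Finset ι} {p C : ℝ} {Q : (Fin d → ι) → Finset ι}
    (h : IsCut Y V p C R Q) (hd : 2 ≤ d) (hY : GP Y) (hp : 0 < p) (hp1 : p ≤ 1) {I : Finset ι}
    (hI : I ⊆ X) (hV : V ⊆ X) (hno : ∀ v ∈ V, ∀ u ∈ I, Y v ⬝ᵥ Y u ≤ 0) {g : ℕ} (hg : 1 ≤ g) :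
    CertR Y X ((validConst d * R.card ^ (d / 2) +
          ((2 * d + 4) * V.card + (d + 1) * (1 / p * (C * (p * V.card) ^ (d / 2))))) +
        ((validConst d + (2 * d + 4) + (d + 1) * (4 * d ^ d) * C) * (1 / p) *
          (C * (p * V.card) ^ (d / 2)) +
        ((2 * d + 4) * (d + 2) * I.card +
        ((d + 1) * (d + 1) * I.card / g + 4 * d ^ d * (C * (p * V.card) ^ (d / 2))) *
          ((2 * d + 4) * (C / p) + validConst d * g ^ (d / 2)))))
      (fun Y' => ∀ v ∈ V, ∀ u ∈ I, Y' v ⬝ᵥ Y' u ≤ 0) := by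
  obtain ⟨s, s', hs⟩ := h.exists_supports hd hY (I := I)
    (fun u hu a ha => hno a (h.subset ha) u hu)
    (fun u hu f _ a ha => hno a (h.subset' f ha) u hu)
  have hp' : 1 ≤ 1 / p := by rw [le_div_iff₀ hp]; linarith
  have hRX := h.subset.trans hV
  have hQX := fun f => (h.subset' f).trans hV
  have hC : 0 ≤ C := by
    have h1 := h.card_le
    have h2 : (0:ℝ) < R.card := by exact_mod_cast (show 0 < R.card by have := h.card; omega)
    have h3 : 0 ≤ p * V.card := by positivity
    by_contra hcon
    push Not at hcon
    nlinarith
  -- conflicts with respect to `R`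
  have h1 := hY.cert_conflicts hd h.card hRX hV
  -- conflicts with respect to the refinements
  have h2 := CertR.forall (Y := Y) (X := X) (rays Y R) _ (fun f _ =>
    hY.cert_conflicts hd (h.card' f) (hQX f) ((confSet_subset Y V f).trans hV))
  -- supports
  have h3 := CertR.forall (Y := Y) (X := X) I (fun _ => (2 * d + 4) * (d + 2 : ℝ))
    (P := fun u Y' => InCone (vec Y') (rayGens (s u)) (Y' u) ∧
      ∀ f ∈ s u, InCone (vec Y') (rayGens (s' u f)) (Y' u)) (fun u hu => by
      obtain ⟨⟨a1, a2, a3⟩, a4⟩ := hs u hu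
      have b1 := (Cert.cone (X := X) (z := Sum.inl u) (rayGens_subset a1 hRX)
        (by simpa using hI hu) a3).toR
      have b2 := CertR.forall (Y := Y) (X := X) (s u) (fun _ => (2 * d + 4 : ℝ)) (fun f hf => by
        obtain ⟨c1, c2, c3⟩ := a4 f (a1 hf)
        exact (Cert.cone (X := X) (z := Sum.inl u) (rayGens_subset c1 (hQX f))
          (by simpa using hI hu) c3).toR.mono (by push_cast; rfl) fun _ _ h => h)
      refine (b1.and b2).mono ?_ fun _ _ h => h
      have a2' : ((s u).card : ℝ) ≤ d + 1 := by exact_mod_cast a2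
      rw [Finset.sum_const, nsmul_eq_mul]
      push_cast
      calc (2 * (d:ℝ) + 4) + (s u).card * (2 * d + 4) ≤ (2 * d + 4) + (d + 1) * (2 * d + 4) := by
            gcongr
        _ = _ := by ring)
  -- cells
  have h4 := CertR.forall (Y := Y) (X := X) (cells Y R Q) (fun c =>
      (((cellPts I s s' c).card : ℝ) / g + 1) * ((2 * d + 4) * (C / p) +
        validConst d * (g : ℝ) ^ (d / 2)))
    (P := fun c Y' => ∀ z ∈ confSet Y V c.1 ∩ confSet Y V c.2, ∀ u ∈ cellPts I s s' c,
      Y' z ⬝ᵥ Y' u ≤ 0) (fun c hc => by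
      have e1 : confSet Y V c.1 ∩ confSet Y V c.2 ⊆ V :=
        Finset.inter_subset_left.trans (confSet_subset _ _ _)
      have e2 : cellPts I s s' c ⊆ I := Finset.filter_subset _ _
      refine hY.cert_groups hd (e1.trans hV) (e2.trans hI)
        (fun z hz u hu => hno z (e1 hz) u (e2 hu)) hg ?_
      rw [le_div_iff₀ hp, mul_comm]
      exact h.cell_le c.1 c.2 (mem_cells.1 hc).2)
  refine (h1.and (h2.and (h3.and h4))).mono ?_ ?_
  · have hsum := h.sum_le
    refine add_le_add ?_ (add_le_add ?_ (add_le_add ?_ ?_))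
    · have : ∑ f ∈ rays Y R, ((confSet Y V f).card : ℝ) ≤ 1 / p * (C * (p * V.card) ^ (d / 2)) := by
        refine le_trans ?_ (mul_le_mul_of_nonneg_left hsum (by positivity))
        rw [Finset.mul_sum]
        refine Finset.sum_le_sum fun f _ => ?_
        have e3 : (1:ℝ) ≤ (((Q f).card : ℝ) + 1) ^ (d / 2) :=
          one_le_pow₀ (by linarith [show (0:ℝ) ≤ (Q f).card by positivity])
        calc ((confSet Y V f).card : ℝ) = 1 / p * ((0 + p * (confSet Y V f).card) * 1) := by
              field_simp; ring
          _ ≤ _ := by gcongr; norm_num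
      gcongr
    · calc _ ≤ ∑ f ∈ rays Y R, (validConst d + (2 * d + 4) + (d + 1) * (4 * d ^ d) * C) * (1 / p) *
            ((1 + p * (confSet Y V f).card) * (((Q f).card : ℝ) + 1) ^ (d / 2)) := by
            refine Finset.sum_le_sum fun f _ => ?_
            set q : ℝ := (((Q f).card : ℝ) + 1) ^ (d / 2) with hq
            set a : ℝ := ((confSet Y V f).card : ℝ) with ha
            have ha0 : 0 ≤ a := by positivity
            have hq1 : 1 ≤ q := one_le_pow₀ (by linarith [show (0:ℝ) ≤ (Q f).card by positivity])
            have hX : 1 ≤ 1 + p * a := by nlinarith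
            have i1 : ((Q f).card : ℝ) ^ (d / 2) ≤ q := by
              rw [hq]; gcongr; linarith
            have i2 : ∑ f' ∈ rays Y (Q f), ((confSet Y (confSet Y V f) f').card : ℝ) ≤
                (4 * d ^ d) * q * (C / p) := by
              calc _ ≤ ∑ f' ∈ rays Y (Q f), C / p := by
                    refine Finset.sum_le_sum fun f' hf' => ?_
                    have e2 : confSet Y (confSet Y V f) f' = confSet Y V f ∩ confSet Y V f' := by
                      ext v
                      simp only [Finset.mem_inter, mem_confSet]
                      tauto
                    rw [e2, le_div_iff₀ hp, mul_comm]
                    exact h.cell_le f f' hf'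
                _ = (rays Y (Q f)).card * (C / p) := by rw [Finset.sum_const, nsmul_eq_mul]
                _ ≤ _ := by
                  gcongr
                  rw [hq]
                  exact_mod_cast hY.card_rays_le (Q f)
            have j1 : (validConst d : ℝ) * ((Q f).card : ℝ) ^ (d / 2) ≤
                validConst d * (1 / p * ((1 + p * a) * q)) := by
              gcongr
              calc ((Q f).card : ℝ) ^ (d / 2) ≤ q := i1
                _ = 1 * (1 * q) := by ring
                _ ≤ _ := by gcongr
            have j2 : (2 * d + 4) * a ≤ (2 * d + 4) * (1 / p * ((1 + p * a) * q)) := by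
              gcongr
              calc a = 1 / p * ((0 + p * a) * 1) := by field_simp; ring
                _ ≤ _ := by gcongr; norm_num
            have j3 : (d + 1) * ∑ f' ∈ rays Y (Q f), ((confSet Y (confSet Y V f) f').card : ℝ) ≤
                (d + 1) * (4 * d ^ d) * C * (1 / p * ((1 + p * a) * q)) := by
              calc _ ≤ (d + 1) * ((4 * d ^ d) * q * (C / p)) := by gcongr
                _ = (d + 1) * (4 * d ^ d) * C * (1 / p * (1 * q)) := by ring
                _ ≤ _ := by gcongr
            calc _ ≤ _ := add_le_add j1 (add_le_add j2 j3)
              _ = _ := by ring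
        _ ≤ _ := by
            rw [← Finset.mul_sum]
            gcongr
    · rw [Finset.sum_const, nsmul_eq_mul]
      apply le_of_eq; ring
    · rw [← Finset.sum_mul]
      gcongr
      exact h.sum_groups_le hY hp.le (fun u hu => ⟨(hs u hu).1.1, (hs u hu).1.2.1⟩)
        (fun u hu f hf => ((hs u hu).2 f hf).2.1) g (by positivity)
  · rintro Y' _ ⟨k1, k2, k3, k4⟩ v hv u hu
    by_contra hcon
    push Not at hcon
    obtain ⟨c, hc, hcu, hcv⟩ := exists_cell (Y := Y) (Y' := Y') (R := R) (Q := Q) (I := I) (J := V)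
      (fun u hu => (hs u hu).1.1) (fun u hu f hf => ((hs u hu).2 f ((hs u hu).1.1 hf)).1)
      (fun u hu => (k3 u hu).1) (fun u hu => (k3 u hu).2) k1 k2 hu hv hcon
    exact absurd hcon (not_lt.2 (k4 c hc v hcv u hcu))

end

/-- A negative instance with at most `ν ^ (d/2 + 1)` vectors on each side has a certificate of
size `O(ν ^ (2 (d/2)))`. -/
theorem exists_cert_no (d : ℕ) (hd : 2 ≤ d) : ∃ C : ℝ, 0 ≤ C ∧
    ∀ (ι : Type) [Fintype ι] [DecidableEq ι] (Y : ι → Fin (d + 1) → ℝ), GP Y →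
    ∀ (I J : Finset ι) (ν : ℕ), 1 ≤ ν → I.card ≤ ν ^ (d / 2 + 1) → J.card ≤ ν ^ (d / 2 + 1) →
    (∀ v ∈ J, ∀ u ∈ I, Y v ⬝ᵥ Y u ≤ 0) →
    CertR Y (I ∪ J) (C * (ν : ℝ) ^ (2 * (d / 2))) (fun Y' => ∀ v ∈ J, ∀ u ∈ I, Y' v ⬝ᵥ Y' u ≤ 0) := by
  obtain ⟨C, r₀, hC, hr₀, hcut⟩ := exists_isCut d hd
  have hk : 1 ≤ d / 2 := by omega
  set A : ℝ := 2 * ((2 * d + 4) * r₀ + validConst d) with hA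
  set B : ℝ := (validConst d * C ^ (d / 2) + ((2 * d + 4) + (d + 1) * C)) +
    ((validConst d + (2 * d + 4) + (d + 1) * (4 * d ^ d) * C) * C + ((2 * d + 4) * (d + 2) +
      ((d + 1) * (d + 1) + 4 * d ^ d * C) * ((2 * d + 4) * C + validConst d))) with hB
  have hA0 : 0 ≤ A := by positivity
  have hB0 : 0 ≤ B := by positivity
  refine ⟨A + B, by positivity, fun ι _ _ Y hY I J ν hν hI hJ hno => ?_⟩
  have hν1 : (1:ℝ) ≤ ν := by exact_mod_cast hν
  have hI' : (I.card : ℝ) ≤ ν ^ (d / 2 + 1) := by exact_mod_cast hI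
  have hJ' : (J.card : ℝ) ≤ ν ^ (d / 2 + 1) := by exact_mod_cast hJ
  set k := d / 2
  set n : ℝ := (ν : ℝ) ^ k with hn
  have hn1 : 1 ≤ n := one_le_pow₀ hν1
  have hνn : (ν:ℝ) ≤ n := le_self_pow₀ hν1 (by omega)
  have e2 : (ν : ℝ) ^ (2 * k) = n * n := by rw [hn]; ring
  have e1 : (ν : ℝ) ^ (k + 1) = n * ν := by rw [hn]; ring
  have hnν : n * ν ≤ n * n := by gcongr
  have hnn : n ≤ n * n := by nlinarith
  rw [e1] at hI' hJ'
  rw [e2]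
  have hIν : (I.card : ℝ) / ν ≤ n := by rw [div_le_iff₀ (by linarith)]; exact hI'
  by_cases hs : (J.card : ℝ) < r₀ * n
  · refine (hY.cert_groups hd (X := I ∪ J) Finset.subset_union_right Finset.subset_union_left hno hν
      hs.le).mono ?_ fun _ _ h => h
    calc ((I.card : ℝ) / ν + 1) * ((2 * d + 4) * (r₀ * n) + validConst d * n)
        ≤ (n + n) * ((2 * d + 4) * (r₀ * n) + validConst d * n) := by gcongr
      _ = A * (n * n) := by rw [hA]; ring
      _ ≤ _ := by gcongr; linarith
  · push Not at hs
    have hn0 : 0 < n := by linarith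
    have hp1 : 1 / n ≤ 1 := by rw [div_le_one hn0]; exact hn1
    obtain ⟨R, Q, h⟩ := hcut ι Y hY J (1 / n) (by positivity) hp1 (by
      rw [one_div, ← div_eq_inv_mul, le_div_iff₀ hn0]; exact hs)
    refine (h.cert hd hY (X := I ∪ J) (by positivity) hp1 Finset.subset_union_left
      Finset.subset_union_right hno hν).mono ?_ fun _ _ h => h
    have hpJ : 1 / n * J.card ≤ ν := by
      rw [one_div, ← div_eq_inv_mul, div_le_iff₀ hn0]; linarith
    have hpJ0 : 0 ≤ 1 / n * J.card := by positivity
    have hpJk : (1 / n * J.card) ^ k ≤ n := by rw [hn]; gcongr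
    have hRk : (R.card : ℝ) ^ k ≤ C ^ k * n := by
      rw [hn, ← mul_pow]
      gcongr
      exact h.card_le.trans (by gcongr)
    calc _ ≤ (validConst d * (C ^ k * n) +
          ((2 * d + 4) * (n * ν) + (d + 1) * (1 / (1 / n) * (C * n)))) +
        ((validConst d + (2 * d + 4) + (d + 1) * (4 * d ^ d) * C) * (1 / (1 / n)) * (C * n) +
        ((2 * d + 4) * (d + 2) * (n * ν) +
        ((d + 1) * (d + 1) * n + 4 * d ^ d * (C * n)) *
          ((2 * d + 4) * (C / (1 / n)) + validConst d * n))) := by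
          have : ((d:ℝ) + 1) * (d + 1) * I.card / ν ≤ (d + 1) * (d + 1) * n := by
            rw [mul_div_assoc]; gcongr
          gcongr
      _ ≤ (validConst d * (C ^ k * (n * n)) +
          ((2 * d + 4) * (n * n) + (d + 1) * (n * (C * n)))) +
        ((validConst d + (2 * d + 4) + (d + 1) * (4 * d ^ d) * C) * n * (C * n) +
        ((2 * d + 4) * (d + 2) * (n * n) +
        ((d + 1) * (d + 1) * n + 4 * d ^ d * (C * n)) *
          ((2 * d + 4) * (C * n) + validConst d * n))) := by
          rw [one_div_one_div, div_div_eq_mul_div, div_one]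
          gcongr
      _ = B * (n * n) := by rw [hB]; ring
      _ ≤ _ := by gcongr; linarith

end Hopcroft

/-! ### Nets computed by few tests -/

namespace Hopcroft

open Matrix

set_option linter.unusedSectionVars false

variable {d : ℕ} {ι : Type} [Fintype ι] [DecidableEq ι]

/-- The ranges for which samples must be accurate: the whole space and intersections of two
open half-spaces bounded by hyperplanes through the origin. -/
def IsRange (P : (Fin (d + 1) → ℝ) → Prop) : Prop :=
  P = (fun _ => True) ∨ ∃ w w', w ≠ 0 ∧ w' ≠ 0 ∧ P = fun x => 0 < x ⬝ᵥ w ∧ 0 < x ⬝ᵥ w'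

open Classical in
/-- The members of `V` whose vector lies in the range `P`. -/
noncomputable def inRange (Y : ι → Fin (d + 1) → ℝ) (V : Finset ι)
    (P : (Fin (d + 1) → ℝ) → Prop) : Finset ι := V.filter fun v => P (Y v)

lemma mem_inRange {Y : ι → Fin (d + 1) → ℝ} {V : Finset ι} {P : (Fin (d + 1) → ℝ) → Prop} {v : ι} :
    v ∈ inRange Y V P ↔ v ∈ V ∧ P (Y v) := by simp [inRange]

/-- `A`, with every element counted `lam` times, hits every range at least as often as `J`
up to the additive error `η * |J|`. -/
def IsNet (Y : ι → Fin (d + 1) → ℝ) (J A : Finset ι) (lam η : ℝ) : Prop :=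
  ∀ P, IsRange P → ((inRange Y J P).card : ℝ) ≤ lam * (inRange Y A P).card + η * J.card

/-- For large `q` the tail bound for a sample beats the number of ranges in the union bound. -/
lemma exists_sample_size (d : ℕ) : ∃ q₀ : ℕ, ∀ q : ℕ, q₀ ≤ q →
    ((q : ℝ) ^ (12 * d) + 1) * Real.exp (-((q : ℝ) ^ 2) / 16) ≤ 1 / 2 := by
  have h1 := Real.tendsto_pow_mul_exp_neg_atTop_nhds_zero (6 * d)
  have h2 : Filter.Tendsto (fun q : ℕ => ((q : ℝ) ^ 2) / 16) Filter.atTop Filter.atTop :=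
    ((Filter.tendsto_pow_atTop two_ne_zero).comp tendsto_natCast_atTop_atTop).atTop_div_const
      (by norm_num)
  have h3 := (h1.comp h2).eventually (ge_mem_nhds (show (0:ℝ) < 1 / (4 * 16 ^ (6 * d)) by positivity))
  obtain ⟨q₀, hq₀⟩ := Filter.eventually_atTop.1 h3
  refine ⟨max q₀ 1, fun q hq => ?_⟩
  have hq1 : (1:ℝ) ≤ q := by exact_mod_cast (le_max_right _ _).trans hq
  have h4 := hq₀ q ((le_max_left _ _).trans hq)
  simp only [Function.comp] at h4
  have e : (q:ℝ) ^ (12 * d) = 16 ^ (6 * d) * ((q:ℝ) ^ 2 / 16) ^ (6 * d) := by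
    rw [← mul_pow, mul_div_cancel₀ _ (by norm_num), ← pow_mul]; congr 1; ring
  have h5 : (1:ℝ) ≤ (q:ℝ) ^ (12 * d) := one_le_pow₀ hq1
  rw [le_div_iff₀ (by positivity)] at h4
  have h6 : -((q:ℝ)^2) / 16 = -((q:ℝ)^2 / 16) := by ring
  rw [h6]
  have h7 := Real.exp_pos (-((q:ℝ)^2 / 16))
  calc _ ≤ (2 * (q:ℝ) ^ (12 * d)) * Real.exp (-((q:ℝ)^2 / 16)) := by gcongr; linarith
    _ ≤ 1 / 2 := by rw [e]; nlinarith

lemma card_le_add_of_subset_union {B B' : Finset ι} {f f' : Fin d → ι}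
    (h : ∀ v ∈ B, v ∉ Set.range f → v ∉ Set.range f' → v ∈ B') : B.card ≤ B'.card + 2 * d := by
  have h1 : B ⊆ B' ∪ (Finset.univ.image f ∪ Finset.univ.image f') := by
    intro v hv
    by_cases h1 : v ∈ Set.range f
    · obtain ⟨i, rfl⟩ := h1; simp
    by_cases h2 : v ∈ Set.range f'
    · obtain ⟨i, rfl⟩ := h2; simp
    · exact Finset.mem_union_left _ (h v hv h1 h2)
  have h2 := Finset.card_le_card h1
  have h3 := Finset.card_union_le B' (Finset.univ.image f ∪ Finset.univ.image f')
  have h4 := Finset.card_union_le (Finset.univ.image f) (Finset.univ.image f')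
  have h5 : (Finset.univ.image f).card ≤ d := Finset.card_image_le.trans (by simp)
  have h6 : (Finset.univ.image f').card ≤ d := Finset.card_image_le.trans (by simp)
  omega

/-- A small subset of a block that is accurate for all configurations with the same answers
on the block: all ranges are combinatorially close to intersections of two conflict sets,
whose number is polynomial. -/
lemma exists_block_net (hd : 2 ≤ d) {q : ℕ} (hq : 34 * d ≤ q)
    (hs : ((q : ℝ) ^ (12 * d) + 1) * Real.exp (-((q : ℝ) ^ 2) / 16) ≤ 1 / 2)
    {Y : ι → Fin (d + 1) → ℝ} {β : Finset ι} (hβ : β.card = q ^ 6) :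
    ∃ A ⊆ β, A.card ≤ q ^ 5 ∧ ∀ Y', GP Y' → (∀ t ∈ testsOn β, tst Y' t = tst Y t) →
      ∀ P, IsRange P → ((inRange Y' β P).card : ℝ) ≤ 16 * q * (inRange Y' A P).card + 2 * q ^ 3 := by
  classical
  have hq68 : 68 ≤ q := by omega
  have hqR : (68:ℝ) ≤ q := by exact_mod_cast hq68
  have hq0 : (0:ℝ) < q := by linarith
  let 𝒮 : Finset (Finset ι) := insert β
    (((Fintype.piFinset fun _ : Fin d => β) ×ˢ (Fintype.piFinset fun _ : Fin d => β)).image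
      fun c => confSet Y β c.1 ∩ confSet Y β c.2)
  have h𝒮 : ∀ S ∈ 𝒮, S ⊆ β := by
    intro S hS
    rcases Finset.mem_insert.1 hS with rfl | hS
    · exact subset_rfl
    · obtain ⟨c, -, rfl⟩ := Finset.mem_image.1 hS
      exact Finset.inter_subset_left.trans (confSet_subset _ _ _)
  have hcard : (𝒮.card : ℝ) ≤ (q:ℝ) ^ (12 * d) + 1 := by
    have h1 : 𝒮.card ≤ q ^ (12 * d) + 1 := by
      refine (Finset.card_insert_le _ _).trans (Nat.add_le_add_right (Finset.card_image_le.trans ?_) 1)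
      simp only [Finset.card_product, Fintype.card_piFinset, Finset.prod_const, Finset.card_univ,
        Fintype.card_fin, hβ]
      rw [← pow_mul, ← pow_add]
      exact (congrArg (q ^ ·) (by ring)).le
    exact_mod_cast h1
  obtain ⟨A, hA, hAc, hAS⟩ := exists_approx β 𝒮 h𝒮 (π := 1 / (4 * q)) (m := q ^ 3) (by positivity)
    (by rw [div_le_one (by positivity)]; linarith)
    (by
      rw [hβ]; push_cast
      rw [div_mul_eq_mul_div, le_div_iff₀ (by positivity)]
      have : (1:ℝ) ≤ q ^ 4 := one_le_pow₀ (by linarith)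
      calc (1:ℝ) * (4 * q) ≤ q * q := by nlinarith
        _ ≤ q * q * q ^ 4 := le_mul_of_one_le_right (by positivity) this
        _ = 1 * q ^ 6 := by ring)
    (by
      have : -(1 / (4 * (q:ℝ)) * q ^ 3) / 4 = -((q : ℝ) ^ 2) / 16 := by field_simp; norm_num
      rw [this]
      exact le_trans (by gcongr) hs)
  have hall : ∀ S ∈ 𝒮, (S.card : ℝ) ≤ 16 * q * (A ∩ S).card + q ^ 3 := by
    intro S hS
    by_cases h : (q:ℝ) ^ 3 ≤ S.card
    · have h1 := hAS S hS h
      rw [div_mul_eq_mul_div, div_div, div_le_iff₀ (by positivity)] at h1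
      have : (0:ℝ) ≤ q ^ 3 := by positivity
      linarith
    · push Not at h
      have : (0:ℝ) ≤ 16 * q * (A ∩ S).card := by positivity
      linarith
  refine ⟨A, hA, ?_, fun Y' hY' hag P hP => ?_⟩
  · have e : 4 * (1 / (4 * (q:ℝ)) * (β.card : ℝ)) = q ^ 5 := by
      rw [hβ]; push_cast; field_simp
    rw [e] at hAc
    exact_mod_cast hAc
  · have hq3 : (q:ℝ) * (34 * d) ≤ q ^ 3 := by
      have : (34 * d : ℝ) ≤ q := by exact_mod_cast hq
      calc (q:ℝ) * (34 * d) ≤ q * q := by gcongr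
        _ ≤ q * q * q := le_mul_of_one_le_right (by positivity) (by linarith)
        _ = q ^ 3 := by ring
    have hq3' : (0:ℝ) ≤ q ^ 3 := by positivity
    rcases hP with rfl | ⟨w, w', hw, hw', rfl⟩
    · have h1 := hall β (Finset.mem_insert_self _ _)
      rw [Finset.inter_eq_left.2 hA] at h1
      simp only [inRange, Finset.filter_true]
      linarith
    · have hβ' : d + 1 ≤ β.card := by
        rw [hβ]
        calc d + 1 ≤ q := by omega
          _ ≤ q ^ 6 := Nat.le_self_pow (by norm_num) q
      obtain ⟨f, hf, hfβ, hfw⟩ := hY'.exists_canonical hd hβ' hw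
      obtain ⟨f', hf', hfβ', hfw'⟩ := hY'.exists_canonical hd hβ' hw'
      have hconf : ∀ g : Fin d → ι, (∀ i, g i ∈ β) → ∀ v ∈ β, (Conf Y' g v ↔ Conf Y g v) := by
        intro g hg v hv
        rw [← tst_confTest, ← tst_confTest, hag _ (confTest_mem hg hv)]
      set S := confSet Y β f ∩ confSet Y β f' with hSdef
      have hS : S ∈ 𝒮 := Finset.mem_insert_of_mem
        (Finset.mem_image.2 ⟨(f, f'), by simp [hfβ, hfβ'], rfl⟩)
      set P : (Fin (d + 1) → ℝ) → Prop := fun x => 0 < x ⬝ᵥ w ∧ 0 < x ⬝ᵥ w' with hP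
      have key : ∀ v ∈ β, v ∉ Set.range f → v ∉ Set.range f' → (v ∈ S ↔ P (Y' v)) := by
        intro v hv h1 h2
        simp only [hSdef, Finset.mem_inter, mem_confSet, hv, true_and, hP]
        rw [hfw v hv h1, hfw' v hv h2, hconf f hfβ v hv, hconf f' hfβ' v hv]
      have h1 : (inRange Y' β P).card ≤ S.card + 2 * d :=
        card_le_add_of_subset_union fun v hv h1 h2 => by
          obtain ⟨h3, h4⟩ := mem_inRange.1 hv
          exact (key v h3 h1 h2).2 h4
      have h2 : (A ∩ S).card ≤ (inRange Y' A P).card + 2 * d :=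
        card_le_add_of_subset_union fun v hv h1 h2 => by
          obtain ⟨h3, h4⟩ := Finset.mem_inter.1 hv
          exact mem_inRange.2 ⟨h3, (key v (hA h3) h1 h2).1 h4⟩
      have h3 := hall S hS
      have h1' : ((inRange Y' β P).card : ℝ) ≤ S.card + 2 * d := by exact_mod_cast h1
      have h2' : ((A ∩ S).card : ℝ) ≤ (inRange Y' A P).card + 2 * d := by exact_mod_cast h2
      have h4 : 16 * (q:ℝ) * (A ∩ S).card ≤ 16 * q * ((inRange Y' A P).card + 2 * d) := by gcongr
      have h5 : (2:ℝ) * d ≤ q * (2 * d) := le_mul_of_one_le_left (by positivity) (by linarith)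
      linarith

lemma card_testsOn_le (hd : 2 ≤ d) {X : Finset ι} {x : ℕ} (hX : X.card ≤ x) (hx : d + 3 ≤ x) :
    (testsOn X : Finset (Test d ι)).card ≤ x ^ (d + 2) ^ 2 := by
  rw [card_testsOn]
  have h1 : x + (x ^ d + (d + 1)) ≤ x ^ (d + 1) := by
    have h2 : 2 * x ≤ x ^ d := by
      calc 2 * x ≤ x * x := by gcongr; omega
        _ = x ^ 2 := by ring
        _ ≤ x ^ d := Nat.pow_le_pow_right (by omega) hd
    calc x + (x ^ d + (d + 1)) ≤ x ^ d + 2 * x := by omega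
      _ ≤ 2 * x ^ d := by omega
      _ ≤ x * x ^ d := by gcongr; omega
      _ = x ^ (d + 1) := by ring
  calc X.card ^ 2 + 2 * (X.card + (X.card ^ d + (d + 1))) ^ (d + 1)
      ≤ x ^ 2 + 2 * (x + (x ^ d + (d + 1))) ^ (d + 1) := by gcongr
    _ ≤ x ^ 2 + 2 * (x ^ (d + 1)) ^ (d + 1) := by gcongr
    _ ≤ x ^ ((d + 1) * (d + 1)) + 2 * x ^ ((d + 1) * (d + 1)) := by
        rw [← pow_mul]
        have : x ^ 2 ≤ x ^ ((d + 1) * (d + 1)) := Nat.pow_le_pow_right (by omega) (by nlinarith)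
        omega
    _ = 3 * x ^ ((d + 1) * (d + 1)) := by ring
    _ ≤ x * x ^ ((d + 1) * (d + 1)) := by gcongr; omega
    _ = x ^ ((d + 1) * (d + 1) + 1) := by ring
    _ ≤ x ^ (d + 2) ^ 2 := Nat.pow_le_pow_right (by omega) (by nlinarith)

lemma IsNet.refl (Y : ι → Fin (d + 1) → ℝ) (J : Finset ι) {η : ℝ} (hη : 0 ≤ η) : IsNet Y J J 1 η := by
  intro P _
  have : 0 ≤ η * J.card := by positivity
  linarith

lemma IsNet.trans {Y : ι → Fin (d + 1) → ℝ} {J A B : Finset ι} {lam lam' η η' K : ℝ}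
    (h : IsNet Y J A lam η) (h' : IsNet Y A B lam' η') (hl : 0 ≤ lam) (hη : 0 ≤ η')
    (hK : lam * A.card ≤ K * J.card) : IsNet Y J B (lam * lam') (K * η' + η) := by
  intro P hP
  have h1 := h P hP
  have h2 := mul_le_mul_of_nonneg_left (h' P hP) hl
  have h3 := mul_le_mul_of_nonneg_left hK hη
  linarith

lemma IsNet.card_le {Y : ι → Fin (d + 1) → ℝ} {J A : Finset ι} {lam η : ℝ}
    (h : IsNet Y J A lam η) : (J.card : ℝ) ≤ lam * A.card + η * J.card := by
  simpa [inRange] using h _ (Or.inl rfl)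

/-- One round of thinning: `J` is cut into blocks, all tests inside the blocks are asked, and
every block is replaced by a sample smaller by the factor `q`. -/
lemma solves_net_round (hd : 2 ≤ d) {q : ℕ} (hq : 34 * d ≤ q)
    (hs : ((q : ℝ) ^ (12 * d) + 1) * Real.exp (-((q : ℝ) ^ 2) / 16) ≤ 1 / 2)
    {S : Set (ι → Fin (d + 1) → ℝ)} (hS : ∀ Y ∈ S, GP Y) {J : Finset ι} (hJ : q ^ 9 ≤ J.card) :
    Solves tst S (J.card * (q:ℝ) ^ (6 * (d + 2) ^ 2)) (fun Y A =>
      A ⊆ J ∧ q * A.card ≤ J.card ∧ IsNet Y J A (16 * q) (1 / (q:ℝ) ^ 2)) := by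
  classical
  have hq68 : 68 ≤ q := by omega
  have hqR : (68:ℝ) ≤ q := by exact_mod_cast hq68
  have hq0 : (0:ℝ) < q := by linarith
  obtain ⟨𝒢, Z, h1, h2, h3, h4⟩ := exists_blocks (g := q ^ 6) (Nat.one_le_pow _ _ (by omega)) J
  have hcard : (𝒢.biUnion id).card = 𝒢.card * q ^ 6 := by
    rw [Finset.card_biUnion h2]
    exact (Finset.sum_congr rfl fun G hG => (h1 G hG).2).trans (by simp)
  have hle : 𝒢.card * q ^ 6 ≤ J.card := by
    rw [← hcard]; exact Finset.card_le_card (h4 ▸ Finset.subset_union_left)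
  have hle' : 𝒢.card ≤ J.card :=
    (Nat.le_mul_of_pos_right _ (pow_pos (by omega) 6)).trans hle
  have hQ : ((𝒢.biUnion fun G => (testsOn G : Finset (Test d ι))).card : ℝ) + 0 ≤
      J.card * (q:ℝ) ^ (6 * (d + 2) ^ 2) := by
    have : (𝒢.biUnion fun G => (testsOn G : Finset (Test d ι))).card ≤
        J.card * q ^ (6 * (d + 2) ^ 2) := by
      calc _ ≤ 𝒢.card * (q ^ (6 * (d + 2) ^ 2)) := by
            refine Finset.card_biUnion_le_card_mul _ _ _ fun G hG => ?_
            rw [pow_mul]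
            refine card_testsOn_le hd (h1 G hG).2.le ?_
            exact le_trans (by omega) (Nat.le_self_pow (by norm_num : (6:ℕ) ≠ 0) q)
        _ ≤ _ := Nat.mul_le_mul_right _ hle'
    rw [add_zero]; exact_mod_cast this
  refine Solves.mono (Solves.learn (c := 0) le_rfl (𝒢.biUnion fun G => testsOn G) fun Y hY => ?_)
    subset_rfl hQ (fun _ _ _ h => h)
  have h5 : ∀ G : Finset ι, ∃ A : Finset ι, G ∈ 𝒢 → A ⊆ G ∧ A.card ≤ q ^ 5 ∧
      ∀ Y', GP Y' → (∀ t ∈ testsOn G, tst Y' t = tst Y t) → ∀ P, IsRange P →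
        ((inRange Y' G P).card : ℝ) ≤ 16 * q * (inRange Y' A P).card + 2 * q ^ 3 := by
    intro G
    by_cases hG : G ∈ 𝒢
    · obtain ⟨A, a1, a2, a3⟩ := exists_block_net (Y := Y) hd hq hs (h1 G hG).2
      exact ⟨A, fun _ => ⟨a1, a2, a3⟩⟩
    · exact ⟨∅, fun h => (hG h).elim⟩
  choose A hA using h5
  have hdisj : (𝒢 : Set (Finset ι)).PairwiseDisjoint A := fun G hG G' hG' hne =>
    Finset.disjoint_of_subset_left (hA G hG).1
      (Finset.disjoint_of_subset_right (hA G' hG').1 (h2 hG hG' hne))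
  refine Solves.ret (𝒢.biUnion A) le_rfl fun Y' hY' => ⟨?_, ?_, fun P hP => ?_⟩
  · intro v hv
    obtain ⟨G, hG, hv⟩ := Finset.mem_biUnion.1 hv
    exact (h1 G hG).1 ((hA G hG).1 hv)
  · calc q * (𝒢.biUnion A).card ≤ q * (𝒢.card * q ^ 5) := by
          gcongr
          exact Finset.card_biUnion_le_card_mul _ _ _ fun G hG => (hA G hG).2.1
      _ = 𝒢.card * q ^ 6 := by ring
      _ ≤ J.card := hle
  · have b1 : inRange Y' J P ⊆ (𝒢.biUnion fun G => inRange Y' G P) ∪ Z := by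
      intro v hv
      obtain ⟨hv, hPv⟩ := mem_inRange.1 hv
      rw [h4] at hv
      rcases Finset.mem_union.1 hv with hv | hv
      · obtain ⟨G, hG, hv⟩ := Finset.mem_biUnion.1 hv
        exact Finset.mem_union_left _ (Finset.mem_biUnion.2 ⟨G, hG, mem_inRange.2 ⟨hv, hPv⟩⟩)
      · exact Finset.mem_union_right _ hv
    have b2 : ((inRange Y' J P).card : ℝ) ≤ ∑ G ∈ 𝒢, ((inRange Y' G P).card : ℝ) + q ^ 6 := by
      have : (inRange Y' J P).card ≤ ∑ G ∈ 𝒢, (inRange Y' G P).card + q ^ 6 :=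
        (Finset.card_le_card b1).trans ((Finset.card_union_le _ _).trans
          (add_le_add Finset.card_biUnion_le h3.le))
      exact_mod_cast this
    have b3 : ∑ G ∈ 𝒢, ((inRange Y' G P).card : ℝ) ≤
        ∑ G ∈ 𝒢, (16 * q * ((inRange Y' (A G) P).card : ℝ) + 2 * q ^ 3) :=
      Finset.sum_le_sum fun G hG => (hA G hG).2.2 Y' (hS Y' hY'.1)
        (fun t ht => hY'.2 t (Finset.mem_biUnion.2 ⟨G, hG, ht⟩)) P hP
    have b4 : inRange Y' (𝒢.biUnion A) P = 𝒢.biUnion fun G => inRange Y' (A G) P := by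
      ext v
      simp only [mem_inRange, Finset.mem_biUnion]
      tauto
    have b5 : ((inRange Y' (𝒢.biUnion A) P).card : ℝ) = ∑ G ∈ 𝒢, ((inRange Y' (A G) P).card : ℝ) := by
      rw [b4, Finset.card_biUnion]
      · push_cast; rfl
      · intro G hG G' hG' hne
        exact Finset.disjoint_of_subset_left (Finset.filter_subset _ _)
          (Finset.disjoint_of_subset_right (Finset.filter_subset _ _) (hdisj hG hG' hne))
    rw [Finset.sum_add_distrib, ← Finset.mul_sum, ← b5, Finset.sum_const, nsmul_eq_mul] at b3
    have hleR : (𝒢.card : ℝ) * q ^ 6 ≤ J.card := by exact_mod_cast hle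
    have hJR : (q:ℝ) ^ 9 ≤ J.card := by exact_mod_cast hJ
    have b6 : (𝒢.card : ℝ) * (2 * q ^ 3) ≤ 2 / q ^ 3 * J.card := by
      rw [div_mul_eq_mul_div, le_div_iff₀ (by positivity)]
      linarith [hleR, show (𝒢.card : ℝ) * (2 * q ^ 3) * q ^ 3 = 2 * (𝒢.card * q ^ 6) by ring]
    have b7 : (q:ℝ) ^ 6 ≤ 1 / q ^ 3 * J.card := by
      rw [div_mul_eq_mul_div, le_div_iff₀ (by positivity)]
      linarith [show (q:ℝ) ^ 6 * q ^ 3 = q ^ 9 by ring]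
    have b8 : 2 / (q:ℝ) ^ 3 + 1 / q ^ 3 ≤ 1 / q ^ 2 := by
      rw [← add_div, div_le_div_iff₀ (by positivity) (by positivity)]
      have : (0:ℝ) ≤ q ^ 2 := by positivity
      nlinarith
    have b9 := mul_le_mul_of_nonneg_right b8 (Nat.cast_nonneg (α := ℝ) J.card)
    linarith

/-- Iterated thinning down to a sample of size polynomial in `q`. -/
theorem solves_net (hd : 2 ≤ d) {q : ℕ} (hq : 34 * d ≤ q)
    (hs : ((q : ℝ) ^ (12 * d) + 1) * Real.exp (-((q : ℝ) ^ 2) / 16) ≤ 1 / 2)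
    {S : Set (ι → Fin (d + 1) → ℝ)} (hS : ∀ Y ∈ S, GP Y) (r : ℕ) {J : Finset ι}
    (hJ : J.card ≤ q ^ (9 + r)) (hJ2 : q ^ 2 ≤ J.card) :
    Solves tst S (r * (J.card * (q:ℝ) ^ (6 * (d + 2) ^ 2))) (fun Y (A : Finset ι × ℝ) =>
      A.1 ⊆ J ∧ q ^ 2 ≤ A.1.card ∧ A.1.card ≤ q ^ 9 ∧ 0 ≤ A.2 ∧
        A.2 * A.1.card ≤ 16 ^ r * J.card ∧ IsNet Y J A.1 A.2 (17 ^ r / (q:ℝ) ^ 2)) := by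
  have hq68 : 68 ≤ q := by omega
  have hqR : (68:ℝ) ≤ q := by exact_mod_cast hq68
  have hq0 : (0:ℝ) < q := by linarith
  induction r generalizing S J with
  | zero =>
    exact Solves.ret (J, 1) (by simp) fun Y _ =>
      ⟨subset_rfl, hJ2, by simpa using hJ, by simp, by simp, IsNet.refl _ _ (by positivity)⟩
  | succ r ih =>
    by_cases hJ9 : J.card ≤ q ^ 9
    · refine Solves.ret (J, 1) (by positivity) fun Y _ =>
        ⟨subset_rfl, hJ2, hJ9, by simp, ?_, IsNet.refl _ _ (by positivity)⟩
      have : (1:ℝ) ≤ 16 ^ (r + 1) := one_le_pow₀ (by norm_num)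
      exact mul_le_mul_of_nonneg_right this (by positivity)
    push Not at hJ9
    have hc : (0:ℝ) ≤ r * (J.card * (q:ℝ) ^ (6 * (d + 2) ^ 2)) := by positivity
    refine (Solves.bind hc (solves_net_round hd hq hs hS hJ9.le) fun A => ?_).mono subset_rfl
      (by push_cast; linarith) (fun _ _ _ h => h)
    by_cases hne : ({Y ∈ S | A ⊆ J ∧ q * A.card ≤ J.card ∧
        IsNet Y J A (16 * q) (1 / (q:ℝ) ^ 2)} : Set _).Nonempty
    swap
    · exact Solves.ret (A, 0) hc fun Y hY => (hne ⟨Y, hY⟩).elim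
    obtain ⟨Y₀, -, hAJ, hAc, hAn⟩ := hne
    have hA9 : A.card ≤ q ^ (9 + r) := by
      have : q * A.card ≤ q * q ^ (9 + r) := hAc.trans (hJ.trans (by rw [← pow_succ']; rfl))
      exact Nat.le_of_mul_le_mul_left this (by omega)
    have hA2 : q ^ 2 ≤ A.card := by
      have h1 := hAn.card_le
      have hJ9R : (q:ℝ) ^ 9 ≤ J.card := by exact_mod_cast hJ9.le
      have h2 : 1 / (q:ℝ) ^ 2 ≤ 1 / 2 :=
        one_div_le_one_div_of_le (by norm_num) (by nlinarith)
      have h3 := mul_le_mul_of_nonneg_right h2 (Nat.cast_nonneg (α := ℝ) J.card)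
      have h4 : (q:ℝ) ^ 9 ≤ 32 * q * A.card := by linarith
      have h5 : (32 * q * q ^ 2 : ℝ) ≤ 32 * q * A.card := by
        refine le_trans ?_ h4
        have h7 : (1:ℝ) ≤ q ^ 5 := one_le_pow₀ (by linarith)
        calc (32 * q * q ^ 2 : ℝ) ≤ q * q * q ^ 2 := by gcongr; linarith
          _ ≤ q * q * q ^ 2 * q ^ 5 := le_mul_of_one_le_right (by positivity) h7
          _ = q ^ 9 := by ring
      have h6 := le_of_mul_le_mul_left h5 (by positivity)
      exact_mod_cast h6
    have hAJc : (A.card : ℝ) ≤ J.card := by exact_mod_cast Finset.card_le_card hAJ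
    have hAcR : (q:ℝ) * A.card ≤ J.card := by exact_mod_cast hAc
    refine (ih (S := {Y ∈ S | A ⊆ J ∧ q * A.card ≤ J.card ∧
        IsNet Y J A (16 * q) (1 / (q:ℝ) ^ 2)}) (fun Y hY => hS Y hY.1) hA9 hA2).bind
        (c' := 0) le_rfl (P' := _) (fun B => Solves.ret (B.1, 16 * q * B.2) le_rfl ?_) |>.mono
      subset_rfl (by rw [add_zero]; gcongr) (fun _ _ _ h => h)
    rintro Y ⟨⟨hY, -, -, hn⟩, b1, b2, b3, b4, b5, b6⟩
    refine ⟨b1.trans hAJ, b2, b3, by positivity, ?_, ?_⟩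
    · dsimp only
      calc 16 * (q:ℝ) * B.2 * B.1.card = 16 * q * (B.2 * B.1.card) := by ring
        _ ≤ 16 * q * (16 ^ r * A.card) := by gcongr
        _ = 16 ^ (r + 1) * (q * A.card) := by ring
        _ ≤ 16 ^ (r + 1) * J.card := by gcongr
    · have h1 := hn.trans b6 (by positivity) (by positivity) (K := 16) (by linarith)
      intro P hP
      refine (h1 P hP).trans ?_
      gcongr
      have h17 : (1:ℝ) ≤ 17 ^ r := one_le_pow₀ (by norm_num)
      rw [mul_div_assoc', ← add_div]
      gcongr
      rw [pow_succ]; linarith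

end Hopcroft

/-! ### The splitting step -/

namespace Hopcroft

open Matrix

set_option linter.unusedSectionVars false

variable {d : ℕ} {ι : Type} [Fintype ι] [DecidableEq ι]

/-- Some vector indexed by `x.1` has positive inner product with some vector indexed by `x.2`. -/
def HasPos (Y : ι → Fin (d + 1) → ℝ) (x : Finset ι × Finset ι) : Prop :=
  ∃ u ∈ x.1, ∃ v ∈ x.2, 0 < Y v ⬝ᵥ Y u

lemma HasPos.mono {Y : ι → Fin (d + 1) → ℝ} {x x' : Finset ι × Finset ι} (h : HasPos Y x)
    (h1 : x.1 ⊆ x'.1) (h2 : x.2 ⊆ x'.2) : HasPos Y x' := by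
  obtain ⟨u, hu, v, hv, h⟩ := h
  exact ⟨u, h1 hu, v, h2 hv, h⟩

lemma hasPos_swap {Y : ι → Fin (d + 1) → ℝ} {x : Finset ι × Finset ι} :
    HasPos Y x.swap ↔ HasPos Y x := by
  constructor <;> rintro ⟨u, hu, v, hv, h⟩ <;> exact ⟨v, hv, u, hu, by rwa [dotProduct_comm]⟩

/-- `L` is a list of at most `N` subproblems of sizes at most `m` and `n`, equivalent to `x`. -/
def IsSplit (x : Finset ι × Finset ι) (N : ℝ) (m n : ℕ) (Y : ι → Fin (d + 1) → ℝ)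
    (L : List (Finset ι × Finset ι)) : Prop :=
  (L.length : ℝ) ≤ N ∧ (∀ z ∈ L, z.1.card ≤ m ∧ z.2.card ≤ n) ∧
    (HasPos Y x ↔ ∃ z ∈ L, HasPos Y z)

/-- The subproblems determined by a cutting of a sample `A` at `Y`, with correctness for every
configuration `Y'` that has the same answers on the sample plus one further element. -/
lemma exists_split_of_isCut (hd : 2 ≤ d) {Y : ι → Fin (d + 1) → ℝ} (hY : GP Y) {I J A R : Finset ι}
    {Q : (Fin d → ι) → Finset ι} {p C : ℝ} (hp : 0 ≤ p) (h : IsCut Y A p C R Q) (hAJ : A ⊆ J)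
    {g n' : ℕ} (hg : 1 ≤ g) (hn' : 1 ≤ n') {N : ℝ} (hN1 : 1 ≤ N)
    (hN : (d + 1) * (d + 1) * I.card / (g : ℝ) + 4 * d ^ d * (C * (p * A.card) ^ (d / 2)) ≤ N)
    (hsz : ∀ c ∈ cells Y R Q, (confSet Y J c.1 ∩ confSet Y J c.2).card ≤ n') :
    ∃ L, ∀ Y', GP Y' →
      (∀ x ∈ I ∪ J, ∀ t ∈ testsOn (insert x A), tst Y' t = tst Y t) →
        IsSplit (I, J) N g n' Y' L := by
  classical
  by_cases hpos : ∃ u ∈ I, ∃ a ∈ A, 0 < Y a ⬝ᵥ Y u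
  · obtain ⟨u, hu, a, ha, hua⟩ := hpos
    refine ⟨[({u}, {a})], fun Y' hY' hag => ⟨by simpa using hN1, by simp [hg, hn'], ?_⟩⟩
    have h1 := hag u (Finset.mem_union_left _ hu) (Sum.inl (a, u)) (by simp [ha])
    rw [tst_eq_iff] at h1
    have h2 : 0 < Y' a ⬝ᵥ Y' u := h1.2 hua
    exact iff_of_true ⟨u, hu, a, hAJ ha, h2⟩
      ⟨({u}, {a}), by simp, u, by simp, a, by simp, h2⟩
  push Not at hpos
  obtain ⟨s, s', hs⟩ := h.exists_supports hd hY (I := I)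
    (fun u hu a ha => hpos u hu a (h.subset ha)) (fun u hu f _ a ha => hpos u hu a (h.subset' f ha))
  choose 𝒢 h𝒢 using fun c => exists_groups hg (cellPts I s s' c)
  let L : Finset (Finset ι × Finset ι) := (cells Y R Q).biUnion fun c =>
    (𝒢 c).image fun G => (G, confSet Y J c.1 ∩ confSet Y J c.2)
  have hL : ∀ z, z ∈ L ↔ ∃ c ∈ cells Y R Q, ∃ G ∈ 𝒢 c, (G, confSet Y J c.1 ∩ confSet Y J c.2) = z := by
    intro z; simp only [L, Finset.mem_biUnion, Finset.mem_image]
  refine ⟨L.toList, fun Y' hY' hag => ⟨?_, ?_, ?_⟩⟩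
  · rw [Finset.length_toList]
    have h1 : L.card ≤ ∑ c ∈ cells Y R Q, (𝒢 c).card :=
      Finset.card_biUnion_le.trans (Finset.sum_le_sum fun c _ => Finset.card_image_le)
    have h2 : (L.card : ℝ) ≤ ∑ c ∈ cells Y R Q, ((𝒢 c).card : ℝ) := by exact_mod_cast h1
    refine h2.trans ((Finset.sum_le_sum fun c _ => (h𝒢 c).2.2).trans ?_)
    exact (h.sum_groups_le hY hp (fun u hu => ⟨(hs u hu).1.1, (hs u hu).1.2.1⟩)
      (fun u hu f hf => ((hs u hu).2 f hf).2.1) g (by positivity)).trans hN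
  · intro z hz
    obtain ⟨c, hc, G, hG, rfl⟩ := (hL z).1 (Finset.mem_toList.1 hz)
    exact ⟨((h𝒢 c).1 G hG).2, hsz c hc⟩
  · have hagu : ∀ u ∈ I, ∀ (F : Finset (Fin d → ι)) (B : Finset ι), B ⊆ A → F ⊆ rays Y B →
        InCone (vec Y) (rayGens F) (Y u) → InCone (vec Y') (rayGens F) (Y' u) := by
      intro u hu F B hB hF hc
      obtain ⟨T, hT, -, hT'⟩ := Cert.cone (X := insert u A) (z := Sum.inl u)
        (rayGens_subset hF (hB.trans (Finset.subset_insert _ _))) (by simp) hc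
      exact hT' Y' hY' fun t ht => hag u (Finset.mem_union_left _ hu) t (hT ht)
    have hconf : ∀ v ∈ J, ∀ B ⊆ A, ∀ f ∈ rays Y B, Conf Y' f v → Conf Y f v := by
      intro v hv B hB f hf hc
      rw [← tst_confTest] at hc ⊢
      rw [← hc]
      refine (hag v (Finset.mem_union_right _ hv) _ (confTest_mem (fun i => ?_) (by simp))).symm
      exact Finset.mem_insert_of_mem (hB ((mem_rays.1 hf).2.1 i))
    constructor
    · rintro ⟨u, hu, v, hv, huv⟩
      obtain ⟨c, hc, huc, hvc⟩ := exists_cell (Y := Y) (Y' := Y') (R := R) (Q := Q) (s := s) (s' := s')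
        (fun u hu => (hs u hu).1.1) (fun u hu f hf => ((hs u hu).2 f ((hs u hu).1.1 hf)).1)
        (fun u hu => hagu u hu _ R h.subset (hs u hu).1.1 (hs u hu).1.2.2)
        (fun u hu f hf => hagu u hu _ (Q f) (h.subset' f) ((hs u hu).2 f ((hs u hu).1.1 hf)).1
          ((hs u hu).2 f ((hs u hu).1.1 hf)).2.2)
        (fun v hv => hconf v hv R h.subset)
        (fun f _ v hv => hconf v (confSet_subset _ _ _ hv) (Q f) (h.subset' f)) hu hv huv
      obtain ⟨G, hG, huG⟩ := (h𝒢 c).2.1 u huc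
      exact ⟨_, Finset.mem_toList.2 ((hL _).2 ⟨c, hc, G, hG, rfl⟩), u, huG, v, hvc, huv⟩
    · rintro ⟨z, hz, hpz⟩
      obtain ⟨c, hc, G, hG, rfl⟩ := (hL z).1 (Finset.mem_toList.1 hz)
      exact hpz.mono (((h𝒢 c).1 G hG).1.trans (Finset.filter_subset _ _))
        (Finset.inter_subset_left.trans (confSet_subset _ _ _))

lemma GP.ray_ne_zero {Y : ι → Fin (d + 1) → ℝ} (hY : GP Y) {R V : Finset ι} (hV : d + 1 ≤ V.card)
    {f : Fin d → ι} (hf : f ∈ rays Y R) : ray Y f ≠ 0 := by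
  obtain ⟨v, -, hv⟩ := exists_notMem_range hV f
  intro h0
  have := hY.dot_ray_ne (mem_rays.1 hf).1 hv
  rw [h0, dotProduct_zero] at this
  exact this rfl

lemma card_confSet_inter (Y : ι → Fin (d + 1) → ℝ) (V : Finset ι) (f f' : Fin d → ι) :
    inRange Y V (fun x => 0 < x ⬝ᵥ ray Y f ∧ 0 < x ⬝ᵥ ray Y f') = confSet Y V f ∩ confSet Y V f' := by
  ext v
  simp only [mem_inRange, Finset.mem_inter, mem_confSet, Conf]
  tauto

set_option maxHeartbeats 1000000 in
/-- One step of the divide and conquer scheme: a problem of size `q ^ a × q ^ b` is reduced to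
`O(q ^ (d / 2))` problems of size `q ^ (a - d / 2) × q ^ (b - 1)`. -/
theorem solves_step (d : ℕ) (hd : 2 ≤ d) (r : ℕ) : ∃ (C : ℝ) (q₀ : ℕ), 1 ≤ C ∧ ∀ q : ℕ, q₀ ≤ q →
    ∀ (ι : Type) [Fintype ι] [DecidableEq ι] (S : Set (ι → Fin (d + 1) → ℝ)), (∀ Y ∈ S, GP Y) →
    ∀ a b : ℕ, d / 2 ≤ a → 3 ≤ b → b ≤ 9 + r → ∀ x : Finset ι × Finset ι,
      x.1.card ≤ q ^ a → x.2.card ≤ q ^ b →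
      Solves tst S (C * (((q:ℝ) ^ a + (q:ℝ) ^ b) * (q:ℝ) ^ (10 * (d + 2) ^ 2)))
        (fun Y L => IsSplit x (C * (q:ℝ) ^ (d / 2)) (q ^ (a - d / 2)) (q ^ (b - 1)) Y L) := by
  classical
  obtain ⟨C, r₀, hC1, hr₀, hcut⟩ := exists_isCut d hd
  obtain ⟨q₁, hq₁⟩ := exists_sample_size d
  set Nc : ℝ := (d + 1) * (d + 1) + 4 * d ^ d * (C * (16 ^ r * (2 * C * r₀)) ^ (d / 2)) + 2 with hNc
  have hNc2 : 2 ≤ Nc := by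
    have : 0 ≤ 4 * (d:ℝ) ^ d * (C * (16 ^ r * (2 * C * r₀)) ^ (d / 2)) := by positivity
    have : 0 ≤ ((d:ℝ) + 1) * (d + 1) := by positivity
    rw [hNc]; linarith
  refine ⟨Nc + r + 1, max (max q₁ (34 * d)) (max (2 * 17 ^ r) ⌈16 ^ r * (2 * C * r₀)⌉₊),
    by linarith [Nat.cast_nonneg (α := ℝ) r],
    fun q hqq ι _ _ S hS a b hka hb hbr x hI hJ => ?_⟩
  obtain ⟨I, J⟩ := x
  dsimp only at hI hJ
  have hqs := hq₁ q (((le_max_left _ _).trans (le_max_left _ _)).trans hqq)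
  have hq34 : 34 * d ≤ q := ((le_max_right _ _).trans (le_max_left _ _)).trans hqq
  have hq17 : 2 * 17 ^ r ≤ q := ((le_max_left _ _).trans (le_max_right _ _)).trans hqq
  have hq16 : 16 ^ r * (2 * C * r₀) ≤ q :=
    (Nat.le_ceil _).trans (by exact_mod_cast ((le_max_right _ _).trans (le_max_right _ _)).trans hqq)
  have hq68 : 68 ≤ q := by omega
  have hqR : (68:ℝ) ≤ q := by exact_mod_cast hq68
  have hq0 : (0:ℝ) < q := by linarith
  have hqk : (1:ℝ) ≤ (q:ℝ) ^ (d / 2) := one_le_pow₀ (by linarith)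
  have hg1 : 1 ≤ q ^ (a - d / 2) := Nat.one_le_pow _ _ (by omega)
  have hn1 : 1 ≤ q ^ (b - 1) := Nat.one_le_pow _ _ (by omega)
  have hIR : (I.card : ℝ) ≤ (q:ℝ) ^ a := by exact_mod_cast hI
  have hJR : (J.card : ℝ) ≤ (q:ℝ) ^ b := by exact_mod_cast hJ
  have hdiv : (I.card : ℝ) / ((q ^ (a - d / 2) : ℕ) : ℝ) ≤ (q:ℝ) ^ (d / 2) := by
    push_cast
    rw [div_le_iff₀ (by positivity), ← pow_add]
    rwa [show d / 2 + (a - d / 2) = a by omega]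
  have hqb : (q:ℝ) ^ b = q ^ (b - 1) * q := by rw [← pow_succ]; congr 1; omega
  have hNle : Nc * (q:ℝ) ^ (d / 2) ≤ (Nc + r + 1) * (q:ℝ) ^ (d / 2) := by
    gcongr; linarith [Nat.cast_nonneg (α := ℝ) r]
  by_cases hJs : J.card ≤ q ^ (b - 1)
  · -- few hyperplanes: it suffices to split the points
    obtain ⟨𝒢, h1, h2, h3⟩ := exists_groups hg1 I
    refine Solves.ret (𝒢.toList.map fun G => (G, J)) (by positivity) fun Y _ => ⟨?_, ?_, ?_⟩
    · rw [List.length_map, Finset.length_toList]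
      refine le_trans ?_ hNle
      nlinarith
    · intro z hz
      obtain ⟨G, hG, rfl⟩ := List.mem_map.1 hz
      exact ⟨(h1 G (Finset.mem_toList.1 hG)).2, hJs⟩
    · constructor
      · rintro ⟨u, hu, v, hv, h⟩
        obtain ⟨G, hG, huG⟩ := h2 u hu
        exact ⟨_, List.mem_map.2 ⟨G, Finset.mem_toList.2 hG, rfl⟩, u, huG, v, hv, h⟩
      · rintro ⟨z, hz, h⟩
        obtain ⟨G, hG, rfl⟩ := List.mem_map.1 hz
        exact h.mono (h1 G (Finset.mem_toList.1 hG)).1 subset_rfl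
  push Not at hJs
  have hJsR : (q:ℝ) ^ (b - 1) ≤ J.card := by exact_mod_cast hJs.le
  have hJ2 : q ^ 2 ≤ J.card := (Nat.pow_le_pow_right (by omega) (by omega)).trans hJs.le
  have hJ9 : J.card ≤ q ^ (9 + r) := hJ.trans (Nat.pow_le_pow_right (by omega) hbr)
  set E := (q:ℝ) ^ (10 * (d + 2) ^ 2) with hE
  have hE0 : 0 ≤ E := by positivity
  have hc' : 0 ≤ ((q:ℝ) ^ a + (q:ℝ) ^ b) * E := by positivity
  have h6E : (q:ℝ) ^ (6 * (d + 2) ^ 2) ≤ E := by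
    rw [hE]
    exact pow_le_pow_right₀ (by linarith) (Nat.mul_le_mul_right _ (by norm_num))
  refine (Solves.bind hc' (solves_net hd hq34 hqs hS r hJ9 hJ2) fun B => ?_).mono subset_rfl ?_
    (fun _ _ _ h => h)
  swap
  · have h1 : (J.card : ℝ) * (q:ℝ) ^ (6 * (d + 2) ^ 2) ≤ ((q:ℝ) ^ a + (q:ℝ) ^ b) * E := by
      gcongr
      have : 0 ≤ (q:ℝ) ^ a := by positivity
      linarith
    have h2 : (r:ℝ) * (J.card * (q:ℝ) ^ (6 * (d + 2) ^ 2)) ≤ r * (((q:ℝ) ^ a + (q:ℝ) ^ b) * E) := by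
      gcongr
    nlinarith
  obtain ⟨A, lam⟩ := B
  set S' : Set (ι → Fin (d + 1) → ℝ) := {Y ∈ S | A ⊆ J ∧ q ^ 2 ≤ A.card ∧ A.card ≤ q ^ 9 ∧ 0 ≤ lam ∧
        lam * A.card ≤ 16 ^ r * J.card ∧ IsNet Y J A lam (17 ^ r / (q:ℝ) ^ 2)} with hS'
  change Solves tst S' _ _
  by_cases hne : S'.Nonempty
  swap
  · exact Solves.ret [] hc' fun Y hY => (hne ⟨Y, hY⟩).elim
  obtain ⟨Y₀, -, hAJ, hA2, hA9, hl0, hlA, -⟩ := hne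
  have hQ : (((I ∪ J).biUnion fun x => (testsOn (insert x A) : Finset (Test d ι))).card : ℝ) + 0 ≤
      ((q:ℝ) ^ a + (q:ℝ) ^ b) * E := by
    have h1 : ((I ∪ J).biUnion fun x => (testsOn (insert x A) : Finset (Test d ι))).card ≤
        (I ∪ J).card * q ^ (10 * (d + 2) ^ 2) := by
      refine Finset.card_biUnion_le_card_mul _ _ _ fun v _ => ?_
      rw [pow_mul]
      refine card_testsOn_le hd ((Finset.card_insert_le _ _).trans ?_) ?_
      · have : 1 ≤ q ^ 9 := Nat.one_le_pow _ _ (by omega)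
        calc A.card + 1 ≤ q ^ 9 + q ^ 9 := by omega
          _ = 2 * q ^ 9 := by ring
          _ ≤ q * q ^ 9 := by gcongr; omega
          _ = q ^ 10 := by ring
      · exact le_trans (by omega) (Nat.le_self_pow (by norm_num : (10:ℕ) ≠ 0) q)
    have h2 : (I ∪ J).card ≤ q ^ a + q ^ b := (Finset.card_union_le _ _).trans (add_le_add hI hJ)
    rw [add_zero, hE]
    exact_mod_cast h1.trans (Nat.mul_le_mul_right _ h2)
  refine Solves.mono (Solves.learn (c := 0) le_rfl
    ((I ∪ J).biUnion fun x => testsOn (insert x A)) fun Y hY => ?_) subset_rfl hQ (fun _ _ _ h => h)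
  have hYS := hS Y hY.1
  have hnet : IsNet Y J A lam (17 ^ r / (q:ℝ) ^ 2) := hY.2.2.2.2.2.2
  -- the density of the cutting relative to `J`
  set p : ℝ := 2 * C * r₀ * q / (q:ℝ) ^ b with hp
  have hp0 : 0 < p := by positivity
  have hpb : p * (q:ℝ) ^ b = 2 * C * r₀ * q := by rw [hp]; field_simp
  have hpb' : p * (q:ℝ) ^ (b - 1) = 2 * C * r₀ := by
    rw [hqb] at hpb
    have : p * (q:ℝ) ^ (b - 1) * q = 2 * C * r₀ * q := by linarith
    exact mul_right_cancel₀ hq0.ne' this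
  have hη : 17 ^ r / (q:ℝ) ^ 2 * J.card ≤ (q:ℝ) ^ (b - 1) / 2 := by
    have h17 : 2 * (17:ℝ) ^ r ≤ q := by exact_mod_cast hq17
    rw [div_mul_eq_mul_div, div_le_div_iff₀ (by positivity) (by norm_num)]
    calc (17:ℝ) ^ r * J.card * 2 = (2 * 17 ^ r) * J.card := by ring
      _ ≤ q * q ^ b := by gcongr
      _ = q ^ (b - 1) * q ^ 2 := by rw [hqb]; ring
  have hlamA : (q:ℝ) ^ (b - 1) / 2 ≤ lam * A.card := by
    have := hnet.card_le
    linarith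
  have hA2R : (q:ℝ) ^ 2 ≤ A.card := by exact_mod_cast hA2
  have hup : lam * p * A.card ≤ 16 ^ r * (2 * C * r₀) * q := by
    calc lam * p * A.card = p * (lam * A.card) := by ring
      _ ≤ p * (16 ^ r * J.card) := by gcongr
      _ ≤ p * (16 ^ r * q ^ b) := by gcongr
      _ = 16 ^ r * (p * q ^ b) := by ring
      _ = 16 ^ r * (2 * C * r₀) * q := by rw [hpb]; ring
  have hCr : 2 * C * r₀ = 2 * (C * r₀) := by ring
  have hlow : r₀ ≤ lam * p * A.card := by
    calc r₀ ≤ C * r₀ := le_mul_of_one_le_left (by linarith) hC1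
      _ = p * (q ^ (b - 1) / 2) := by linarith
      _ ≤ p * (lam * A.card) := by gcongr
      _ = _ := by ring
  have hlam0 : 0 < lam := by
    rcases hl0.lt_or_eq with h | h
    · exact h
    · rw [← h] at hlow; simp at hlow; linarith
  have hpA1 : lam * p ≤ 1 := by
    have h1 : lam * p * q ^ 2 ≤ q * q := by
      calc lam * p * q ^ 2 ≤ lam * p * A.card := by gcongr
        _ ≤ 16 ^ r * (2 * C * r₀) * q := hup
        _ ≤ q * q := by gcongr
    have h2 : lam * p * (q:ℝ) ^ 2 ≤ 1 * q ^ 2 := by linarith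
    exact le_of_mul_le_mul_right h2 (by positivity)
  obtain ⟨R, Q, hcutY⟩ := hcut ι Y hYS A (lam * p) (by positivity) hpA1 hlow
  have hdA : d + 1 ≤ A.card := hcutY.card.trans (Finset.card_le_card hcutY.subset)
  obtain ⟨L, hL⟩ := exists_split_of_isCut hd hYS (I := I) (g := q ^ (a - d / 2)) (n' := q ^ (b - 1))
    (N := Nc * (q:ℝ) ^ (d / 2)) (by positivity) hcutY hAJ hg1 hn1 (by nlinarith) (by
      have h1 : (lam * p * A.card) ^ (d / 2) ≤ (16 ^ r * (2 * C * r₀)) ^ (d / 2) * (q:ℝ) ^ (d / 2) := by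
        rw [← mul_pow]; gcongr
      have h2 : ((d:ℝ) + 1) * (d + 1) * I.card / ((q ^ (a - d / 2) : ℕ) : ℝ) ≤
          (d + 1) * (d + 1) * q ^ (d / 2) := by
        rw [mul_div_assoc]; gcongr
      have h3 : 4 * (d:ℝ) ^ d * (C * (lam * p * A.card) ^ (d / 2)) ≤
          4 * d ^ d * (C * ((16 ^ r * (2 * C * r₀)) ^ (d / 2) * (q:ℝ) ^ (d / 2))) := by gcongr
      calc _ ≤ ((d:ℝ) + 1) * (d + 1) * q ^ (d / 2) +
            4 * d ^ d * (C * ((16 ^ r * (2 * C * r₀)) ^ (d / 2) * (q:ℝ) ^ (d / 2))) := add_le_add h2 h3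
        _ = (Nc - 2) * q ^ (d / 2) := by rw [hNc]; ring
        _ ≤ Nc * q ^ (d / 2) := by gcongr; linarith) (by
      intro c hc
      obtain ⟨hc1, hc2⟩ := mem_cells.1 hc
      have h1 := hnet _ (Or.inr ⟨ray Y c.1, ray Y c.2, hYS.ray_ne_zero hdA hc1,
        hYS.ray_ne_zero hdA hc2, rfl⟩)
      rw [card_confSet_inter, card_confSet_inter] at h1
      have h2 := hcutY.cell_le c.1 c.2 hc2
      have h3 : lam * (confSet Y A c.1 ∩ confSet Y A c.2).card ≤ (q:ℝ) ^ (b - 1) / 2 := by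
        have h4 : p * (lam * (confSet Y A c.1 ∩ confSet Y A c.2).card) ≤ p * ((q:ℝ) ^ (b - 1) / 2) := by
          have : C ≤ C * r₀ := le_mul_of_one_le_right (by linarith) (by linarith)
          linarith
        exact le_of_mul_le_mul_left h4 hp0
      have h5 : ((confSet Y J c.1 ∩ confSet Y J c.2).card : ℝ) ≤ (q:ℝ) ^ (b - 1) := by linarith
      exact_mod_cast h5)
  refine Solves.ret L le_rfl fun Y' hY' => ?_
  obtain ⟨a1, a2, a3⟩ := hL Y' (hS Y' hY'.1.1) fun x hx t ht =>
    hY'.2 t (Finset.mem_biUnion.2 ⟨x, hx, ht⟩)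
  exact ⟨a1.trans hNle, a2, a3⟩

end Hopcroft

/-! ### Test polynomials and composition of splittings -/

namespace Hopcroft

open Matrix

set_option linter.unusedSectionVars false

variable {d : ℕ} {ι : Type}

lemma totalDegree_det_le {σ : Type*} {n m : ℕ} (M : Matrix (Fin n) (Fin n) (MvPolynomial σ ℝ))
    (hM : ∀ i j, (M i j).totalDegree ≤ m) : M.det.totalDegree ≤ n * m := by
  rw [Matrix.det_apply]
  refine MvPolynomial.totalDegree_finsetSum_le fun τ _ => ?_
  have h1 : (∏ i, M (τ i) i).totalDegree ≤ n * m := by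
    refine (MvPolynomial.totalDegree_finsetProd _ _).trans ?_
    refine (Finset.sum_le_sum fun i _ => hM (τ i) i).trans ?_
    simp
  rcases Int.units_eq_one_or (Equiv.Perm.sign τ) with h | h
  · rw [h, one_smul]; exact h1
  · rw [h, Units.neg_smul, one_smul, MvPolynomial.totalDegree_neg]; exact h1

/-- The vector denoted by a label, with coordinates polynomial in the coordinates of the family. -/
noncomputable def vecPoly : Gen d ι → Fin (d + 1) → MvPolynomial (ι × Fin (d + 1)) ℝ
  | .inl a => fun c => MvPolynomial.X (a, c)
  | .inr (.inl f) => fun c => MvPolynomial.C ((-1) ^ (c : ℕ)) *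
      Matrix.det (Matrix.of fun i j : Fin d => MvPolynomial.X (f i, c.succAbove j))
  | .inr (.inr c) => fun c' => MvPolynomial.C ((Pi.single c 1 : Fin (d + 1) → ℝ) c')

/-- The test quantity `tval` as a polynomial in the coordinates of the family. -/
noncomputable def tvalPoly : Test d ι → MvPolynomial (ι × Fin (d + 1)) ℝ
  | .inl p => ∑ c, MvPolynomial.X (p.1, c) * MvPolynomial.X (p.2, c)
  | .inr (true, g) => (Matrix.of fun i => vecPoly (g i)).det
  | .inr (false, g) => - (Matrix.of fun i => vecPoly (g i)).det

lemma eval_vecPoly (Y : ι → Fin (d + 1) → ℝ) (g : Gen d ι) (c : Fin (d + 1)) :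
    MvPolynomial.eval (fun x => Y x.1 x.2) (vecPoly g c) = vec Y g c := by
  rcases g with a | f | c'
  · simp [vecPoly, vec]
  · simp only [vecPoly, vec, ray, cross, map_mul, MvPolynomial.eval_C, RingHom.map_det]
    congr 2
    ext i j
    simp
  · simp [vecPoly, vec]

lemma eval_tvalPoly (Y : ι → Fin (d + 1) → ℝ) (t : Test d ι) :
    MvPolynomial.eval (fun x => Y x.1 x.2) (tvalPoly t) = tval Y t := by
  have h : ∀ g : Fin (d + 1) → Gen d ι, MvPolynomial.eval (fun x => Y x.1 x.2)
      (Matrix.of fun i => vecPoly (g i)).det = gdet Y g := by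
    intro g
    rw [RingHom.map_det, gdet]
    congr 1
    ext i j
    simp [eval_vecPoly]
  rcases t with p | ⟨s, g⟩
  · simp [tvalPoly, tval, dotProduct]
  · cases s
    · simp only [tvalPoly, tval, map_neg, h]
    · simp only [tvalPoly, tval, h]

lemma totalDegree_vecPoly (hd : 1 ≤ d) (g : Gen d ι) (c : Fin (d + 1)) :
    (vecPoly g c).totalDegree ≤ d := by
  rcases g with a | f | c'
  · simpa [vecPoly] using hd
  · simp only [vecPoly]
    refine (MvPolynomial.totalDegree_mul _ _).trans ?_
    rw [MvPolynomial.totalDegree_C, zero_add]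
    exact (totalDegree_det_le (m := 1) _ fun i j => by simp).trans (by simp)
  · simp only [vecPoly, MvPolynomial.totalDegree_C]; omega

lemma totalDegree_tvalPoly (hd : 1 ≤ d) (t : Test d ι) :
    (tvalPoly t).totalDegree ≤ (d + 1) * d := by
  rcases t with p | ⟨s, g⟩
  · simp only [tvalPoly]
    refine MvPolynomial.totalDegree_finsetSum_le fun c _ => ?_
    refine (MvPolynomial.totalDegree_mul _ _).trans ?_
    simp only [MvPolynomial.totalDegree_X]
    nlinarith
  · have := totalDegree_det_le (Matrix.of fun i => vecPoly (g i)) fun i j =>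
      totalDegree_vecPoly hd (g i) j
    cases s
    · simpa only [tvalPoly, MvPolynomial.totalDegree_neg] using this
    · exact this

variable [Fintype ι] [DecidableEq ι]

/-- The entropy of the answers: only `n ^ O(n)` answer vectors occur for `n` vectors. -/
lemma log_card_patterns_le (hd : 2 ≤ d) (S : Set (ι → Fin (d + 1) → ℝ)) {q s : ℕ} (hq : d + 3 ≤ q)
    (hι : Fintype.card ι ≤ q ^ (s + 1)) :
    Real.log (patterns (tst (d := d)) S).card ≤
      (Fintype.card ι * (d + 1) : ℕ) * (((s + 1) * (d + 2) ^ 2 + 2 * (d + 2) : ℕ) * q) := by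
  have hq1 : (1:ℝ) ≤ q := by exact_mod_cast (by omega : 1 ≤ q)
  have h1 := card_signs_le (tvalPoly (d := d) (ι := ι)) ((d + 1) * d)
    (fun t => totalDegree_tvalPoly (by omega) t) (patterns tst S) (by
      intro o ho
      obtain ⟨Y, -, rfl⟩ := mem_patterns.1 ho
      refine ⟨fun x => Y x.1 x.2, fun t => ?_⟩
      rw [eval_tvalPoly]; simp [tst])
  have h2 : Fintype.card (Test d ι) ≤ q ^ ((s + 1) * (d + 2) ^ 2) := by
    have h3 : (Finset.univ : Finset (Test d ι)) ⊆ testsOn Finset.univ := by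
      rintro (⟨a, b⟩ | ⟨s, g⟩) -
      · simp
      · rw [det_mem_testsOn]
        intro i
        rcases g i with a | f | c <;> simp
    rw [pow_mul]
    exact (Finset.card_le_card h3).trans (card_testsOn_le hd (by simpa using hι)
      (hq.trans (Nat.le_self_pow (by omega) q)))
  have h4 : 2 * (Fintype.card (Test d ι) * ((d + 1) * d)) + 1 ≤
      q ^ ((s + 1) * (d + 2) ^ 2 + 2 * (d + 2)) := by
    have h5 : 2 * ((d + 1) * d) + 1 ≤ q ^ (2 * (d + 2)) := by
      calc 2 * ((d + 1) * d) + 1 ≤ (d + 3) ^ 3 := by nlinarith [sq_nonneg (d : ℤ), Nat.zero_le (d^3), Nat.zero_le (d^2)]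
        _ ≤ q ^ 3 := Nat.pow_le_pow_left hq 3
        _ ≤ q ^ (2 * (d + 2)) := Nat.pow_le_pow_right (by omega) (by omega)
    have h6 : 1 ≤ q ^ ((s + 1) * (d + 2) ^ 2) := Nat.one_le_pow _ _ (by omega)
    rw [pow_add]
    calc 2 * (Fintype.card (Test d ι) * ((d + 1) * d)) + 1
        ≤ 2 * (q ^ ((s + 1) * (d + 2) ^ 2) * ((d + 1) * d)) + q ^ ((s + 1) * (d + 2) ^ 2) := by gcongr
      _ = q ^ ((s + 1) * (d + 2) ^ 2) * (2 * ((d + 1) * d) + 1) := by ring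
      _ ≤ _ := by gcongr
  have h7 : (patterns (tst (d := d)) S).card ≤
      (q ^ ((s + 1) * (d + 2) ^ 2 + 2 * (d + 2))) ^ (Fintype.card ι * (d + 1)) := by
    refine h1.trans ?_
    rw [Fintype.card_prod, Fintype.card_fin]
    exact Nat.pow_le_pow_left h4 _
  rcases Nat.eq_zero_or_pos (patterns (tst (d := d)) S).card with h0 | h0
  · rw [h0]; simp only [Nat.cast_zero, Real.log_zero]; positivity
  have h8 := Real.log_le_log (by exact_mod_cast h0) (Nat.cast_le (α := ℝ).2 h7)
  refine h8.trans ?_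
  push_cast
  rw [Real.log_pow, Real.log_pow]
  push_cast
  gcongr
  exact (Real.log_le_sub_one_of_pos (by linarith)).trans (by linarith)

lemma exists_flatten {Y : ι → Fin (d + 1) → ℝ} {N : ℝ} {m n : ℕ}
    {L : List (Finset ι × Finset ι)} {out : List (List (Finset ι × Finset ι))}
    (h : List.Forall₂ (fun z l => IsSplit z N m n Y l) L out) :
    (out.flatten.length : ℝ) ≤ L.length * N ∧ (∀ z ∈ out.flatten, z.1.card ≤ m ∧ z.2.card ≤ n) ∧
      ((∃ z ∈ L, HasPos Y z) ↔ ∃ z ∈ out.flatten, HasPos Y z) := by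
  induction h with
  | nil => simp
  | @cons z l L out h _ ih =>
    obtain ⟨h1, h2, h3⟩ := h
    obtain ⟨i1, i2, i3⟩ := ih
    refine ⟨?_, ?_, ?_⟩
    · simp only [List.flatten_cons, List.length_append, List.length_cons]
      push_cast
      linarith
    · intro z hz
      rw [List.flatten_cons, List.mem_append] at hz
      exact hz.elim (h2 z) (i2 z)
    · simp only [List.flatten_cons, List.mem_append, List.mem_cons, or_and_right, exists_or,
        exists_eq_left]
      rw [h3, i3]

lemma Solves.split_bind {S : Set (ι → Fin (d + 1) → ℝ)} {x : Finset ι × Finset ι} {c₀ c N₀ N : ℝ}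
    {m n m' n' : ℕ} (hN₀ : 0 ≤ N₀) (hN : 0 ≤ N) (hc : 0 ≤ c)
    (h : Solves tst S c₀ (fun Y L => IsSplit x N₀ m n Y L))
    (hstep : ∀ z : Finset ι × Finset ι, z.1.card ≤ m → z.2.card ≤ n →
      Solves tst S c (fun Y L => IsSplit z N m' n' Y L)) :
    Solves tst S (c₀ + N₀ * c) (fun Y L => IsSplit x (N₀ * N) m' n' Y L) := by
  refine Solves.bind (by positivity) h fun L => ?_
  by_cases hne : ({Y ∈ S | IsSplit x N₀ m n Y L} : Set _).Nonempty
  swap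
  · exact Solves.ret [] (by positivity) fun Y hY => (hne ⟨Y, hY⟩).elim
  obtain ⟨Y₀, -, hL, hsz, -⟩ := hne
  refine ((Solves.forall_list hc L fun z hz => (hstep z (hsz z hz).1 (hsz z hz).2).mono
    (S' := {Y ∈ S | IsSplit x N₀ m n Y L}) (fun Y hY => hY.1) le_rfl (fun _ _ _ h => h)).bind
    (c' := 0) le_rfl (P' := fun Y L => IsSplit x (N₀ * N) m' n' Y L)
    fun out => Solves.ret out.flatten le_rfl ?_).mono subset_rfl ?_ (fun _ _ _ h => h)
  · rintro Y ⟨⟨-, h1, h2, h3⟩, h4⟩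
    obtain ⟨i1, i2, i3⟩ := exists_flatten h4
    exact ⟨i1.trans (mul_le_mul_of_nonneg_right hL hN), i2, h3.trans i3⟩
  · rw [add_zero]; exact mul_le_mul_of_nonneg_right hL hc

lemma Solves.split_swap {S : Set (ι → Fin (d + 1) → ℝ)} {x : Finset ι × Finset ι} {c N : ℝ}
    {m n : ℕ} (h : Solves tst S c (fun Y L => IsSplit x.swap N m n Y L)) :
    Solves tst S c (fun Y L => IsSplit x N n m Y L) := by
  refine (h.bind (c' := 0) le_rfl (P' := fun Y L => IsSplit x N n m Y L)
    fun L => Solves.ret (L.map Prod.swap) le_rfl ?_).mono subset_rfl (by simp) (fun _ _ _ h => h)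
  rintro Y ⟨-, h1, h2, h3⟩
  refine ⟨by simpa using h1, ?_, ?_⟩
  · intro z hz
    obtain ⟨w, hw, rfl⟩ := List.mem_map.1 hz
    exact (h2 w hw).symm
  · rw [← hasPos_swap, h3]
    constructor
    · rintro ⟨z, hz, h⟩
      exact ⟨z.swap, List.mem_map_of_mem hz, hasPos_swap.2 h⟩
    · rintro ⟨z, hz, h⟩
      obtain ⟨w, hw, rfl⟩ := List.mem_map.1 hz
      exact ⟨w, hw, hasPos_swap.1 h⟩

end Hopcroft

/-! ### The recursion -/

namespace Hopcroft

open Matrix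

set_option linter.unusedSectionVars false

variable {d : ℕ} {ι : Type} [Fintype ι] [DecidableEq ι]

/-- The conclusion of `solves_step` for a fixed family of configurations. -/
def StepBound (S : Set (ι → Fin (d + 1) → ℝ)) (C : ℝ) (q r : ℕ) : Prop :=
  ∀ a b : ℕ, d / 2 ≤ a → 3 ≤ b → b ≤ 9 + r → ∀ x : Finset ι × Finset ι,
    x.1.card ≤ q ^ a → x.2.card ≤ q ^ b →
    Solves tst S (C * (((q:ℝ) ^ a + (q:ℝ) ^ b) * (q:ℝ) ^ (10 * (d + 2) ^ 2)))
      (fun Y L => IsSplit x (C * (q:ℝ) ^ (d / 2)) (q ^ (a - d / 2)) (q ^ (b - 1)) Y L)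

/-- One round of the recursion: a splitting step followed by a splitting step with the two sides
interchanged, after which both sides have shrunk by the same factor `q ^ (d / 2 + 1)`. -/
lemma solves_round {S : Set (ι → Fin (d + 1) → ℝ)} {C : ℝ} {q r : ℕ} (hC : 1 ≤ C) (hq : 1 ≤ q)
    (hstep : StepBound S C q r) {a : ℕ} (ha : d / 2 + 3 ≤ a) (har : a ≤ 9 + r)
    (x : Finset ι × Finset ι) (h1 : x.1.card ≤ q ^ a) (h2 : x.2.card ≤ q ^ a) :
    Solves tst S (4 * C ^ 2 * (q:ℝ) ^ (a + d / 2 + 10 * (d + 2) ^ 2))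
      (fun Y L => IsSplit x (C ^ 2 * (q:ℝ) ^ (2 * (d / 2))) (q ^ (a - (d / 2 + 1)))
        (q ^ (a - (d / 2 + 1))) Y L) := by
  have hq1 : (1:ℝ) ≤ q := by exact_mod_cast hq
  have hs := Solves.split_bind (c := C * (((q:ℝ) ^ (a - 1) + (q:ℝ) ^ (a - d / 2)) *
      (q:ℝ) ^ (10 * (d + 2) ^ 2))) (N := C * (q:ℝ) ^ (d / 2)) (m' := q ^ (a - d / 2 - 1))
    (n' := q ^ (a - 1 - d / 2)) (by positivity) (by positivity) (by positivity)
    (hstep a a (by omega) (by omega) har x h1 h2) (fun z hz1 hz2 => by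
      refine Solves.split_swap ?_
      exact hstep (a - 1) (a - d / 2) (by omega) (by omega) (by omega) z.swap hz2 hz1)
  have e1 : a - 1 - d / 2 = a - (d / 2 + 1) := by omega
  have e2 : a - d / 2 - 1 = a - (d / 2 + 1) := by omega
  have e3 : C * (q:ℝ) ^ (d / 2) * (C * (q:ℝ) ^ (d / 2)) = C ^ 2 * (q:ℝ) ^ (2 * (d / 2)) := by ring
  rw [e1, e2, e3] at hs
  refine hs.mono subset_rfl ?_ (fun _ _ _ h => h)
  have p1 : (q:ℝ) ^ (a - 1) ≤ (q:ℝ) ^ a := pow_le_pow_right₀ hq1 (by omega)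
  have p2 : (q:ℝ) ^ (a - d / 2) ≤ (q:ℝ) ^ a := pow_le_pow_right₀ hq1 (by omega)
  have p3 : (1:ℝ) ≤ (q:ℝ) ^ (d / 2) := one_le_pow₀ hq1
  generalize (q:ℝ) ^ (a - 1) = A1 at *
  generalize (q:ℝ) ^ (a - d / 2) = A2 at *
  rw [pow_add, pow_add]
  have p4 : 0 ≤ (q:ℝ) ^ a := by positivity
  have p5 : 0 ≤ (q:ℝ) ^ (10 * (d + 2) ^ 2) := by positivity
  generalize (q:ℝ) ^ a = A at *
  generalize (q:ℝ) ^ (10 * (d + 2) ^ 2) = E at *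
  generalize (q:ℝ) ^ (d / 2) = K at *
  have hC0 : 0 ≤ C := by linarith
  have hK0 : 0 ≤ K := by linarith
  calc C * ((A + A) * E) + C * K * (C * ((A1 + A2) * E))
      ≤ C * ((A + A) * E) + C * K * (C * ((A + A) * E)) := by gcongr
    _ = (C * 1) * 1 * ((A + A) * E) + C * C * K * ((A + A) * E) := by ring
    _ ≤ (C * C) * K * ((A + A) * E) + C * C * K * ((A + A) * E) := by gcongr
    _ = _ := by ring

/-- The outcome of `t` rounds, as long as the side lengths stay above `q ^ ((d / 2 + 1) * e)`. -/
lemma solves_rounds (hd : 4 ≤ d) {S : Set (ι → Fin (d + 1) → ℝ)} {C : ℝ} {q h e : ℕ} (hC : 1 ≤ C)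
    (hq : 1 ≤ q) (he : e = d / 2 + 10 * (d + 2) ^ 2) (hstep : StepBound S C q ((d / 2 + 1) * h))
    (x : Finset ι × Finset ι) (h1 : x.1.card ≤ q ^ ((d / 2 + 1) * h))
    (h2 : x.2.card ≤ q ^ ((d / 2 + 1) * h)) (t : ℕ) : ∀ s, t + s = h → e ≤ s →
    Solves tst S (t * (4 * C ^ (2 * h + 2) * (q:ℝ) ^ (2 * (d / 2) * h)))
      (fun Y L => IsSplit x (C ^ (2 * t) * (q:ℝ) ^ (2 * (d / 2) * t)) (q ^ ((d / 2 + 1) * s))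
        (q ^ ((d / 2 + 1) * s)) Y L) := by
  have hq1 : (1:ℝ) ≤ q := by exact_mod_cast hq
  have hk : 2 ≤ d / 2 := by omega
  generalize hkd : d / 2 = k at *
  induction t with
  | zero =>
    intro s hs _
    obtain rfl : s = h := by omega
    refine Solves.ret [x] (by simp) fun Y _ => ⟨by simp, ?_, by simp⟩
    intro z hz
    obtain rfl : z = x := by simpa using hz
    exact ⟨h1, h2⟩
  | succ t ih =>
    intro s hs hes
    have hih := ih (s + 1) (by omega) (by omega)
    have ha : k + 3 ≤ (k + 1) * (s + 1) := by nlinarith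
    have har : (k + 1) * (s + 1) ≤ 9 + (k + 1) * h := by
      have : s + 1 ≤ h := by omega
      nlinarith
    have hs := Solves.split_bind (c := 4 * C ^ 2 * (q:ℝ) ^ ((k + 1) * (s + 1) + k + 10 * (d + 2) ^ 2))
      (N := C ^ 2 * (q:ℝ) ^ (2 * k)) (m' := q ^ ((k + 1) * s)) (n' := q ^ ((k + 1) * s))
      (by positivity) (by positivity) (by positivity) hih (fun z hz1 hz2 => by
        have := solves_round hC hq hstep (by rw [hkd]; exact ha) har z hz1 hz2
        rw [hkd] at this
        have e1 : (k + 1) * (s + 1) - (k + 1) = (k + 1) * s := by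
          rw [Nat.mul_succ]; omega
        rw [e1] at this
        exact this)
    have e3 : C ^ (2 * t) * (q:ℝ) ^ (2 * k * t) * (C ^ 2 * (q:ℝ) ^ (2 * k)) =
      C ^ (2 * (t + 1)) * (q:ℝ) ^ (2 * k * (t + 1)) := by ring
    rw [e3] at hs
    refine hs.mono subset_rfl ?_ (fun _ _ _ h => h)
    have : C ^ (2 * t) * (q:ℝ) ^ (2 * k * t) * (4 * C ^ 2 * (q:ℝ) ^ ((k + 1) * (s + 1) + k + 10 * (d + 2) ^ 2))
        ≤ 4 * C ^ (2 * h + 2) * (q:ℝ) ^ (2 * k * h) := by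
      calc C ^ (2 * t) * (q:ℝ) ^ (2 * k * t) * (4 * C ^ 2 * (q:ℝ) ^ ((k + 1) * (s + 1) + k + 10 * (d + 2) ^ 2))
          = 4 * C ^ (2 * t + 2) * (q:ℝ) ^ (2 * k * t + ((k + 1) * (s + 1) + k + 10 * (d + 2) ^ 2)) := by
            rw [pow_add _ (2 * k * t), pow_add C]; ring
        _ ≤ _ := by
            gcongr
            · omega
            · have : h = t + 1 + s := by omega
              subst this
              nlinarith
    push_cast
    linarith

/-- Certificates for the answer of a single instance. -/
lemma exists_cert_hasPos {C : ℝ} {V : ℕ}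
    (hC : ∀ Y : ι → Fin (d + 1) → ℝ, GP Y → ∀ (I J : Finset ι) (ν : ℕ), 1 ≤ ν →
      I.card ≤ ν ^ (d / 2 + 1) → J.card ≤ ν ^ (d / 2 + 1) → (∀ v ∈ J, ∀ u ∈ I, Y v ⬝ᵥ Y u ≤ 0) →
      CertR Y (I ∪ J) (C * (ν : ℝ) ^ (2 * (d / 2))) (fun Y' => ∀ v ∈ J, ∀ u ∈ I, Y' v ⬝ᵥ Y' u ≤ 0))
    {ν : ℕ} (hν : 1 ≤ ν) (hV1 : 1 ≤ V) (hV : C * (ν : ℝ) ^ (2 * (d / 2)) ≤ V)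
    (z : Finset ι × Finset ι) (h1 : z.1.card ≤ ν ^ (d / 2 + 1)) (h2 : z.2.card ≤ ν ^ (d / 2 + 1))
    (Y : ι → Fin (d + 1) → ℝ) (hY : GP Y) :
    Cert Y (z.1 ∪ z.2) V (fun Y' => HasPos Y' z ↔ HasPos Y z) := by
  by_cases hp : HasPos Y z
  · obtain ⟨u, hu, v, hv, h⟩ := hp
    refine (Cert.pair (X := z.1 ∪ z.2) (Finset.mem_union_right _ hv)
      (Finset.mem_union_left _ hu)).mono hV1 fun Y' _ h' => ?_
    exact ⟨fun _ => ⟨u, hu, v, hv, h⟩, fun _ => ⟨u, hu, v, hv, h'.2 h⟩⟩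
  · obtain ⟨n, hn, hc⟩ := hC Y hY z.1 z.2 ν hν h1 h2 (fun v hv u hu => by
      by_contra h
      exact hp ⟨u, hu, v, hv, not_le.1 h⟩)
    refine hc.mono (by exact_mod_cast hn.trans hV) fun Y' _ h' => ?_
    refine ⟨fun ⟨u, hu, v, hv, h⟩ => absurd (h' v hv u hu) (not_le.2 h), fun h => absurd h hp⟩

/-- For families in general position with sides of size at most `q ^ ((d / 2 + 1) * h)`, where `h`
depends only on `d`, the decision problem is solved with `O(q ^ (2 * (d / 2) * h))` tests: rounds of
splitting reduce the sides to size `q ^ ((d / 2 + 1) * e)`, and all remaining instances are decided by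
amortized verification of their certificates. -/
theorem exists_solves_hasPos (d : ℕ) (hd : 4 ≤ d) : ∃ (C : ℝ) (h q₀ : ℕ), 0 ≤ C ∧ 1 ≤ h ∧
    ∀ q : ℕ, q₀ ≤ q → ∀ (ι : Type) [Fintype ι] [DecidableEq ι],
      Fintype.card ι ≤ 2 * q ^ ((d / 2 + 1) * h) → ∀ x : Finset ι × Finset ι,
      x.1.card ≤ q ^ ((d / 2 + 1) * h) → x.2.card ≤ q ^ ((d / 2 + 1) * h) →
      Solves tst {Y : ι → Fin (d + 1) → ℝ | GP Y} (C * (q:ℝ) ^ (2 * (d / 2) * h))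
        (fun Y b => b = true ↔ HasPos Y x) := by
  set k := d / 2 with hk
  have hk2 : 2 ≤ k := by omega
  obtain ⟨e, he⟩ : ∃ e, e = k + 10 * (d + 2) ^ 2 := ⟨_, rfl⟩
  obtain ⟨c₁, hc₁⟩ : ∃ c, c = ((k + 1) * e + 1) * (d + 2) ^ 2 := ⟨_, rfl⟩
  obtain ⟨h, hh⟩ : ∃ h, h = e + c₁ + 1 := ⟨_, rfl⟩
  obtain ⟨C, q₀, hC, hstep⟩ := solves_step d (by omega) ((k + 1) * h)
  obtain ⟨C', hC', hcert⟩ := exists_cert_no d (by omega)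
  obtain ⟨B, hB⟩ : ∃ B : ℕ, B = ((k + 1) * h + 1) * (d + 2) ^ 2 + 2 * (d + 2) := ⟨_, rfl⟩
  refine ⟨h * (4 * C ^ (2 * h + 2)) + (C ^ (2 * h) * (C' + 2) + 2 * (2 * (d + 1) * B)), h,
    max q₀ (d + 3), by positivity, by omega, fun q hq ι _ _ hι x hx1 hx2 => ?_⟩
  have hq0 : q₀ ≤ q := (le_max_left _ _).trans hq
  have hqd : d + 3 ≤ q := (le_max_right _ _).trans hq
  have hq1 : (1:ℝ) ≤ q := by exact_mod_cast (by omega : 1 ≤ q)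
  have hS := solves_rounds hd hC (by omega) (by rw [← hk]; exact he)
    (S := {Y : ι → Fin (d + 1) → ℝ | GP Y}) (by
      intro a b h1 h2 h3 x h4 h5
      exact hstep q hq0 ι _ (fun Y hY => hY) a b h1 h2 (by rw [← hk] at h3; exact h3) x h4 h5)
    x hx1 hx2 (h - e) e (by omega) le_rfl
  rw [← hk] at hS
  have hlog : Real.log (patterns (tst (d := d)) {Y : ι → Fin (d + 1) → ℝ | GP Y}).card ≤
      2 * (q:ℝ) ^ ((k + 1) * h) * (d + 1) * (B * q) := by
    refine (log_card_patterns_le (by omega) _ hqd (s := (k + 1) * h) ?_).trans ?_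
    · refine hι.trans ?_
      rw [pow_succ, mul_comm]
      gcongr; omega
    · rw [← hB]
      have : (Fintype.card ι : ℝ) ≤ 2 * (q:ℝ) ^ ((k + 1) * h) := by exact_mod_cast hι
      push_cast
      gcongr
  have hlog0 : 0 ≤ Real.log (patterns (tst (d := d)) {Y : ι → Fin (d + 1) → ℝ | GP Y}).card :=
    Real.log_natCast_nonneg _
  obtain ⟨V, hVd⟩ : ∃ V, V = ⌈C' * ((q ^ e : ℕ) : ℝ) ^ (2 * k)⌉₊ + 1 := ⟨_, rfl⟩
  have hV1 : C' * ((q ^ e : ℕ) : ℝ) ^ (2 * k) ≤ V := by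
    rw [hVd]; push_cast
    have := Nat.le_ceil (C' * ((q ^ e : ℕ) : ℝ) ^ (2 * k))
    push_cast at this
    linarith
  have hV2 : (V : ℝ) ≤ (C' + 2) * (q:ℝ) ^ (2 * k * e) := by
    have h1 := Nat.ceil_lt_add_one (a := C' * ((q ^ e : ℕ) : ℝ) ^ (2 * k)) (by positivity)
    have h2 : (1:ℝ) ≤ (q:ℝ) ^ (2 * k * e) := one_le_pow₀ hq1
    have h3 : ((q ^ e : ℕ) : ℝ) ^ (2 * k) = (q:ℝ) ^ (2 * k * e) := by
      push_cast; rw [← pow_mul, mul_comm e]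
    rw [hVd]; push_cast
    rw [h3] at h1
    push_cast at h3
    rw [h3]
    linarith
  refine (hS.bind (c' := (C ^ (2 * h) * (C' + 2) + 2 * (2 * (d + 1) * B)) *
    (q:ℝ) ^ (2 * k * h)) (P' := fun Y (b : Bool) => b = true ↔ HasPos Y x) (by positivity)
    fun L => ?_).mono subset_rfl ?_ (fun _ _ _ h => h)
  swap
  · have : ((h - e : ℕ) : ℝ) ≤ h := by exact_mod_cast Nat.sub_le _ _
    have := mul_le_mul_of_nonneg_right this
      (by positivity : 0 ≤ 4 * C ^ (2 * h + 2) * (q:ℝ) ^ (2 * k * h))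
    linarith
  by_cases hne : ({Y ∈ {Y : ι → Fin (d + 1) → ℝ | GP Y} | IsSplit x
    (C ^ (2 * (h - e)) * (q:ℝ) ^ (2 * k * (h - e))) (q ^ ((k + 1) * e)) (q ^ ((k + 1) * e)) Y L}).Nonempty
  swap
  · exact Solves.ret true (by positivity) fun Y hY => (hne ⟨Y, hY⟩).elim
  obtain ⟨Y₀, -, hL1, hL2, -⟩ := hne
  have ham := Solves.amortize (tst := tst) (S := {Y : ι → Fin (d + 1) → ℝ | GP Y}) V (q ^ c₁)
    (Nat.one_le_pow _ _ (by omega)) (fun z : Finset ι × Finset ι => testsOn (z.1 ∪ z.2))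
    (fun z Y => HasPos Y z) L (fun z hz => by
      obtain ⟨hz1, hz2⟩ := hL2 z hz
      rw [hc₁, pow_mul]
      refine card_testsOn_le (by omega) ((Finset.card_union_le _ _).trans ?_) ?_
      · calc z.1.card + z.2.card ≤ 2 * q ^ ((k + 1) * e) := by omega
          _ ≤ q * q ^ ((k + 1) * e) := by gcongr; omega
          _ = _ := by ring
      · exact hqd.trans (Nat.le_self_pow (by omega) q))
    (fun z hz Y hY => by
      obtain ⟨hz1, hz2⟩ := hL2 z hz
      have := exists_cert_hasPos (V := V) (hcert ι) (ν := q ^ e) (Nat.one_le_pow _ _ (by omega))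
        (by omega) hV1 z (by rw [← pow_mul, mul_comm e]; exact hz1)
        (by rw [← pow_mul, mul_comm e]; exact hz2) Y hY
      obtain ⟨Q, q1, q2, q3⟩ := this
      exact ⟨Q, q1, q2, fun Y' hY' h => q3 Y' hY' h⟩)
  refine ham.mono (fun Y hY => hY.1) ?_ (fun Y hY b hb => ?_)
  swap
  · rw [hb]; exact hY.2.2.2.symm
  have f1 : (L.length : ℝ) * V ≤ C ^ (2 * h) * (C' + 2) * (q:ℝ) ^ (2 * k * h) := by
    calc (L.length : ℝ) * V ≤ (C ^ (2 * (h - e)) * (q:ℝ) ^ (2 * k * (h - e))) *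
          ((C' + 2) * (q:ℝ) ^ (2 * k * e)) := by gcongr
      _ = C ^ (2 * (h - e)) * (C' + 2) * (q:ℝ) ^ (2 * k * h) := by
          have : 2 * k * h = 2 * k * (h - e) + 2 * k * e := by
            rw [← mul_add]; congr 1; omega
          rw [this, pow_add]; ring
      _ ≤ _ := by
          gcongr
          omega
  have f2 : 2 * ((q ^ c₁ : ℕ) : ℝ) * Real.log
      (patterns (tst (d := d)) {Y : ι → Fin (d + 1) → ℝ | GP Y}).card ≤
      2 * (2 * (d + 1) * B) * (q:ℝ) ^ (2 * k * h) := by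
    calc _ ≤ 2 * ((q ^ c₁ : ℕ) : ℝ) * (2 * (q:ℝ) ^ ((k + 1) * h) * (d + 1) * (B * q)) := by gcongr
      _ = 2 * (2 * (d + 1) * B) * (q:ℝ) ^ (c₁ + (k + 1) * h + 1) := by
          push_cast; ring
      _ ≤ _ := by
          gcongr
          nlinarith
  linarith

end Hopcroft

/-! ### Symbolic perturbation -/

namespace Hopcroft

open Matrix

set_option linter.unusedSectionVars false

open Filter Topology

section Chain

variable {N : ℕ} {β : Type}

/-- The ternary tree that branches on the sign of the first nonzero value among the coefficients of
`P` of index less than `m`: it continues with `l` if that value is positive, and with `r` if it is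
negative or if all these values vanish. -/
noncomputable def chain (l r : ADT N β) : ℕ → Polynomial (MvPolynomial (Fin N) ℝ) → ADT N β
  | 0, _ => r
  | m + 1, P => .node (P.coeff 0) r (chain l r m P.divX) l

lemma depth_chain {l r : ADT N β} {c : ℕ} (hl : l.depth ≤ c) (hr : r.depth ≤ c) (m : ℕ)
    (P : Polynomial (MvPolynomial (Fin N) ℝ)) : (chain l r m P).depth ≤ m + c := by
  induction m generalizing P with
  | zero => simpa [chain] using hr
  | succ m ih =>
    have := ih P.divX
    simp only [chain, ADT.depth]
    omega

lemma degLE_chain {l r : ADT N β} {D : ℕ} (hl : l.DegLE D) (hr : r.DegLE D) (m : ℕ)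
    (P : Polynomial (MvPolynomial (Fin N) ℝ)) (hP : ∀ i, (P.coeff i).totalDegree ≤ D) :
    (chain l r m P).DegLE D := by
  induction m generalizing P with
  | zero => simpa [chain] using hr
  | succ m ih =>
    refine ⟨hP 0, hr, ih P.divX fun i => ?_, hl⟩
    rw [Polynomial.coeff_divX]
    exact hP _

/-- The sign of a polynomial at a small positive `ε` is the sign of its first nonzero coefficient. -/
lemma eval_chain (l r : ADT N β) (x : Fin N → ℝ) (m : ℕ) (P : Polynomial (MvPolynomial (Fin N) ℝ))
    (hP : ∀ i, m ≤ i → P.coeff i = 0) :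
    ∀ᶠ ε in 𝓝[>] (0:ℝ), (chain l r m P).eval x =
      if 0 < (P.map (MvPolynomial.eval x)).eval ε then l.eval x else r.eval x := by
  induction m generalizing P with
  | zero =>
    have : P = 0 := Polynomial.ext fun i => by simpa using hP i (Nat.zero_le _)
    subst this
    simp [chain]
  | succ m ih =>
    have ih' := ih P.divX (fun i hi => by rw [Polynomial.coeff_divX]; exact hP _ (by omega))
    have hev : ∀ ε, (P.map (MvPolynomial.eval x)).eval ε =
        (P.divX.map (MvPolynomial.eval x)).eval ε * ε + MvPolynomial.eval x (P.coeff 0) := by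
      intro ε
      conv_lhs => rw [← Polynomial.divX_mul_X_add P]
      simp
    have hcont : Tendsto (fun ε => (P.map (MvPolynomial.eval x)).eval ε) (𝓝[>] 0)
        (𝓝 (MvPolynomial.eval x (P.coeff 0))) := by
      have h1 := (P.map (MvPolynomial.eval x)).continuous.tendsto 0
      rw [hev 0, mul_zero, zero_add] at h1
      exact h1.mono_left nhdsWithin_le_nhds
    rcases lt_trichotomy (MvPolynomial.eval x (P.coeff 0)) 0 with h | h | h
    · filter_upwards [hcont.eventually_lt_const h] with ε hε
      rw [if_neg (not_lt.2 hε.le)]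
      simp [chain, ADT.eval, h]
    · filter_upwards [ih', self_mem_nhdsWithin] with ε hε hpos
      have hpos : 0 < ε := hpos
      rw [hev, h, add_zero]
      simp only [chain, ADT.eval, h, lt_irrefl, if_false, if_true, hε, mul_pos_iff_of_pos_right hpos]
    · filter_upwards [hcont.eventually_const_lt h] with ε hε
      rw [if_pos hε]
      simp [chain, ADT.eval, h.not_gt, h.ne']

variable {T : Type*}

/-- Replacement of every test of a binary tree by the branching on the coefficients of a
polynomial in `ε` that represents it. -/
noncomputable def toADT (m : ℕ) (P : T → Polynomial (MvPolynomial (Fin N) ℝ)) : DT T β → ADT N β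
  | .leaf b => .leaf b
  | .node t l r => chain (toADT m P l) (toADT m P r) m (P t)

lemma depth_toADT (m : ℕ) (P : T → Polynomial (MvPolynomial (Fin N) ℝ)) (t : DT T β) :
    (toADT m P t).depth ≤ m * t.depth := by
  induction t with
  | leaf b => simp [toADT, ADT.depth]
  | node t l r hl hr =>
    simp only [toADT, DT.depth]
    refine (depth_chain (c := m * max l.depth r.depth) ?_ ?_ m _).trans (by rw [mul_add, mul_one])
    · exact hl.trans (Nat.mul_le_mul_left _ (le_max_left _ _))
    · exact hr.trans (Nat.mul_le_mul_left _ (le_max_right _ _))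

lemma degLE_toADT (m : ℕ) (P : T → Polynomial (MvPolynomial (Fin N) ℝ)) {D : ℕ}
    (hP : ∀ t i, ((P t).coeff i).totalDegree ≤ D) (t : DT T β) : (toADT m P t).DegLE D := by
  induction t with
  | leaf b => simp [toADT, ADT.DegLE]
  | node t l r hl hr => exact degLE_chain hl hr m _ (hP t)

lemma eval_toADT (m : ℕ) (P : T → Polynomial (MvPolynomial (Fin N) ℝ))
    (hP : ∀ t i, m ≤ i → (P t).coeff i = 0) (x : Fin N → ℝ) (o : ℝ → T → Bool)
    (ho : ∀ ε t, o ε t = true ↔ 0 < ((P t).map (MvPolynomial.eval x)).eval ε) (t : DT T β) :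
    ∀ᶠ ε in 𝓝[>] (0:ℝ), (toADT m P t).eval x = t.eval (o ε) := by
  induction t with
  | leaf b => simp [toADT, ADT.eval, DT.eval]
  | node t l r hl hr =>
    filter_upwards [hl, hr, eval_chain (toADT m P l) (toADT m P r) x m (P t) (hP t)] with ε h1 h2 h3
    rw [toADT, h3, h1, h2]
    by_cases h : 0 < ((P t).map (MvPolynomial.eval x)).eval ε
    · simp [DT.eval, h, (ho ε t).2 h]
    · have : o ε t = false := by
        rw [← Bool.not_eq_true, ho]; exact h
      simp [DT.eval, h, this]

end Chain

section Bounded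

variable {σ : Type*}

/-- A polynomial in `ε` of degree at most `2 * a` whose coefficients have degree at most `a`. -/
def Bdd (a : ℕ) (P : Polynomial (MvPolynomial σ ℝ)) : Prop :=
  (∀ i, 2 * a < i → P.coeff i = 0) ∧ ∀ i, (P.coeff i).totalDegree ≤ a

lemma Bdd.mono {a b : ℕ} {P : Polynomial (MvPolynomial σ ℝ)} (h : Bdd a P) (hab : a ≤ b) : Bdd b P :=
  ⟨fun i hi => h.1 i (by omega), fun i => (h.2 i).trans hab⟩

lemma Bdd.mul {a b : ℕ} {P Q : Polynomial (MvPolynomial σ ℝ)} (h : Bdd a P) (h' : Bdd b Q) :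
    Bdd (a + b) (P * Q) := by
  refine ⟨fun i hi => ?_, fun i => ?_⟩
  · rw [Polynomial.coeff_mul]
    refine Finset.sum_eq_zero fun x hx => ?_
    have hx : x.1 + x.2 = i := by simpa using hx
    by_cases h1 : 2 * a < x.1
    · rw [h.1 _ h1, zero_mul]
    · rw [h'.1 _ (by omega), mul_zero]
  · rw [Polynomial.coeff_mul]
    refine MvPolynomial.totalDegree_finsetSum_le fun x _ => ?_
    exact (MvPolynomial.totalDegree_mul _ _).trans (add_le_add (h.2 _) (h'.2 _))

lemma Bdd.sum {τ : Type*} {a : ℕ} (s : Finset τ) {P : τ → Polynomial (MvPolynomial σ ℝ)}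
    (h : ∀ t ∈ s, Bdd a (P t)) : Bdd a (∑ t ∈ s, P t) := by
  refine ⟨fun i hi => ?_, fun i => ?_⟩
  · rw [Polynomial.finsetSum_coeff]
    exact Finset.sum_eq_zero fun t ht => (h t ht).1 i hi
  · rw [Polynomial.finsetSum_coeff]
    exact MvPolynomial.totalDegree_finsetSum_le fun t ht => (h t ht).2 i

lemma Bdd.const (c : ℝ) : Bdd 0 (Polynomial.C (MvPolynomial.C c) : Polynomial (MvPolynomial σ ℝ)) := by
  refine ⟨fun i hi => Polynomial.coeff_C_of_ne_zero (by omega), fun i => ?_⟩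
  rw [Polynomial.coeff_C]
  split_ifs <;> simp

lemma Bdd.prod {τ : Type*} (s : Finset τ) {P : τ → Polynomial (MvPolynomial σ ℝ)} {a : τ → ℕ}
    (h : ∀ t ∈ s, Bdd (a t) (P t)) : Bdd (∑ t ∈ s, a t) (∏ t ∈ s, P t) := by
  classical
  induction s using Finset.induction_on with
  | empty => simpa using Bdd.const (σ := σ) 1
  | insert t s ht ih =>
    rw [Finset.sum_insert ht, Finset.prod_insert ht]
    exact (h t (Finset.mem_insert_self _ _)).mul (ih fun t' ht' => h t' (Finset.mem_insert_of_mem ht'))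

lemma Bdd.pow {a : ℕ} {P : Polynomial (MvPolynomial σ ℝ)} (h : Bdd a P) (n : ℕ) :
    Bdd (n * a) (P ^ n) := by
  have := Bdd.prod (Finset.range n) (P := fun _ => P) (a := fun _ => a) fun _ _ => h
  simpa using this

/-- Substitution of polynomials in `ε` for the variables. -/
noncomputable def subst {τ : Type*} (E : τ → Polynomial (MvPolynomial σ ℝ)) (p : MvPolynomial τ ℝ) :
    Polynomial (MvPolynomial σ ℝ) :=
  MvPolynomial.eval₂ (Polynomial.C.comp MvPolynomial.C) E p

lemma bdd_subst {τ : Type*} {E : τ → Polynomial (MvPolynomial σ ℝ)} (hE : ∀ t, Bdd 1 (E t))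
    (p : MvPolynomial τ ℝ) : Bdd p.totalDegree (subst E p) := by
  rw [subst, MvPolynomial.eval₂_eq]
  refine Bdd.sum _ fun s hs => ?_
  have h1 := (Bdd.const (σ := σ) (p.coeff s)).mul
    (Bdd.prod s.support (P := fun i => E i ^ s i) (a := fun i => s i * 1) fun t _ => (hE t).pow _)
  refine h1.mono ?_
  have := MvPolynomial.le_totalDegree hs
  simpa [Finsupp.sum] using this

lemma eval_subst {τ : Type*} (E : τ → Polynomial (MvPolynomial σ ℝ)) (p : MvPolynomial τ ℝ)
    (x : σ → ℝ) (ε : ℝ) : ((subst E p).map (MvPolynomial.eval x)).eval ε =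
      MvPolynomial.eval (fun t => ((E t).map (MvPolynomial.eval x)).eval ε) p := by
  have : ∀ P : Polynomial (MvPolynomial σ ℝ), (P.map (MvPolynomial.eval x)).eval ε =
      ((Polynomial.evalRingHom ε).comp (Polynomial.mapRingHom (MvPolynomial.eval x))) P := fun P => by
    simp
  rw [this, subst, MvPolynomial.hom_eval₂]
  simp only [← this]
  change _ = MvPolynomial.eval₂ (RingHom.id ℝ) _ p
  congr 1
  ext c; simp

end Bounded

section Perturb

variable {d : ℕ} {ι : Type} [Finite ι]

/-- Adding `ε ^ 2` times points of the moment curve brings every family into general position, for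
all small positive `ε`; a further perturbation of order `ε` does not interfere. -/
lemma eventually_gp (A B : ι → Fin (d + 1) → ℝ) (ξ : ι → ℝ) (hξ : Function.Injective ξ) :
    ∀ᶠ ε in 𝓝[>] (0:ℝ), GP (fun a c => A a c + ε * B a c + ε ^ 2 * ξ a ^ (c : ℕ)) := by
  unfold GP
  rw [eventually_all]
  intro g
  by_cases hg : Function.Injective g
  swap
  · exact Eventually.of_forall fun _ h => (hg h).elim
  set M : Matrix (Fin (d + 1)) (Fin (d + 1)) (Polynomial ℝ) := Matrix.of fun i c =>
    Polynomial.C (A (g i) c) + Polynomial.X * Polynomial.C (B (g i) c) +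
      Polynomial.X ^ 2 * Polynomial.C (ξ (g i) ^ (c : ℕ)) with hM
  have hev : ∀ ε, M.det.eval ε =
      (Matrix.of fun i c => A (g i) c + ε * B (g i) c + ε ^ 2 * ξ (g i) ^ (c : ℕ)).det := by
    intro ε
    rw [← Polynomial.coe_evalRingHom, RingHom.map_det]
    congr 1
    ext i c
    simp [hM]
    ring
  have hne : M.det ≠ 0 := by
    intro h0
    -- multiplying the rows by `δ ^ 2`, with `δ = 1 / ε`, and letting `δ` tend to `0`
    have h1 : ∀ δ : ℝ, 0 < δ → (Matrix.of fun i c =>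
        δ ^ 2 * A (g i) c + δ * B (g i) c + ξ (g i) ^ (c : ℕ)).det = 0 := by
      intro δ hδ
      have h2 := hev δ⁻¹
      rw [h0, Polynomial.eval_zero] at h2
      have h3 := Matrix.det_smul (Matrix.of fun i c => A (g i) c + δ⁻¹ * B (g i) c +
        δ⁻¹ ^ 2 * ξ (g i) ^ (c : ℕ)) (δ ^ 2)
      rw [← h2, mul_zero] at h3
      rw [← h3]
      congr 1
      ext i c
      simp only [Matrix.of_apply, Matrix.smul_apply, smul_eq_mul]
      field_simp
    have h4 : Continuous fun δ : ℝ => (Matrix.of fun i c =>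
        δ ^ 2 * A (g i) c + δ * B (g i) c + ξ (g i) ^ (c : ℕ)).det := by
      refine Continuous.matrix_det ?_
      refine continuous_matrix fun i j => ?_
      simp only [Matrix.of_apply]
      fun_prop
    have h5 := (h4.tendsto 0).mono_left (nhdsWithin_le_nhds (s := Set.Ioi 0))
    have h6 := tendsto_nhds_unique h5 (tendsto_const_nhds.congr' (by
      filter_upwards [self_mem_nhdsWithin] with δ hδ using (h1 δ hδ).symm))
    have h7 : (Matrix.vandermonde fun i => ξ (g i)).det ≠ 0 :=
      Matrix.det_vandermonde_ne_zero_iff.2 (hξ.comp hg)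
    apply h7
    rw [← h6]
    congr 1
    ext i c
    simp [Matrix.vandermonde]
  have hfin := (Polynomial.finite_setOfPred_isRoot hne).subset (Set.sep_subset _ (fun ε => ε ≠ 0))
  have hn : {ε | ε ∈ {x | M.det.IsRoot x} ∧ ε ≠ 0}ᶜ ∈ 𝓝 (0:ℝ) :=
    hfin.isClosed.isOpen_compl.mem_nhds (by simp)
  filter_upwards [mem_nhdsWithin_of_mem_nhds hn, self_mem_nhdsWithin] with ε h1 h2 _ h3
  refine h1 ⟨?_, (ne_of_gt h2)⟩
  rw [Polynomial.IsRoot.def, hev]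
  exact h3

end Perturb

end Hopcroft

/-! ### The perturbed input -/

namespace Hopcroft

open Matrix

set_option linter.unusedSectionVars false

open Filter Topology

section Input

variable {d n : ℕ}

/-- The homogenized input: the point `p` gives the vector `(p, -1)` and the hyperplane with
coefficients `(a, b)` gives the vector `(a, b)`, so that `a ⬝ p > b` becomes positivity of the inner
product. -/
noncomputable def baseVec (d n : ℕ) :
    Fin n ⊕ Fin n → Fin (d + 1) → MvPolynomial (Fin (d * n + (d + 1) * n)) ℝ
  | .inl i => Fin.snoc (fun j => MvPolynomial.X (ptIdx d n i j)) (MvPolynomial.C (-1))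
  | .inr i => Fin.snoc (fun j => MvPolynomial.X (coefIdx d n i j)) (MvPolynomial.X (offIdx d n i))

/-- The first order perturbation: it increases the offset of every hyperplane, so that incident
pairs become nonpositive in a robust way. -/
def shiftVec (d n : ℕ) : Fin n ⊕ Fin n → Fin (d + 1) → ℝ
  | .inl _ => 0
  | .inr _ => Pi.single (Fin.last d) 1

/-- Distinct parameters on the moment curve. -/
def param (n : ℕ) (a : Fin n ⊕ Fin n) : ℝ := ((finSumFinEquiv a : Fin (n + n)) : ℕ)

lemma param_injective (n : ℕ) : Function.Injective (param n) := by
  intro a b h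
  have : ((finSumFinEquiv a : Fin (n + n)) : ℕ) = (finSumFinEquiv b : Fin (n + n)) := by
    unfold param at h
    exact_mod_cast h
  exact finSumFinEquiv.injective (Fin.ext this)

/-- The perturbed input, as a polynomial in `ε` over the polynomials in the input. -/
noncomputable def entryPoly (d n : ℕ) (a : (Fin n ⊕ Fin n) × Fin (d + 1)) :
    Polynomial (MvPolynomial (Fin (d * n + (d + 1) * n)) ℝ) :=
  Polynomial.C (baseVec d n a.1 a.2) +
    Polynomial.C (MvPolynomial.C (shiftVec d n a.1 a.2)) * Polynomial.X +
    Polynomial.C (MvPolynomial.C (param n a.1 ^ (a.2 : ℕ))) * Polynomial.X ^ 2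

/-- The perturbed input at `x`, for a real value of `ε`. -/
noncomputable def pert (d n : ℕ) (x : Fin (d * n + (d + 1) * n) → ℝ) (ε : ℝ) :
    Fin n ⊕ Fin n → Fin (d + 1) → ℝ := fun a c =>
  MvPolynomial.eval x (baseVec d n a c) + ε * shiftVec d n a c + ε ^ 2 * param n a ^ (c : ℕ)

lemma totalDegree_baseVec (a : Fin n ⊕ Fin n) (c : Fin (d + 1)) :
    (baseVec d n a c).totalDegree ≤ 1 := by
  rcases a with i | i <;> induction c using Fin.lastCases <;> simp [baseVec]

lemma bdd_entryPoly (a : (Fin n ⊕ Fin n) × Fin (d + 1)) : Bdd 1 (entryPoly d n a) := by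
  refine ⟨fun i hi => ?_, fun i => ?_⟩
  · obtain ⟨j, rfl⟩ : ∃ j, i = j + 3 := ⟨i - 3, by omega⟩
    generalize hr : param n a.1 ^ (a.2 : ℕ) = r
    simp [entryPoly, hr]
  · have h := totalDegree_baseVec a.1 a.2
    simp only [entryPoly, Polynomial.coeff_add, Polynomial.coeff_C_mul]
    refine (MvPolynomial.totalDegree_add _ _).trans (max_le ((MvPolynomial.totalDegree_add _ _).trans
      (max_le ?_ ?_)) ?_)
    · rw [Polynomial.coeff_C]
      split_ifs
      · exact h
      · simp
    · rw [Polynomial.coeff_X]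
      split_ifs <;> simp
    · rw [Polynomial.coeff_X_pow]
      generalize param n a.1 ^ (a.2 : ℕ) = r
      split_ifs <;> simp

lemma eval_entryPoly (x : Fin (d * n + (d + 1) * n) → ℝ) (ε : ℝ) (a : (Fin n ⊕ Fin n) × Fin (d + 1)) :
    ((entryPoly d n a).map (MvPolynomial.eval x)).eval ε = pert d n x ε a.1 a.2 := by
  simp only [entryPoly, pert, Polynomial.map_add, Polynomial.map_mul, Polynomial.map_C,
    Polynomial.map_X, Polynomial.map_pow, Polynomial.eval_add, Polynomial.eval_mul,
    Polynomial.eval_C, Polynomial.eval_X, Polynomial.eval_pow, MvPolynomial.eval_C]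
  ring

/-- A test as a polynomial in `ε` over the polynomials in the input. -/
noncomputable def testPoly (d n : ℕ) (t : Test d (Fin n ⊕ Fin n)) :
    Polynomial (MvPolynomial (Fin (d * n + (d + 1) * n)) ℝ) := subst (entryPoly d n) (tvalPoly t)

lemma bdd_testPoly (hd : 1 ≤ d) (t : Test d (Fin n ⊕ Fin n)) : Bdd ((d + 1) * d) (testPoly d n t) :=
  (bdd_subst bdd_entryPoly _).mono (totalDegree_tvalPoly hd t)

lemma eval_testPoly (x : Fin (d * n + (d + 1) * n) → ℝ) (ε : ℝ) (t : Test d (Fin n ⊕ Fin n)) :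
    ((testPoly d n t).map (MvPolynomial.eval x)).eval ε = tval (pert d n x ε) t := by
  rw [testPoly, eval_subst, ← eval_tvalPoly]
  simp only [eval_entryPoly]

/-- The two sides of the input. -/
def sides (n : ℕ) : Finset (Fin n ⊕ Fin n) × Finset (Fin n ⊕ Fin n) :=
  (Finset.univ.map Function.Embedding.inl, Finset.univ.map Function.Embedding.inr)

/-- A sufficiently small perturbation does not change the answer. -/
lemma eventually_hasPos (x : Fin (d * n + (d + 1) * n) → ℝ) :
    ∀ᶠ ε in 𝓝[>] (0:ℝ), (HasPos (pert d n x ε) (sides n) ↔ ∃ i j : Fin n,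
      x (offIdx d n j) < ∑ t : Fin d, x (coefIdx d n j t) * x (ptIdx d n i t)) := by
  have key : ∀ i j : Fin n, ∀ᶠ ε in 𝓝[>] (0:ℝ),
      (0 < pert d n x ε (.inr j) ⬝ᵥ pert d n x ε (.inl i) ↔
        x (offIdx d n j) < ∑ t : Fin d, x (coefIdx d n j t) * x (ptIdx d n i t)) := by
    intro i j
    -- the inner product is `g ε = g₀ - ε + ε ^ 2 * f ε` with `f` continuous
    obtain ⟨f, hf, hfe⟩ : ∃ f : ℝ → ℝ, Continuous f ∧ ∀ ε,
        pert d n x ε (.inr j) ⬝ᵥ pert d n x ε (.inl i) =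
          (∑ t : Fin d, x (coefIdx d n j t) * x (ptIdx d n i t) - x (offIdx d n j)) +
            ε * (-1 + ε * f ε) := by
      refine ⟨fun ε => ∑ t : Fin d, (x (coefIdx d n j t) * param n (.inl i) ^ (t : ℕ) +
        x (ptIdx d n i t) * param n (.inr j) ^ (t : ℕ) +
        ε ^ 2 * (param n (.inl i) ^ (t : ℕ) * param n (.inr j) ^ (t : ℕ))) +
        (x (offIdx d n j) * param n (.inl i) ^ d - param n (.inr j) ^ d + ε * param n (.inl i) ^ d +
          ε ^ 2 * (param n (.inl i) ^ d * param n (.inr j) ^ d)), by fun_prop, fun ε => ?_⟩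
      rw [dotProduct, Fin.sum_univ_castSucc]
      simp only [pert, baseVec, shiftVec, Fin.snoc_castSucc, Fin.snoc_last, MvPolynomial.eval_X,
        MvPolynomial.eval_C, Pi.single_eq_same, Pi.zero_apply, Fin.val_castSucc, Fin.val_last,
        Pi.single_eq_of_ne (Fin.castSucc_lt_last _).ne, mul_zero, add_zero, mul_one]
      have : ∀ t : Fin d, (x (coefIdx d n j t) + ε ^ 2 * param n (.inr j) ^ (t : ℕ)) *
          (x (ptIdx d n i t) + ε ^ 2 * param n (.inl i) ^ (t : ℕ)) =
          x (coefIdx d n j t) * x (ptIdx d n i t) + ε ^ 2 *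
          (x (coefIdx d n j t) * param n (.inl i) ^ (t : ℕ) +
        x (ptIdx d n i t) * param n (.inr j) ^ (t : ℕ) +
        ε ^ 2 * (param n (.inl i) ^ (t : ℕ) * param n (.inr j) ^ (t : ℕ))) := fun t => by ring
      rw [Finset.sum_congr rfl fun t _ => this t, Finset.sum_add_distrib, ← Finset.mul_sum]
      ring
    simp only [hfe]
    rcases lt_or_ge (x (offIdx d n j)) (∑ t : Fin d, x (coefIdx d n j t) * x (ptIdx d n i t)) with h | h
    · have hc : Continuous fun ε : ℝ =>
          (∑ t : Fin d, x (coefIdx d n j t) * x (ptIdx d n i t) - x (offIdx d n j)) +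
            ε * (-1 + ε * f ε) := by fun_prop
      have h1 := (hc.tendsto 0).mono_left (nhdsWithin_le_nhds (s := Set.Ioi 0))
      simp only [zero_mul, add_zero] at h1
      filter_upwards [h1.eventually_const_lt (sub_pos.2 h)] with ε hε
      exact ⟨fun _ => h, fun _ => hε⟩
    · have hc : Continuous fun ε : ℝ => -1 + ε * f ε := by fun_prop
      have h1 := (hc.tendsto 0).mono_left (nhdsWithin_le_nhds (s := Set.Ioi 0))
      simp only [zero_mul, add_zero] at h1
      filter_upwards [h1.eventually_lt_const (by norm_num : (-1:ℝ) < 0), self_mem_nhdsWithin]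
        with ε hε hpos
      have := mul_neg_of_pos_of_neg (show 0 < ε from hpos) hε
      constructor
      · intro h2; linarith
      · intro h2; linarith
  have hall : ∀ᶠ ε in 𝓝[>] (0:ℝ), ∀ i j : Fin n,
      (0 < pert d n x ε (.inr j) ⬝ᵥ pert d n x ε (.inl i) ↔
        x (offIdx d n j) < ∑ t : Fin d, x (coefIdx d n j t) * x (ptIdx d n i t)) := by
    rw [eventually_all]; intro i; rw [eventually_all]; exact key i
  filter_upwards [hall] with ε hε
  simp [HasPos, sides, hε]

end Input

/-- The size parameter `q` of the recursion: an integer with `q ^ K ≥ n` of order `n ^ (1 / K)`. -/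
lemma exists_size (q₀ K : ℕ) (hK : 1 ≤ K) (n : ℕ) (hn : 1 ≤ n) : ∃ q : ℕ, q₀ ≤ q ∧ n ≤ q ^ K ∧
    (q : ℝ) ≤ (q₀ + 2) * (n : ℝ) ^ ((K : ℝ)⁻¹) := by
  have hn1 : (1:ℝ) ≤ n := by exact_mod_cast hn
  have h1 : (1:ℝ) ≤ (n : ℝ) ^ ((K : ℝ)⁻¹) := Real.one_le_rpow hn1 (by positivity)
  refine ⟨max q₀ ⌈(n : ℝ) ^ ((K : ℝ)⁻¹)⌉₊, le_max_left _ _, ?_, ?_⟩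
  · have h2 : ((n : ℝ) ^ ((K : ℝ)⁻¹)) ^ K = n := Real.rpow_inv_natCast_pow (by positivity) (by omega)
    have h3 : (n : ℝ) ≤ ((max q₀ ⌈(n : ℝ) ^ ((K : ℝ)⁻¹)⌉₊ : ℕ) : ℝ) ^ K := by
      conv_lhs => rw [← h2]
      refine pow_le_pow_left₀ (by positivity) ?_ _
      exact (Nat.le_ceil _).trans (by exact_mod_cast le_max_right _ _)
    exact_mod_cast h3
  · have h4 := Nat.ceil_lt_add_one (a := (n : ℝ) ^ ((K : ℝ)⁻¹)) (by positivity)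
    have h5 : (q₀ : ℝ) ≤ q₀ * (n : ℝ) ^ ((K : ℝ)⁻¹) := le_mul_of_one_le_right (by positivity) h1
    rw [Nat.cast_max]
    refine max_le ?_ ?_
    · nlinarith
    · nlinarith

end Hopcroft

/-- **Decision-tree complexity of the shallow (detection) variant of Hopcroft's
problem:** an algebraic decision tree of constant degree and depth
`O(n^{2⌊d/2⌋/(⌊d/2⌋+1)})` deciding the existence of a point-above-hyperplane pair. -/
theorem hopcroft_detection_decision_tree (d : ℕ) (hd : 4 ≤ d) :
    ∃ (C : ℝ) (D : ℕ), ∀ n : ℕ, 1 ≤ n →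
      ∃ T : ADT (d * n + (d + 1) * n) Bool,
        T.DegLE D ∧
        (T.depth : ℝ) ≤
          C * (n : ℝ) ^ (((2 * (d / 2) : ℕ) : ℝ) / (((d / 2 : ℕ) : ℝ) + 1)) ∧
        ∀ x : Fin (d * n + (d + 1) * n) → ℝ,
          (∀ j : Fin n, (fun t : Fin d => x (coefIdx d n j t)) ≠ 0) →
          (T.eval x = true ↔ ∃ i j : Fin n,
            x (offIdx d n j) < ∑ t : Fin d, x (coefIdx d n j t) * x (ptIdx d n i t)) := by
  classical
  obtain ⟨C, h, q₀, hC, hh, hmain⟩ := Hopcroft.exists_solves_hasPos d hd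
  set k := d / 2 with hk
  -- `ε`-polynomials of tests have degree at most `2 * ((d + 1) * d)`, hence `m` coefficients
  obtain ⟨m, hm⟩ : ∃ m, m = 2 * ((d + 1) * d) + 1 := ⟨_, rfl⟩
  refine ⟨m * (C * (q₀ + 2) ^ (2 * k * h)), (d + 1) * d, fun n hn => ?_⟩
  obtain ⟨q, hq0, hq1, hq2⟩ := Hopcroft.exists_size q₀ ((k + 1) * h) (Nat.mul_pos (by omega) hh) n hn
  obtain ⟨t, ht1, ht2⟩ := hmain q hq0 (Fin n ⊕ Fin n) (by simp; omega) (Hopcroft.sides n)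
    (by simpa [Hopcroft.sides] using hq1) (by simpa [Hopcroft.sides] using hq1)
  refine ⟨Hopcroft.toADT m (Hopcroft.testPoly d n) t,
    Hopcroft.degLE_toADT _ _ (fun t i => (Hopcroft.bdd_testPoly (by omega) t).2 i) _, ?_, ?_⟩
  · have h1 : ((Hopcroft.toADT m (Hopcroft.testPoly d n) t).depth : ℝ) ≤ m * t.depth := by
      exact_mod_cast Hopcroft.depth_toADT m (Hopcroft.testPoly d n) t
    have hn0 : (0:ℝ) ≤ n := by positivity
    have h2 : (q:ℝ) ^ (2 * k * h) ≤ (q₀ + 2) ^ (2 * k * h) *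
        (n : ℝ) ^ (((2 * k : ℕ) : ℝ) / ((k : ℝ) + 1)) := by
      refine (pow_le_pow_left₀ (by positivity) hq2 _).trans (le_of_eq ?_)
      rw [mul_pow, ← Real.rpow_natCast ((n : ℝ) ^ _), ← Real.rpow_mul hn0]
      congr 2
      have : (h : ℝ) ≠ 0 := by exact_mod_cast (by omega : h ≠ 0)
      have : (k : ℝ) + 1 ≠ 0 := by positivity
      push_cast
      field_simp
    calc _ ≤ (m:ℝ) * t.depth := h1
      _ ≤ m * (C * (q:ℝ) ^ (2 * k * h)) := by gcongr
      _ ≤ m * (C * ((q₀ + 2) ^ (2 * k * h) * (n : ℝ) ^ (((2 * k : ℕ) : ℝ) / ((k : ℝ) + 1)))) := by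
          gcongr
      _ = _ := by ring
  · intro x _
    have e1 := Hopcroft.eval_toADT m (Hopcroft.testPoly d n)
      (fun t i hi => (Hopcroft.bdd_testPoly (by omega) t).1 i (by omega)) x
      (fun ε => Hopcroft.tst (Hopcroft.pert d n x ε)) (fun ε t => by
        rw [Hopcroft.eval_testPoly]; simp [Hopcroft.tst]) t
    have e2 := Hopcroft.eventually_gp (fun a c => MvPolynomial.eval x (Hopcroft.baseVec d n a c))
      (Hopcroft.shiftVec d n) (Hopcroft.param n) (Hopcroft.param_injective n)
    have e3 := Hopcroft.eventually_hasPos (d := d) x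
    obtain ⟨ε, h1, h2, h3⟩ := (e1.and (e2.and e3)).exists
    rw [h1, ← h3]
    exact ht2 _ h2
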